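/- arXiv:0906.2302 — 2 statements merged into one kernel-verified Lean document; each statement's English description precedes it below -/
import Mathlib

section
/- Let k ∈ ℕ, 0 < r < 2k, U ⊂ ℝ bounded and measurable, g locally square integrable on ℝ, and φ ∈ C^k(ℝ). If ∫_{−1}^{1} ∫_U |τ_h^k g(t)|² / |h|^{1+r} dt dh < ∞, then ∫_{−1}^{1} ∫_U |τ_h^k (φ·g)(t)|² / |h|^{1+r} dt dh < ∞. -/
open MeasureTheory Set
open scoped ENNReal

/-- The difference operator `τ_h g (t) = g (t + h) - g t`. -/
noncomputable def tau (h : ℝ) (g : ℝ → ℂ) : ℝ → ℂ := fun t => g (t + h) - g t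

/-- The iterated difference operator `τ_h^k`, with `τ_h^0 g = g`. -/
noncomputable def tauIter (h : ℝ) : ℕ → (ℝ → ℂ) → (ℝ → ℂ)
  | 0 => id
  | k + 1 => fun g => tau h (tauIter h k g)


section Aux

open scoped FourierTransform SchwartzMap ContDiff

lemma planch (f : ℝ → ℂ) (h1 : Integrable f) (h2 : MemLp f 2) :
    ∫⁻ ξ, ‖𝓕 f ξ‖ₑ ^ 2 = ∫⁻ x, ‖f x‖ₑ ^ 2 := by
  set F : Lp ℂ 2 (volume : Measure ℝ) := h2.toLp f with hF
  set FF : Lp ℂ 2 (volume : Measure ℝ) := 𝓕 F with hFF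
  have key : ∀ᵐ x, 𝓕 f x = FF x := by
    apply ae_eq_of_integral_contDiff_smul_eq
    · have : Continuous (𝓕 f) := VectorFourier.fourierIntegral_continuous Real.continuous_fourierChar
        (by exact continuous_inner) h1
      exact this.locallyIntegrable
    · exact (Lp.memLp FF).locallyIntegrable (by norm_num)
    · intro g hg hgc
      have hg1 : HasCompactSupport (fun x => (g x : ℂ)) := hgc.comp_left (g := fun x : ℝ => (x : ℂ)) (by simp)
      have hg2 : ContDiff ℝ ∞ (fun x => (g x : ℂ)) := Complex.ofRealCLM.contDiff.comp hg
      set G : 𝓢(ℝ, ℂ) := hg1.toSchwartzMap hg2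
      have e1 := congrArg (fun T : 𝓢'(ℝ, ℂ) => T G) (Lp.fourier_toTemperedDistribution_eq F)
      simp only [TemperedDistribution.fourier_apply, Lp.toTemperedDistribution_apply] at e1
      have e2 : ∫ ξ, 𝓕 G ξ • F ξ = ∫ ξ, 𝓕 G ξ • f ξ := by
        apply integral_congr_ae
        filter_upwards [h2.coeFn_toLp] with x hx
        rw [hx]
      have e3 : ∫ ξ, 𝓕 (G : ℝ → ℂ) ξ • f ξ = ∫ x, G x • 𝓕 f x := by
        simpa using! VectorFourier.integral_fourierIntegral_smul_eq_flip (L := innerₗ ℝ)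
          Real.continuous_fourierChar continuous_inner G.integrable h1
      have e4 : ∀ x, G x = (g x : ℂ) := fun x => rfl
      rw [e2] at e1
      have e5 := e3.symm.trans e1
      simpa [e4] using e5
  have n1 : eLpNorm FF 2 volume = eLpNorm f 2 volume := by
    have := Lp.norm_fourier_eq F
    rw [Lp.norm_def, Lp.norm_def, ENNReal.toReal_eq_toReal_iff' (Lp.eLpNorm_ne_top _) (Lp.eLpNorm_ne_top _)] at this
    rw [this]
    exact eLpNorm_congr_ae h2.coeFn_toLp
  rw [← eLpNorm_congr_ae key] at n1
  have n2 : ∀ q : ℝ → ℂ, ∫⁻ x, ‖q x‖ₑ ^ 2 = eLpNorm q 2 volume ^ 2 := by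
    intro q
    rw [eLpNorm_eq_lintegral_rpow_enorm_toReal (by norm_num) (by norm_num)]
    simp only [ENNReal.toReal_ofNat, ENNReal.rpow_ofNat]
    rw [← ENNReal.rpow_natCast, ← ENNReal.rpow_mul]
    simp
  rw [n2, n2, n1]

lemma lint_exp (G : ℝ → ℝ≥0∞) : ∫⁻ x in Ioi (0:ℝ), G x =
    ∫⁻ u : ℝ, ENNReal.ofReal (Real.exp (-u)) * G (Real.exp (-u)) := by
  have himg : (fun u : ℝ => Real.exp (-u)) '' univ = Ioi 0 := by
    rw [image_univ]
    ext x
    constructor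
    · rintro ⟨u, rfl⟩; exact Real.exp_pos _
    · intro hx; exact ⟨-Real.log x, by simp [Real.exp_log hx]⟩
  rw [← himg, lintegral_image_eq_lintegral_abs_deriv_mul (f' := fun u => -Real.exp (-u)) MeasurableSet.univ]
  · simp [abs_of_pos (Real.exp_pos _)]
  · intro x _
    have := ((hasDerivAt_id x).neg.exp).hasDerivWithinAt (s := univ)
    simpa using this
  · intro x _ y _ h
    simpa using h

lemma lint_scale (G : ℝ → ℝ≥0∞) (c : ℝ) (hc : c ≠ 0) :
    ∫⁻ x, G (c * x) = ENNReal.ofReal |c⁻¹| * ∫⁻ x, G x := by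
  have h1 : ∫⁻ x, G (c * x) = ∫⁻ y, G y ∂(Measure.map (c * ·) volume) :=
    (lintegral_map_equiv G (MeasurableEquiv.mulLeft₀ c hc)).symm
  rw [h1, Real.map_volume_mul_left hc, lintegral_smul_measure, smul_eq_mul]

lemma mellin_planch (f : ℝ → ℂ) (hf : Measurable f) (a b : ℝ) (ha : 0 < a)
    (hsupp : ∀ x, x ∉ Icc a b → f x = 0) (h2 : ∫⁻ x, ‖f x‖ₑ ^ 2 < ⊤) (σ : ℝ) :
    ∫⁻ τ : ℝ, ‖mellin f (σ + τ * Complex.I)‖ₑ ^ 2 =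
      ENNReal.ofReal (2 * Real.pi) * ∫⁻ h in Ioi (0:ℝ), ‖f h‖ₑ ^ 2 * ENNReal.ofReal (h ^ (2 * σ - 1)) := by
  set q : ℝ → ℂ := fun u => Real.exp (-σ * u) • f (Real.exp (-u)) with hq
  have hqm : Measurable q := by
    have h1 : Measurable (fun u : ℝ => f (Real.exp (-u))) := hf.comp (by fun_prop)
    have h2 : Measurable (fun u : ℝ => Real.exp (-σ * u)) := by fun_prop
    exact h2.smul h1
  have hqn : ∀ u, ‖q u‖ₑ ^ 2 = ENNReal.ofReal (Real.exp (-u)) *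
      (‖f (Real.exp (-u))‖ₑ ^ 2 * ENNReal.ofReal ((Real.exp (-u)) ^ (2 * σ - 1))) := by
    intro u
    rw [hq]
    simp only [enorm_smul, mul_pow]
    rw [mul_comm, mul_left_comm, ← ENNReal.ofReal_mul (Real.exp_pos _).le]
    congr 1
    rw [Real.enorm_eq_ofReal (Real.exp_pos _).le, ← ENNReal.ofReal_pow (Real.exp_pos _).le]
    congr 1
    rw [← Real.exp_nat_mul, ← Real.exp_mul, ← Real.exp_add]
    congr 1
    push_cast
    ring
  have hIntg : ∫⁻ u, ‖q u‖ₑ ^ 2 = ∫⁻ h in Ioi (0:ℝ), ‖f h‖ₑ ^ 2 * ENNReal.ofReal (h ^ (2 * σ - 1)) := by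
    rw [lint_exp]
    exact lintegral_congr hqn
  have hfin : ∫⁻ u, ‖q u‖ₑ ^ 2 < ⊤ := by
    rw [hIntg]
    obtain ⟨C, hC⟩ : ∃ C : ℝ, ∀ x ∈ Icc a b, x ^ (2 * σ - 1) ≤ C := by
      have : ContinuousOn (fun x : ℝ => x ^ (2 * σ - 1)) (Icc a b) := by
        apply ContinuousOn.rpow_const continuousOn_id
        intro x hx
        left
        exact (lt_of_lt_of_le ha hx.1).ne'
      obtain ⟨C, hC⟩ := isCompact_Icc.bddAbove_image this
      exact ⟨C, fun x hx => hC ⟨x, hx, rfl⟩⟩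
    calc _ ≤ ∫⁻ h in Ioi (0:ℝ), ‖f h‖ₑ ^ 2 * ENNReal.ofReal C := by
          apply lintegral_mono
          intro h
          by_cases hh : h ∈ Icc a b
          · dsimp only
            gcongr
            exact hC h hh
          · simp [hsupp h hh]
      _ ≤ ∫⁻ h, ‖f h‖ₑ ^ 2 * ENNReal.ofReal C := setLIntegral_le_lintegral _ _
      _ = (∫⁻ h, ‖f h‖ₑ ^ 2) * ENNReal.ofReal C := lintegral_mul_const _ (by fun_prop)
      _ < ⊤ := ENNReal.mul_lt_top h2 ENNReal.ofReal_lt_top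
  have hM : MemLp q 2 := by
    refine ⟨hqm.aestronglyMeasurable, ?_⟩
    rw [eLpNorm_lt_top_iff_lintegral_rpow_enorm_lt_top (by norm_num) (by norm_num)]
    simpa using hfin
  have hI : Integrable q := by
    have hs : Function.support q ⊆ Icc (-Real.log b) (-Real.log a) := by
      intro u hu
      by_contra hcon
      apply hu
      have : Real.exp (-u) ∉ Icc a b := by
        intro h
        apply hcon
        have h1 := (Real.log_le_iff_le_exp ha).2 h.1
        have h2 := (Real.le_log_iff_exp_le (ha.trans_le (h.1.trans h.2))).2 h.2
        constructor <;> linarith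
      simp [hq, hsupp _ this]
    rw [← integrableOn_iff_integrable_of_support_subset hs]
    have := (hM.restrict (Icc (-Real.log b) (-Real.log a))).mono_exponent (p := 1) (by norm_num)
    exact memLp_one_iff_integrable.1 this
  have hmf : ∀ τ : ℝ, mellin f (σ + τ * Complex.I) = 𝓕 q (τ / (2 * Real.pi)) := by
    intro τ
    rw [mellin_eq_fourier]
    simp [hq]
  simp_rw [hmf]
  rw [← hIntg, ← planch q hI hM]
  have hpi : (0:ℝ) < 2 * Real.pi := by positivity
  have hmp := lint_scale (fun x => ‖𝓕 q x‖ₑ ^ 2) (2 * Real.pi)⁻¹ (by positivity)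
  rw [inv_inv, abs_of_pos hpi] at hmp
  rw [← hmp]
  apply lintegral_congr
  intro τ
  rw [div_eq_inv_mul]

lemma radii (k : ℕ) (hk : 0 < k) (c : ℕ → ℂ) (hc : c 1 ≠ 0) (x0 ρ : ℝ) (hρ : 0 < ρ) :
    ∃ m : ℝ, 0 < m ∧ ∃ S : Finset ℝ, (∀ r ∈ S, 0 < r ∧ r < ρ) ∧ ∀ τ : ℝ, ∃ r ∈ S, ∀ ζ : ℂ, ‖ζ‖ = r →
      m ≤ ‖∑ l ∈ Finset.Icc 1 k, c l * (l : ℂ) ^ (-((x0 : ℂ) + τ * Complex.I + ζ))‖ := by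
  classical
  set P : (ℕ → ℂ) → ℂ → ℂ := fun θ ζ =>
    ∑ l ∈ Finset.Icc 1 k, c l * (θ l * (l : ℂ) ^ (-((x0 : ℂ) + ζ))) with hP
  have hPc : Continuous (fun p : (ℕ → ℂ) × ℂ => P p.1 p.2) := by
    apply continuous_finsetSum
    intro l hl
    have hl0 : (l : ℂ) ≠ 0 := by
      have := (Finset.mem_Icc.1 hl).1
      exact_mod_cast (by omega : l ≠ 0)
    have : Continuous (fun p : (ℕ → ℂ) × ℂ => (l : ℂ) ^ (-((x0 : ℂ) + p.2))) :=
      Continuous.const_cpow (by fun_prop) (Or.inl hl0)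
    fun_prop
  have hPd : ∀ θ, Differentiable ℂ (P θ) := by
    intro θ
    apply Differentiable.fun_sum
    intro l hl
    have hl0 : (l : ℂ) ≠ 0 := by
      have := (Finset.mem_Icc.1 hl).1
      exact_mod_cast (by omega : l ≠ 0)
    have : Differentiable ℂ (fun ζ : ℂ => (l : ℂ) ^ (-((x0 : ℂ) + ζ))) :=
      Differentiable.const_cpow (by fun_prop) (Or.inl hl0)
    fun_prop
  set T : Set (ℕ → ℂ) := Set.pi univ (fun _ => Metric.sphere (0:ℂ) 1) with hT
  have hTc : IsCompact T := isCompact_univ_pi (fun _ => isCompact_sphere _ _)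
  have hlim : ∀ θ, Filter.Tendsto (fun x : ℝ => P θ x) Filter.atTop (nhds (c 1 * θ 1)) := by
    intro θ
    have : c 1 * θ 1 = ∑ l ∈ Finset.Icc 1 k, if l = 1 then c 1 * θ 1 else 0 := by
      rw [Finset.sum_ite_eq' ]
      simp [hk, Nat.one_le_iff_ne_zero.2 hk.ne']
    rw [this]
    apply tendsto_finsetSum
    intro l hl
    by_cases h1 : l = 1
    · subst h1
      simp
    · simp only [h1, if_false]
      have hl1 : (1:ℝ) < l := by
        have := (Finset.mem_Icc.1 hl).1
        exact_mod_cast (by omega : 1 < l)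
      have : Filter.Tendsto (fun x : ℝ => (l : ℂ) ^ (-((x0 : ℂ) + x))) Filter.atTop (nhds 0) := by
        rw [tendsto_zero_iff_norm_tendsto_zero]
        have e : ∀ x : ℝ, ‖(l : ℂ) ^ (-((x0 : ℂ) + x))‖ = (l:ℝ) ^ (-(x0 + x)) := by
          intro x
          have := Complex.norm_cpow_eq_rpow_re_of_pos (x := (l:ℝ)) (by linarith) (-((x0 : ℂ) + x))
          simpa using this
        simp_rw [e]
        apply (tendsto_rpow_atBot_of_base_gt_one (l:ℝ) hl1).comp
        exact Filter.tendsto_neg_atTop_atBot.comp (Filter.tendsto_atTop_add_const_left _ x0 Filter.tendsto_id)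
      simpa using (this.const_mul (θ l)).const_mul (c l)
  have key : ∃ m : ℝ, 0 < m ∧ ∃ S : Finset ℝ, (∀ r ∈ S, 0 < r ∧ r < ρ) ∧ ∀ θ ∈ T, ∃ r ∈ S,
      ∀ ζ ∈ Metric.sphere (0:ℂ) r, m ≤ ‖P θ ζ‖ := by
    refine hTc.induction_on (p := fun T' => ∃ m : ℝ, 0 < m ∧ ∃ S : Finset ℝ, (∀ r ∈ S, 0 < r ∧ r < ρ) ∧
      ∀ θ ∈ T', ∃ r ∈ S, ∀ ζ ∈ Metric.sphere (0:ℂ) r, m ≤ ‖P θ ζ‖) ?_ ?_ ?_ ?_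
    · exact ⟨1, one_pos, ∅, by simp, by simp⟩
    · rintro s t hst ⟨m, hm, S, hS, h⟩
      exact ⟨m, hm, S, hS, fun θ hθ => h θ (hst hθ)⟩
    · rintro s t ⟨m, hm, S, hS, h⟩ ⟨m', hm', S', hS', h'⟩
      refine ⟨min m m', lt_min hm hm', S ∪ S', ?_, ?_⟩
      · intro r hr
        rcases Finset.mem_union.1 hr with hr | hr
        · exact hS r hr
        · exact hS' r hr
      · rintro θ (hθ | hθ)
        · obtain ⟨r, hr, hh⟩ := h θ hθ
          exact ⟨r, Finset.mem_union_left _ hr, fun ζ hζ => (min_le_left _ _).trans (hh ζ hζ)⟩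
        · obtain ⟨r, hr, hh⟩ := h' θ hθ
          exact ⟨r, Finset.mem_union_right _ hr, fun ζ hζ => (min_le_right _ _).trans (hh ζ hζ)⟩
    · intro θ hθ
      have hne : ∃ r, 0 < r ∧ r < ρ ∧ ∀ ζ ∈ Metric.sphere (0:ℂ) r, P θ ζ ≠ 0 := by
        rcases ((hPd θ).analyticAt 0).eventually_eq_zero_or_eventually_ne_zero with h | h
        · exfalso
          have hall : P θ = 0 := by
            have := AnalyticOnNhd.eq_of_eventuallyEq (f := P θ) (g := 0) (z₀ := 0)
              (fun z _ => (hPd θ).analyticAt z) (fun z _ => analyticAt_const) h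
            exact this
          have h1 := hlim θ
          rw [hall] at h1
          have h2 : c 1 * θ 1 = 0 := (tendsto_nhds_unique h1 (by simpa using tendsto_const_nhds))
          have h3 : θ 1 ≠ 0 := by
            have := hθ 1 (mem_univ _)
            rw [mem_sphere_zero_iff_norm] at this
            intro h0
            simp [h0] at this
          exact (mul_ne_zero hc h3) h2
        · rw [eventually_nhdsWithin_iff, Metric.eventually_nhds_iff] at h
          obtain ⟨ε, hε, h⟩ := h
          refine ⟨min ε ρ / 2, by positivity, ?_, ?_⟩
          · have := min_le_right ε ρ
            linarith
          · intro ζ hζ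
            rw [mem_sphere_zero_iff_norm] at hζ
            have h0 : 0 < min ε ρ := lt_min hε hρ
            apply h
            · rw [dist_zero_right, hζ]
              have := min_le_left ε ρ
              linarith
            · intro h1
              have : ζ = 0 := h1
              rw [this, norm_zero] at hζ
              linarith
      obtain ⟨r, hr0, hrρ, hr⟩ := hne
      have hcs : IsCompact (Metric.sphere (0:ℂ) r) := isCompact_sphere _ _
      obtain ⟨z0, hz0, hmin⟩ := hcs.exists_isMinOn (NormedSpace.sphere_nonempty.2 hr0.le)
        (f := fun ζ => ‖P θ ζ‖) ((hPd θ).continuous.norm.continuousOn)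
      set m := ‖P θ z0‖ with hm
      have hm0 : 0 < m := norm_pos_iff.2 (hr z0 hz0)
      have hev : ∀ᶠ θ' in nhds θ, ∀ ζ ∈ Metric.sphere (0:ℂ) r, m / 2 < ‖P θ' ζ‖ := by
        apply hcs.eventually_forall_of_forall_eventually
        intro ζ hζ
        apply (hPc.norm.continuousAt (x := (θ, ζ))).eventually_const_lt
        have : m ≤ ‖P θ ζ‖ := hmin hζ
        simp only
        linarith
      refine ⟨_, mem_nhdsWithin_of_mem_nhds hev, m / 2, by positivity, {r}, ?_, ?_⟩
      · simp [hr0, hrρ]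
      · intro θ' hθ'
        exact ⟨r, by simp, fun ζ hζ => (hθ' ζ hζ).le⟩
  obtain ⟨m, hm, S, hS, h⟩ := key
  refine ⟨m, hm, S, hS, fun τ => ?_⟩
  obtain ⟨r, hr, hh⟩ := h (fun l => if l = 0 then 1 else (l : ℂ) ^ (-(τ * Complex.I))) (by
    intro l _
    rw [mem_sphere_zero_iff_norm]
    by_cases hl : l = 0
    · simp [hl]
    · simp only [hl, if_false]
      have := Complex.norm_cpow_eq_rpow_re_of_pos (x := (l:ℝ)) (by positivity) (-(τ * Complex.I))
      simpa using this)
  refine ⟨r, hr, fun ζ hζ => ?_⟩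
  refine (hh ζ (by simpa using hζ)).trans_eq ?_
  congr 1
  apply Finset.sum_congr rfl
  intro l hl
  have hl0 : l ≠ 0 := by
    have := (Finset.mem_Icc.1 hl).1
    omega
  have hl0' : (l : ℂ) ≠ 0 := by exact_mod_cast hl0
  simp only [hl0, if_false]
  rw [← Complex.cpow_add _ _ hl0']
  congr 2
  ring

lemma enorm_sum_sq {ι : Type*} (s : Finset ι) (f : ι → ℂ) :
    ‖∑ i ∈ s, f i‖ₑ ^ 2 ≤ (s.card : ℝ≥0∞) * ∑ i ∈ s, ‖f i‖ₑ ^ 2 := by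
  have h1 : ‖∑ i ∈ s, f i‖ ^ 2 ≤ (s.card : ℝ) * ∑ i ∈ s, ‖f i‖ ^ 2 := by
    refine le_trans ?_ sq_sum_le_card_mul_sum_sq
    have := norm_sum_le s f
    gcongr
  have h2 : ∀ z : ℂ, ‖z‖ₑ ^ 2 = ENNReal.ofReal (‖z‖ ^ 2) := by
    intro z
    rw [ENNReal.ofReal_pow (norm_nonneg _), ofReal_norm]
  simp_rw [h2]
  rw [← ENNReal.ofReal_sum_of_nonneg (fun i _ => by positivity), ← ENNReal.ofReal_natCast,
    ← ENNReal.ofReal_mul (by positivity)]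
  exact ENNReal.ofReal_le_ofReal h1

lemma compsupp_integrable (f : ℝ → ℂ) (hf : Measurable f) (a b : ℝ)
    (hsupp : ∀ x, x ∉ Icc a b → f x = 0) (h2 : ∫⁻ x, ‖f x‖ₑ ^ 2 < ⊤) : Integrable f := by
  have hM : MemLp f 2 := by
    refine ⟨hf.aestronglyMeasurable, ?_⟩
    rw [eLpNorm_lt_top_iff_lintegral_rpow_enorm_lt_top (by norm_num) (by norm_num)]
    simpa using h2
  have hs : Function.support f ⊆ Icc a b := by
    intro u hu
    by_contra hcon
    exact hu (hsupp u hcon)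
  rw [← integrableOn_iff_integrable_of_support_subset hs]
  have := (hM.restrict (Icc a b)).mono_exponent (p := 1) (by norm_num)
  exact memLp_one_iff_integrable.1 this

lemma mellin_compsupp (f : ℝ → ℂ) (hf : Measurable f) (a b : ℝ) (ha : 0 < a)
    (hsupp : ∀ x, x ∉ Icc a b → f x = 0) (h2 : ∫⁻ x, ‖f x‖ₑ ^ 2 < ⊤) :
    Differentiable ℂ (mellin f) ∧ ∀ z, MellinConvergent f z := by
  have hI := (compsupp_integrable f hf a b hsupp h2).locallyIntegrable.locallyIntegrableOn (Ioi 0)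
  have htop : f =ᶠ[Filter.atTop] 0 := by
    filter_upwards [Filter.eventually_gt_atTop b] with x hx
    exact hsupp x (fun h => absurd h.2 (not_le.2 hx))
  have hbot : f =ᶠ[nhdsWithin 0 (Ioi 0)] 0 := by
    apply Filter.Eventually.filter_mono nhdsWithin_le_nhds
    filter_upwards [eventually_lt_nhds ha] with x hx
    exact hsupp x (fun h => absurd h.1 (not_le.2 hx))
  constructor
  · intro s
    exact mellin_differentiableAt_of_isBigO_rpow (a := s.re + 1) (b := s.re - 1) hI
      (htop.trans_isBigO (Asymptotics.isBigO_zero _ _)) (by linarith)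
      (hbot.trans_isBigO (Asymptotics.isBigO_zero _ _)) (by linarith)
  · intro s
    exact mellinConvergent_of_isBigO_rpow (a := s.re + 1) (b := s.re - 1) hI
      (htop.trans_isBigO (Asymptotics.isBigO_zero _ _)) (by linarith)
      (hbot.trans_isBigO (Asymptotics.isBigO_zero _ _)) (by linarith)

lemma mean_sq (W : ℂ → ℂ) (hW : Differentiable ℂ W) (z : ℂ) (r : ℝ) :
    ‖W z‖ₑ ^ 2 ≤ ENNReal.ofReal ((2 * Real.pi)⁻¹) *
      ∫⁻ θ in Ioc 0 (2 * Real.pi), ‖W (circleMap z r θ)‖ₑ ^ 2 := by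
  have h := DiffContOnCl.circleAverage (f := fun z => W z ^ 2) (c := z) (R := r)
    (hW.pow 2).diffContOnCl
  have hpi : (0:ℝ) ≤ 2 * Real.pi := by positivity
  rw [← enorm_pow, ← h, Real.circleAverage_def, intervalIntegral.integral_of_le hpi, enorm_smul,
    Real.enorm_eq_ofReal (by positivity)]
  gcongr
  refine (enorm_integral_le_lintegral_enorm _).trans_eq ?_
  simp

lemma lemA (k : ℕ) (hk : 0 < k) (c : ℕ → ℂ) (hc : c 1 ≠ 0) (β s : ℝ) (hβs : β < s) :
    ∃ C : ℝ≥0∞, C < ⊤ ∧ ∀ w : ℝ → ℂ, Measurable w → ∀ ε : ℝ, 0 < ε → (∀ x, x ∉ Icc ε 1 → w x = 0) →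
      ∫⁻ x, ‖w x‖ₑ ^ 2 < ⊤ →
      ∫⁻ h in Ioi (0:ℝ), ‖w h‖ₑ ^ 2 * ENNReal.ofReal (h ^ (-1 - β)) ≤
      C * ∫⁻ h in Ioi (0:ℝ), ‖∑ l ∈ Finset.Icc 1 k, c l * w (l * h)‖ₑ ^ 2 *
        ENNReal.ofReal (h ^ (-1 - s)) := by
  set x0 : ℝ := -β / 2 with hx0
  set ρ : ℝ := (s - β) / 2 with hρ
  obtain ⟨m, hm, S, hS, hrad⟩ := radii k hk c hc x0 ρ (by rw [hρ]; linarith)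
  have hpi : (0:ℝ) < 2 * Real.pi := by positivity
  set C1 : ℝ≥0∞ := ENNReal.ofReal ((2 * Real.pi)⁻¹) * ENNReal.ofReal (m⁻¹) ^ 2 with hC1
  refine ⟨C1 * (S.card * ENNReal.ofReal (2 * Real.pi)), ?_, ?_⟩
  · exact ENNReal.mul_lt_top (ENNReal.mul_lt_top ENNReal.ofReal_lt_top
      (ENNReal.pow_lt_top ENNReal.ofReal_lt_top))
      (ENNReal.mul_lt_top (ENNReal.natCast_lt_top _) ENNReal.ofReal_lt_top)
  intro w hw ε hε hsupp h2
  set v : ℝ → ℂ := fun h => ∑ l ∈ Finset.Icc 1 k, c l * w (l * h) with hv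
  have hk' : (0:ℝ) < k := by exact_mod_cast hk
  have hvm : Measurable v := by
    apply Finset.measurable_fun_sum
    intro l _
    exact (hw.comp (by fun_prop)).const_mul _
  have hvsupp : ∀ x, x ∉ Icc (ε / k) 1 → v x = 0 := by
    intro x hx
    apply Finset.sum_eq_zero
    intro l hl
    rw [hsupp, mul_zero]
    intro hlx
    apply hx
    have hl' := Finset.mem_Icc.1 hl
    have hl1 : (1:ℝ) ≤ l := by exact_mod_cast hl'.1
    have hl2 : (l:ℝ) ≤ k := by exact_mod_cast hl'.2
    have hx0 : 0 < x := by
      by_contra hneg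
      push Not at hneg
      have : (l:ℝ) * x ≤ 0 := mul_nonpos_of_nonneg_of_nonpos (by linarith) hneg
      linarith [hlx.1]
    constructor
    · rw [div_le_iff₀ hk']
      nlinarith [hlx.1]
    · nlinarith [hlx.2]
  have hv2 : ∫⁻ x, ‖v x‖ₑ ^ 2 < ⊤ := by
    calc _ ≤ ∫⁻ x, ((Finset.Icc 1 k).card : ℝ≥0∞) * ∑ l ∈ Finset.Icc 1 k, ‖c l * w (l * x)‖ₑ ^ 2 :=
          lintegral_mono fun x => enorm_sum_sq _ _
      _ = ((Finset.Icc 1 k).card : ℝ≥0∞) * ∑ l ∈ Finset.Icc 1 k, ∫⁻ x, ‖c l * w (l * x)‖ₑ ^ 2 := by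
          rw [lintegral_const_mul', lintegral_finsetSum]
          · intro l _
            exact ((hw.comp (by fun_prop)).const_mul _).enorm.pow_const _
          · exact ENNReal.natCast_ne_top _
      _ < ⊤ := by
          apply ENNReal.mul_lt_top (ENNReal.natCast_lt_top _)
          rw [ENNReal.sum_lt_top]
          intro l hl
          have hl0 : (l:ℝ) ≠ 0 := by
            have := (Finset.mem_Icc.1 hl).1
            exact_mod_cast (by omega : l ≠ 0)
          simp_rw [enorm_mul, mul_pow]
          rw [lintegral_const_mul' _ _ (ENNReal.pow_ne_top enorm_ne_top),
            lint_scale (fun x => ‖w x‖ₑ ^ 2) _ hl0]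
          exact ENNReal.mul_lt_top (ENNReal.pow_lt_top enorm_lt_top)
            (ENNReal.mul_lt_top ENNReal.ofReal_lt_top h2)
  obtain ⟨hWd, hWc⟩ := mellin_compsupp w hw ε 1 hε hsupp h2
  obtain ⟨hVd, hVc⟩ := mellin_compsupp v hvm (ε / k) 1 (by positivity) hvsupp hv2
  have hVW : ∀ z, mellin v z = (∑ l ∈ Finset.Icc 1 k, c l * (l : ℂ) ^ (-z)) * mellin w z := by
    intro z
    have h1 : mellin v z = ∑ l ∈ Finset.Icc 1 k, c l * mellin (fun h => w (l * h)) z := by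
      simp only [mellin, hv, Finset.smul_sum]
      rw [integral_finsetSum]
      · apply Finset.sum_congr rfl
        intro l _
        rw [← integral_const_mul]
        congr 1
        ext x
        simp only [smul_eq_mul]
        ring
      · intro l hl
        have hl0 : (0:ℝ) < l := by
          have := (Finset.mem_Icc.1 hl).1
          exact_mod_cast (by omega : 0 < l)
        exact ((MellinConvergent.comp_mul_left hl0).2 (hWc z)).const_smul (c l)
    rw [h1, Finset.sum_mul]
    apply Finset.sum_congr rfl
    intro l hl
    have hl0 : (0:ℝ) < l := by
      have := (Finset.mem_Icc.1 hl).1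
      exact_mod_cast (by omega : 0 < l)
    rw [mellin_comp_mul_left w z hl0]
    simp [mul_assoc]
  have hpw : ∀ τ : ℝ, ‖mellin w (x0 + τ * Complex.I)‖ₑ ^ 2 ≤ C1 * ∑ r ∈ S,
      ∫⁻ θ in Ioc 0 (2 * Real.pi), ‖mellin v (circleMap (x0 + τ * Complex.I) r θ)‖ₑ ^ 2 := by
    intro τ
    obtain ⟨r, hr, hmr⟩ := hrad τ
    calc _ ≤ ENNReal.ofReal ((2 * Real.pi)⁻¹) *
        ∫⁻ θ in Ioc 0 (2 * Real.pi), ‖mellin w (circleMap (x0 + τ * Complex.I) r θ)‖ₑ ^ 2 :=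
          mean_sq _ hWd _ _
      _ ≤ ENNReal.ofReal ((2 * Real.pi)⁻¹) *
        ∫⁻ θ in Ioc 0 (2 * Real.pi), ENNReal.ofReal (m⁻¹) ^ 2 *
          ‖mellin v (circleMap (x0 + τ * Complex.I) r θ)‖ₑ ^ 2 := by
          gcongr with θ
          rw [← mul_pow]
          gcongr
          rw [hVW, enorm_mul, ← mul_assoc]
          have h1 := hmr (circleMap 0 r θ) (by simp [abs_of_pos (hS r hr).1])
          rw [show (x0:ℂ) + τ * Complex.I + circleMap 0 r θ = circleMap (x0 + τ * Complex.I) r θ by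
            simp [circleMap]] at h1
          refine le_mul_of_one_le_left (by positivity) ?_
          rw [← ofReal_norm, ← ENNReal.ofReal_mul (by positivity), ← ENNReal.ofReal_one]
          apply ENNReal.ofReal_le_ofReal
          rw [inv_mul_eq_div, le_div_iff₀ hm, one_mul]
          exact h1
      _ = C1 * ∫⁻ θ in Ioc 0 (2 * Real.pi), ‖mellin v (circleMap (x0 + τ * Complex.I) r θ)‖ₑ ^ 2 := by
          rw [lintegral_const_mul' _ _ (ENNReal.pow_ne_top ENNReal.ofReal_ne_top), hC1, mul_assoc]
      _ ≤ _ := by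
          gcongr
          exact Finset.single_le_sum (f := fun r => ∫⁻ θ in Ioc 0 (2 * Real.pi),
            ‖mellin v (circleMap (x0 + τ * Complex.I) r θ)‖ₑ ^ 2) (fun _ _ => by positivity) hr
  set I : ℝ≥0∞ := ∫⁻ h in Ioi (0:ℝ), ‖v h‖ₑ ^ 2 * ENNReal.ofReal (h ^ (-1 - s)) with hI
  have hVcont : Continuous (mellin v) := hVd.continuous
  have hcirc : ∀ r ∈ S, ∫⁻ τ : ℝ, ∫⁻ θ in Ioc 0 (2 * Real.pi),
      ‖mellin v (circleMap (x0 + τ * Complex.I) r θ)‖ₑ ^ 2 ≤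
      ENNReal.ofReal (2 * Real.pi) * (ENNReal.ofReal (2 * Real.pi) * I) := by
    intro r hr
    rw [lintegral_lintegral_swap]
    · calc _ ≤ ∫⁻ θ in Ioc 0 (2 * Real.pi), ENNReal.ofReal (2 * Real.pi) * I := by
            gcongr with θ
            have e : ∀ τ : ℝ, circleMap (x0 + τ * Complex.I) r θ =
                ((x0 + r * Real.cos θ : ℝ) : ℂ) + ((τ + r * Real.sin θ : ℝ) : ℂ) * Complex.I := by
              intro τ
              simp only [circleMap]
              rw [Complex.exp_mul_I]
              push_cast
              ring
            simp_rw [e]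
            rw [lintegral_add_right_eq_self (fun τ : ℝ => ‖mellin v (((x0 + r * Real.cos θ : ℝ) : ℂ) +
              (τ : ℂ) * Complex.I)‖ₑ ^ 2), mellin_planch v hvm (ε / k) 1 (by positivity) hvsupp hv2]
            gcongr
            apply lintegral_mono
            intro h
            dsimp only
            by_cases hh : h ∈ Icc (ε / k) 1
            · have hh0 : 0 < h := lt_of_lt_of_le (by positivity) hh.1
              gcongr 1
              apply ENNReal.ofReal_le_ofReal
              apply Real.rpow_le_rpow_of_exponent_ge hh0 hh.2
              have h1 := Real.neg_one_le_cos θ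
              have h2 := hS r hr
              rw [hx0]
              rw [hρ] at h2
              nlinarith
            · simp [hvsupp h hh]
        _ = _ := by
            rw [setLIntegral_const, Real.volume_Ioc, sub_zero, mul_comm]
    · apply Measurable.aemeasurable
      have : Continuous (fun p : ℝ × ℝ => mellin v (circleMap (x0 + p.1 * Complex.I) r p.2)) := by
        apply hVcont.comp
        simp only [circleMap]
        fun_prop
      exact (this.measurable.enorm).pow_const 2
  have hfinal := mellin_planch w hw ε 1 hε hsupp h2 x0
  rw [show 2 * x0 - 1 = -1 - β by rw [hx0]; ring] at hfinal
  have hle : ENNReal.ofReal (2 * Real.pi) * ∫⁻ h in Ioi (0:ℝ), ‖w h‖ₑ ^ 2 * ENNReal.ofReal (h ^ (-1 - β)) ≤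
      ENNReal.ofReal (2 * Real.pi) * (C1 * (S.card * ENNReal.ofReal (2 * Real.pi)) * I) := by
    rw [← hfinal]
    calc _ ≤ ∫⁻ τ : ℝ, C1 * ∑ r ∈ S,
      ∫⁻ θ in Ioc 0 (2 * Real.pi), ‖mellin v (circleMap (x0 + τ * Complex.I) r θ)‖ₑ ^ 2 :=
          lintegral_mono hpw
      _ = C1 * ∑ r ∈ S, ∫⁻ τ : ℝ, ∫⁻ θ in Ioc 0 (2 * Real.pi),
          ‖mellin v (circleMap (x0 + τ * Complex.I) r θ)‖ₑ ^ 2 := by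
          rw [lintegral_const_mul', lintegral_finsetSum]
          · intro r _
            apply Measurable.lintegral_prod_right' (f := fun p : ℝ × ℝ =>
              ‖mellin v (circleMap (x0 + p.1 * Complex.I) r p.2)‖ₑ ^ 2)
            have : Continuous (fun p : ℝ × ℝ => mellin v (circleMap (x0 + p.1 * Complex.I) r p.2)) := by
              apply hVcont.comp
              simp only [circleMap]
              fun_prop
            exact (this.measurable.enorm).pow_const 2
          · exact (ENNReal.mul_lt_top ENNReal.ofReal_lt_top
              (ENNReal.pow_lt_top ENNReal.ofReal_lt_top)).ne
      _ ≤ C1 * ∑ r ∈ S, ENNReal.ofReal (2 * Real.pi) * (ENNReal.ofReal (2 * Real.pi) * I) := by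
          gcongr with r hr
          exact hcirc r hr
      _ = _ := by
          rw [Finset.sum_const, nsmul_eq_mul]
          ring
  rwa [ENNReal.mul_le_mul_iff_right (by simpa using Real.pi_pos) ENNReal.ofReal_ne_top] at hle
/-- Signed binomial coefficients. -/
noncomputable def cf (k j : ℕ) : ℂ := (-1 : ℂ) ^ (k - j) * (k.choose j : ℂ)

lemma tauIter_succ (h : ℝ) (k : ℕ) (g : ℝ → ℂ) (t : ℝ) :
    tauIter h (k + 1) g t = tauIter h k g (t + h) - tauIter h k g t := rfl

lemma tauIter_zero' (h : ℝ) (g : ℝ → ℂ) (t : ℝ) : tauIter h 0 g t = g t := rfl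

lemma tauIter_eq_fwd (h : ℝ) (k : ℕ) (g : ℝ → ℂ) : tauIter h k g = (fwdDiff h)^[k] g := by
  induction k with
  | zero => rfl
  | succ k ih =>
    rw [Function.iterate_succ_apply', ← ih]
    rfl

lemma tauIter_succ' (h : ℝ) (k : ℕ) (g : ℝ → ℂ) :
    tauIter h (k + 1) g = tauIter h k (tau h g) := by
  rw [tauIter_eq_fwd, tauIter_eq_fwd, Function.iterate_succ_apply]
  rfl

lemma tauIter_eq_sum (h : ℝ) (k : ℕ) (g : ℝ → ℂ) (t : ℝ) :
    tauIter h k g t = ∑ j ∈ Finset.range (k + 1), cf k j * g (t + j * h) := by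
  rw [tauIter_eq_fwd, fwdDiff_iter_eq_sum_shift]
  refine Finset.sum_congr rfl fun j _ => ?_
  simp [cf, nsmul_eq_mul]

lemma tauIter_step_zero (k : ℕ) (hk : 0 < k) (g : ℝ → ℂ) (t : ℝ) : tauIter 0 k g t = 0 := by
  obtain ⟨n, rfl⟩ : ∃ n, k = n + 1 := ⟨k - 1, by omega⟩
  simp [tauIter_succ]

lemma tauIter_add (h : ℝ) (k : ℕ) (f g : ℝ → ℂ) (t : ℝ) :
    tauIter h k (fun x => f x + g x) t = tauIter h k f t + tauIter h k g t := by
  simp only [tauIter_eq_sum, mul_add, Finset.sum_add_distrib]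

lemma tauIter_shift (h a : ℝ) (k : ℕ) (g : ℝ → ℂ) (t : ℝ) :
    tauIter h k (fun x => g (x + a)) t = tauIter h k g (t + a) := by
  simp only [tauIter_eq_sum]
  refine Finset.sum_congr rfl fun j _ => ?_
  congr 2
  ring

lemma tauIter_neg (h : ℝ) (k : ℕ) (g : ℝ → ℂ) (t : ℝ) :
    tauIter h k (fun x => g (-x)) t = tauIter (-h) k g (-t) := by
  simp only [tauIter_eq_sum]
  refine Finset.sum_congr rfl fun j _ => ?_
  congr 2
  ring

lemma two_grid (k m : ℕ) (b x y : ℝ) (g : ℝ → ℂ) :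
    ∑ j ∈ Finset.range (k + 1), cf k j * tauIter (j * b) m g (x + j * y) =
    ∑ i ∈ Finset.range (m + 1), cf m i * tauIter (y + i * b) k g x := by
  simp only [tauIter_eq_sum, Finset.mul_sum]
  rw [Finset.sum_comm]
  refine Finset.sum_congr rfl fun i _ => Finset.sum_congr rfl fun j _ => ?_
  rw [show x + j * y + i * (j * b) = x + j * (y + i * b) by ring]
  ring

lemma leibniz_bound (h : ℝ) (k : ℕ) : ∀ (f g : ℝ → ℂ) (t : ℝ),
    ‖tauIter h k (fun x => f x * g x) t‖ ≤ 2 ^ k * ∑ i ∈ Finset.range (k + 1),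
      ‖tauIter h (k - i) f (t + i * h)‖ * ‖tauIter h i g t‖ := by
  induction k with
  | zero => intro f g t; simp [tauIter]
  | succ k ih =>
    intro f g t
    have e1 : tau h (fun x => f x * g x) =
        fun x => (fun y => f (y + h)) x * (tau h g) x + (tau h f) x * g x := by
      funext x; simp only [tau]; ring
    rw [tauIter_succ', e1, tauIter_add]
    refine (norm_add_le _ _).trans ?_
    have h1 := ih (fun y => f (y + h)) (tau h g) t
    have h2 := ih (tau h f) g t
    have h3 : ∑ i ∈ Finset.range (k + 1),
        ‖tauIter h (k - i) (fun y => f (y + h)) (t + i * h)‖ * ‖tauIter h i (tau h g) t‖ ≤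
        ∑ i ∈ Finset.range (k + 1 + 1),
          ‖tauIter h (k + 1 - i) f (t + i * h)‖ * ‖tauIter h i g t‖ := by
      rw [Finset.sum_range_succ' _ (k + 1)]
      refine le_trans (le_of_eq ?_) (le_add_of_nonneg_right (by positivity))
      refine Finset.sum_congr rfl fun i _ => ?_
      rw [tauIter_shift, ← tauIter_succ', show k + 1 - (i + 1) = k - i by omega]
      push_cast
      rw [show t + i * h + h = t + (i + 1) * h by ring]
    have h4 : ∑ i ∈ Finset.range (k + 1),
        ‖tauIter h (k - i) (tau h f) (t + i * h)‖ * ‖tauIter h i g t‖ ≤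
        ∑ i ∈ Finset.range (k + 1 + 1),
          ‖tauIter h (k + 1 - i) f (t + i * h)‖ * ‖tauIter h i g t‖ := by
      rw [Finset.sum_range_succ _ (k + 1)]
      refine le_trans (le_of_eq ?_) (le_add_of_nonneg_right (by positivity))
      refine Finset.sum_congr rfl fun i hi => ?_
      rw [← tauIter_succ', show k - i + 1 = k + 1 - i by
        have := Finset.mem_range.1 hi; omega]
    have h5 : (0:ℝ) < 2 ^ k := by positivity
    rw [pow_succ]
    nlinarith [mul_le_mul_of_nonneg_left h3 h5.le, mul_le_mul_of_nonneg_left h4 h5.le]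

lemma marchaud (m : ℕ) : ∃ C : ℝ, 0 ≤ C ∧ ∀ (h : ℝ) (g : ℝ → ℂ) (t : ℝ),
    ‖tauIter (2 * h) m g t - 2 ^ m * tauIter h m g t‖ ≤
      C * ∑ l ∈ Finset.range m, ‖tauIter h (m + 1) g (t + l * h)‖ := by
  induction m with
  | zero => exact ⟨0, le_rfl, by intro h g t; simp [tauIter]⟩
  | succ m ih =>
    obtain ⟨C, hC, ih⟩ := ih
    refine ⟨2 * C + 2 ^ m, by positivity, fun h g t => ?_⟩
    have e0 : tau (2 * h) g = fun x => (fun y => tau h g (y + h)) x + tau h g x := by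
      funext x; simp only [tau]; rw [show x + h + h = x + 2 * h by ring]; ring
    have e1 : ∀ n x, tauIter h n (tau (2 * h) g) x =
        tauIter h (n + 1) g (x + h) + tauIter h (n + 1) g x := by
      intro n x
      rw [e0, tauIter_add, tauIter_shift, tauIter_succ']
    have h1 := ih h (tau (2 * h) g) t
    have e2 : tauIter (2 * h) (m + 1) g t - 2 ^ (m + 1) * tauIter h (m + 1) g t =
        (tauIter (2 * h) m (tau (2 * h) g) t - 2 ^ m * tauIter h m (tau (2 * h) g) t) +
        2 ^ m * tauIter h (m + 1 + 1) g t := by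
      rw [tauIter_succ' (2 * h), e1, tauIter_succ h (m + 1)]; ring
    rw [e2]
    set S := ∑ l ∈ Finset.range (m + 1), ‖tauIter h (m + 1 + 1) g (t + l * h)‖ with hS
    have h2 : ∑ l ∈ Finset.range m, ‖tauIter h (m + 1) (tau (2 * h) g) (t + l * h)‖ ≤ 2 * S := by
      have : ∀ l ∈ Finset.range m, ‖tauIter h (m + 1) (tau (2 * h) g) (t + l * h)‖ ≤
          ‖tauIter h (m + 1 + 1) g (t + (l + 1 : ℕ) * h)‖ +
          ‖tauIter h (m + 1 + 1) g (t + l * h)‖ := by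
        intro l _
        rw [e1]
        push_cast
        rw [show t + l * h + h = t + (l + 1) * h by ring]
        exact norm_add_le _ _
      refine (Finset.sum_le_sum this).trans ?_
      rw [Finset.sum_add_distrib, two_mul]
      refine add_le_add ?_ ?_
      · rw [hS, Finset.sum_range_succ']
        exact le_add_of_nonneg_right (by positivity)
      · rw [hS, Finset.sum_range_succ]
        exact le_add_of_nonneg_right (by positivity)
    have h3 : ‖tauIter h (m + 1 + 1) g t‖ ≤ S := by
      rw [hS, Finset.sum_range_succ']
      simp only [Nat.cast_zero, zero_mul, add_zero]
      exact le_add_of_nonneg_left (by positivity)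
    refine (norm_add_le _ _).trans ?_
    rw [norm_mul, norm_pow, Complex.norm_ofNat]
    have h5 : (0:ℝ) < 2 ^ m := by positivity
    nlinarith [mul_le_mul_of_nonneg_left h2 hC, mul_le_mul_of_nonneg_left h3 h5.le]

lemma measurable_tauIter (k : ℕ) {g : ℝ → ℂ} (hg : Measurable g) {α : Type*} [MeasurableSpace α]
    {a b : α → ℝ} (ha : Measurable a) (hb : Measurable b) :
    Measurable (fun p => tauIter (a p) k g (b p)) := by
  simp only [tauIter_eq_sum]
  fun_prop



lemma phi_bound (j : ℕ) : ∀ (φ : ℝ → ℂ), ContDiff ℝ j φ → ∀ R : ℝ, ∃ C : ℝ, 0 ≤ C ∧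
    ∀ t h : ℝ, |t| ≤ R → |h| ≤ 1 → ‖tauIter h j φ t‖ ≤ C * |h| ^ j := by
  induction j with
  | zero =>
    intro φ hφ R
    obtain ⟨C, hC⟩ := (isCompact_Icc (a := -R) (b := R)).exists_bound_of_continuousOn
      hφ.continuous.continuousOn
    refine ⟨max C 0, le_max_right _ _, fun t h ht _ => ?_⟩
    simpa [tauIter] using Or.inl (hC t (abs_le.1 ht))
  | succ j ih =>
    intro φ hφ R
    have hφ' : ContDiff ℝ (j + 1 : ℕ) φ := hφ
    push_cast at hφ'
    obtain ⟨hd, -, hd'⟩ := contDiff_succ_iff_deriv.1 hφ'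
    obtain ⟨C, hC, hb⟩ := ih (deriv φ) hd' (R + 1)
    refine ⟨C, hC, fun t h ht hh => ?_⟩
    have hder : ∀ x, HasDerivAt (tauIter h j φ) (tauIter h j (deriv φ) x) x := by
      intro x
      have e : tauIter h j φ = fun y => ∑ i ∈ Finset.range (j + 1), cf j i * φ (y + i * h) := by
        funext y; exact tauIter_eq_sum _ _ _ _
      rw [e, tauIter_eq_sum]
      apply HasDerivAt.fun_sum
      intro i _
      apply HasDerivAt.const_mul
      exact ((hd (x + i * h)).hasDerivAt).comp_add_const x (i * h)
    have := (convex_Icc (-(R+1)) (R+1)).norm_image_sub_le_of_norm_hasDerivWithin_le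
      (f := tauIter h j φ) (f' := fun x => tauIter h j (deriv φ) x) (C := C * |h| ^ j)
      (x := t) (y := t + h)
      (fun x _ => (hder x).hasDerivWithinAt)
      (fun x hx => hb x h (abs_le.2 hx) hh) ?_ ?_
    · rw [tauIter_succ, pow_succ, ← mul_assoc]
      simpa using this
    · have := abs_le.1 ht
      constructor <;> linarith
    · have := abs_le.1 ht
      have := abs_le.1 hh
      constructor <;> linarith

/-- scaling with weights -/
lemma scale_le (s a : ℝ) (ha : 0 < a) (S S' : Set ℝ) (hS : MeasurableSet S) (hS' : MeasurableSet S')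
    (hpos : S ⊆ Ioi 0) (hm : ∀ h ∈ S, a * h ∈ S') (F : ℝ → ℝ≥0∞) :
    ∫⁻ h in S, F (a * h) * ENNReal.ofReal (h ^ (-1 - s)) ≤
      ENNReal.ofReal (a ^ s) * ∫⁻ u in S', F u * ENNReal.ofReal (u ^ (-1 - s)) := by
  rw [← lintegral_indicator hS, ← lintegral_indicator hS']
  have e := lint_scale (fun u => S'.indicator (fun u => F u * ENNReal.ofReal (u ^ (-1 - s))) u) a ha.ne'
  have e2 : ∫⁻ u, S'.indicator (fun u => F u * ENNReal.ofReal (u ^ (-1 - s))) u =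
      ENNReal.ofReal a * ∫⁻ x, S'.indicator (fun u => F u * ENNReal.ofReal (u ^ (-1 - s))) (a * x) := by
    rw [e, ← mul_assoc, ← ENNReal.ofReal_mul ha.le, abs_of_pos (inv_pos.2 ha),
      mul_inv_cancel₀ ha.ne']
    simp
  rw [e2, ← lintegral_const_mul' _ _ ENNReal.ofReal_ne_top,
    ← lintegral_const_mul' _ _ ENNReal.ofReal_ne_top]
  refine lintegral_mono fun h => ?_
  by_cases hh : h ∈ S
  · have h0 : 0 < h := hpos hh
    simp only [indicator_of_mem hh, indicator_of_mem (hm h hh)]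
    apply le_of_eq
    rw [Real.mul_rpow ha.le h0.le, ENNReal.ofReal_mul (by positivity)]
    have : ENNReal.ofReal (a ^ s) * ENNReal.ofReal a * ENNReal.ofReal (a ^ (-1 - s)) = 1 := by
      rw [← ENNReal.ofReal_mul (by positivity), ← ENNReal.ofReal_mul (by positivity)]
      rw [show a ^ s * a = a ^ (s + 1) by rw [Real.rpow_add ha, Real.rpow_one],
        ← Real.rpow_add ha, show s + 1 + (-1 - s) = 0 by ring]
      simp
    calc _ = F (a * h) * ENNReal.ofReal (h ^ (-1 - s)) * 1 := by rw [mul_one]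
      _ = _ := by rw [← this]; ring
  · simp [hh]

lemma tauIter_sq_le (m : ℕ) (h : ℝ) (g : ℝ → ℂ) (t : ℝ) : ‖tauIter h m g t‖ₑ ^ 2 ≤
    (m + 1 : ℝ≥0∞) * ∑ j ∈ Finset.range (m + 1), ‖cf m j‖ₑ ^ 2 * ‖g (t + j * h)‖ₑ ^ 2 := by
  rw [tauIter_eq_sum]
  refine (enorm_sum_sq _ _).trans ?_
  simp [mul_pow]

lemma lint_shift (F : ℝ → ℝ≥0∞) (a : ℝ) (S S' : Set ℝ) (hS : MeasurableSet S) (hS' : MeasurableSet S')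
    (hm : ∀ t ∈ S, t + a ∈ S') : ∫⁻ t in S, F (t + a) ≤ ∫⁻ t in S', F t := by
  rw [← lintegral_indicator hS, ← lintegral_indicator hS',
    ← lintegral_add_right_eq_self (fun t => S'.indicator F t) a]
  refine lintegral_mono fun t => ?_
  by_cases ht : t ∈ S
  · simp [ht, hm t ht]
  · simp [ht]

lemma loc_bound (g : ℝ → ℂ) (hg : Measurable g)
    (hloc : ∀ a b : ℝ, (∫⁻ t in Set.Icc a b, (‖g t‖₊ : ℝ≥0∞) ^ 2) < ⊤) (m : ℕ) (R : ℝ) :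
    ∃ M : ℝ≥0∞, M < ⊤ ∧ ∀ h : ℝ, |h| ≤ 1 → ∫⁻ t in Icc (-R) R, ‖tauIter h m g t‖ₑ ^ 2 ≤ M := by
  refine ⟨(m + 1 : ℝ≥0∞) * ∑ j ∈ Finset.range (m + 1), ‖cf m j‖ₑ ^ 2 *
    ∫⁻ t in Icc (-(R + m)) (R + m), ‖g t‖ₑ ^ 2, ?_, fun h hh => ?_⟩
  · apply ENNReal.mul_lt_top
    · exact ENNReal.add_lt_top.2 ⟨ENNReal.natCast_lt_top m, ENNReal.one_lt_top⟩
    · refine ENNReal.sum_lt_top.2 fun j _ => ENNReal.mul_lt_top ?_ (hloc _ _)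
      exact ENNReal.pow_lt_top enorm_lt_top
  · calc _ ≤ ∫⁻ t in Icc (-R) R, (m + 1 : ℝ≥0∞) *
          ∑ j ∈ Finset.range (m + 1), ‖cf m j‖ₑ ^ 2 * ‖g (t + j * h)‖ₑ ^ 2 :=
          lintegral_mono fun t => tauIter_sq_le m h g t
      _ = (m + 1 : ℝ≥0∞) * ∑ j ∈ Finset.range (m + 1), ‖cf m j‖ₑ ^ 2 *
          ∫⁻ t in Icc (-R) R, ‖g (t + j * h)‖ₑ ^ 2 := by
          rw [lintegral_const_mul' _ _ (by finiteness), lintegral_finsetSum]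
          · congr 1
            refine Finset.sum_congr rfl fun j _ => ?_
            rw [lintegral_const_mul' _ _ (by finiteness)]
          · intro j _; fun_prop
      _ ≤ _ := by
          refine mul_le_mul_right (Finset.sum_le_sum fun j hj => mul_le_mul_right ?_ _) _
          apply lint_shift (fun t => ‖g t‖ₑ ^ 2) (j * h) _ _ measurableSet_Icc measurableSet_Icc
          intro t ht
          have h1 : |(j:ℝ) * h| ≤ m := by
            rw [abs_mul, Nat.abs_cast]
            have : (j:ℝ) ≤ m := by exact_mod_cast Nat.lt_succ_iff.1 (Finset.mem_range.1 hj)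
            nlinarith [abs_nonneg h]
          have := abs_le.1 h1
          constructor <;> linarith [ht.1, ht.2]



lemma enorm_add_sq (a b : ℂ) : ‖a + b‖ₑ ^ 2 ≤ 2 * (‖a‖ₑ ^ 2 + ‖b‖ₑ ^ 2) := by
  have := enorm_sum_sq (Finset.univ : Finset (Fin 2)) ![a, b]
  simpa [Fin.sum_univ_two] using this

lemma enorm_lin_sq (s : Finset ℕ) (c : ℕ → ℂ) (f : ℕ → ℂ) :
    ‖∑ i ∈ s, c i * f i‖ₑ ^ 2 ≤
      ((s.card : ℝ≥0∞) * ∑ i ∈ s, ‖c i‖ₑ ^ 2) * ∑ i ∈ s, ‖f i‖ₑ ^ 2 := by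
  refine (enorm_sum_sq s _).trans ?_
  rw [mul_assoc]
  refine mul_le_mul_right ?_ _
  rw [Finset.sum_mul]
  refine Finset.sum_le_sum fun i hi => ?_
  rw [enorm_mul, mul_pow]
  exact mul_le_mul_right (Finset.single_le_sum (f := fun i => ‖f i‖ₑ ^ 2)
    (fun _ _ => zero_le) hi) _

lemma cf_one (k : ℕ) : cf k 1 = (-1) ^ (k - 1) * k := by simp [cf]

lemma B0_pointwise (k : ℕ) (hk : 0 < k) : ∃ A : ℝ≥0∞, A < ⊤ ∧ ∀ (g : ℝ → ℂ) (Y q W : ℝ),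
    ‖tauIter W k g Y‖ₑ ^ 2 ≤ A * (∑ i ∈ Finset.range (k + 1), ‖tauIter ((q + i) * W) k g (Y - q * W)‖ₑ ^ 2
      + ∑ j ∈ Finset.Icc 2 k, ‖tauIter (j * W) k g (Y + (j - 1) * (q * W))‖ₑ ^ 2) := by
  set A1 : ℝ≥0∞ := ((Finset.range (k + 1)).card : ℝ≥0∞) * ∑ i ∈ Finset.range (k + 1), ‖cf k i‖ₑ ^ 2
  set A2 : ℝ≥0∞ := ((Finset.Icc 2 k).card : ℝ≥0∞) * ∑ i ∈ Finset.Icc 2 k, ‖-cf k i‖ₑ ^ 2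
  have hA1 : A1 < ⊤ := by
    refine ENNReal.mul_lt_top (by finiteness) (ENNReal.sum_lt_top.2 fun i _ => by finiteness)
  have hA2 : A2 < ⊤ := by
    refine ENNReal.mul_lt_top (by finiteness) (ENNReal.sum_lt_top.2 fun i _ => by finiteness)
  refine ⟨2 * (A1 + A2), by finiteness, fun g Y q W => ?_⟩
  have h := two_grid k k W (Y - q * W) (q * W) g
  have e1 : ∑ j ∈ Finset.range (k + 1), cf k j * tauIter (j * W) k g (Y - q * W + j * (q * W)) =
      cf k 1 * tauIter W k g Y +
        ∑ j ∈ Finset.Icc 2 k, cf k j * tauIter (j * W) k g (Y + (j - 1) * (q * W)) := by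
    have : Finset.range (k + 1) = insert 0 (insert 1 (Finset.Icc 2 k)) := by
      ext x; simp; omega
    rw [this, Finset.sum_insert (by simp), Finset.sum_insert (by simp)]
    simp only [Nat.cast_zero, zero_mul, tauIter_step_zero k hk, mul_zero, zero_add, Nat.cast_one,
      one_mul, sub_add_cancel]
    congr 1
    refine Finset.sum_congr rfl fun j _ => ?_
    congr 2
    ring
  rw [e1] at h
  have e2 : cf k 1 * tauIter W k g Y =
      ∑ i ∈ Finset.range (k + 1), cf k i * tauIter ((q + i) * W) k g (Y - q * W) +
        ∑ j ∈ Finset.Icc 2 k, (-cf k j) * tauIter (j * W) k g (Y + (j - 1) * (q * W)) := by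
    rw [eq_sub_of_add_eq h, sub_eq_add_neg, ← Finset.sum_neg_distrib]
    simp only [neg_mul, add_mul]
  have h1 : ‖tauIter W k g Y‖ₑ ^ 2 ≤ ‖cf k 1 * tauIter W k g Y‖ₑ ^ 2 := by
    rw [enorm_mul, mul_pow]
    refine le_mul_of_one_le_left (zero_le) ?_
    apply one_le_pow₀
    rw [cf_one, enorm_mul, enorm_pow]
    simp only [enorm_neg, enorm_one, one_pow, one_mul]
    rw [← ofReal_norm, Complex.norm_natCast]
    rw [ENNReal.one_le_ofReal]
    exact_mod_cast hk
  refine h1.trans ?_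
  rw [e2]
  refine (enorm_add_sq _ _).trans ?_
  rw [mul_assoc]
  refine mul_le_mul_right ?_ _
  rw [mul_add]
  refine add_le_add ((enorm_lin_sq _ _ _).trans ?_) ((enorm_lin_sq _ _ _).trans ?_)
  · exact mul_le_mul_left (self_le_add_right _ _) _
  · exact mul_le_mul_left (self_le_add_left _ _) _

lemma good_meas (k : ℕ) (hk : 0 < k) (C δ W : ℝ) (hC : 0 ≤ C) (hW : 0 < W) (hWδ : (C + k) * W ≤ δ)
    (U : Set ℝ) (hU : MeasurableSet U) (x : ℝ)
    (hx : ∀ ρ, 0 < ρ → ρ ≤ δ → volume (Metric.closedBall x ρ \ U) ≤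
      ENNReal.ofReal (1 / (2 * k * (C + k)) * ρ)) (Y : ℝ) (hY : |Y - x| ≤ C * W) :
    ENNReal.ofReal (1 / 2) ≤ volume (Ioc (0:ℝ) 1 ∩
      {q | Y - q * W ∈ U ∧ ∀ j ∈ Finset.Icc 2 k, Y + ((j:ℝ) - 1) * (q * W) ∈ U}) := by
  have hk' : (0:ℝ) < k := by exact_mod_cast hk
  set J := (Finset.range (k + 1)).erase 1
  have hJ : J.card = k := by
    rw [Finset.card_erase_of_mem (by simp; omega)]; simp
  set G := {q | Y - q * W ∈ U ∧ ∀ j ∈ Finset.Icc 2 k, Y + ((j:ℝ) - 1) * (q * W) ∈ U}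
  set B : ℕ → Set ℝ := fun j => {q | ((j:ℝ) - 1) * W * q ∈ (Y + ·) ⁻¹' (Metric.closedBall x ((C + k) * W) \ U)}
  have hsub : Ioc (0:ℝ) 1 ⊆ (Ioc (0:ℝ) 1 ∩ G) ∪ ⋃ j ∈ J, B j := by
    intro q hq
    by_contra hcon
    simp only [mem_union, mem_iUnion, not_or, not_exists] at hcon
    obtain ⟨h1, h2⟩ := hcon
    have h3 : ∀ j ∈ J, Y + ((j:ℝ) - 1) * (q * W) ∈ U := by
      intro j hj
      by_contra hnu
      apply h2 j hj
      simp only [B, mem_ofPred_eq, mem_preimage, mem_sdiff, Metric.mem_closedBall, Real.dist_eq]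
      rw [show ((j:ℝ) - 1) * W * q = ((j:ℝ) - 1) * (q * W) by ring]
      refine ⟨?_, hnu⟩
      have hjk : (j:ℝ) ≤ k := by
        have := Finset.mem_range.1 (Finset.mem_of_mem_erase hj)
        exact_mod_cast Nat.lt_succ_iff.1 this
      have hj0 : (0:ℝ) ≤ j := Nat.cast_nonneg j
      have hk1 : (1:ℝ) ≤ k := by exact_mod_cast hk
      have hj1 : |(j:ℝ) - 1| ≤ k := by rw [abs_le]; constructor <;> linarith
      have hqW : |q * W| ≤ W := by
        rw [abs_of_nonneg (mul_nonneg hq.1.le hW.le)]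
        nlinarith [hq.2]
      calc |Y + ((j:ℝ) - 1) * (q * W) - x| = |(Y - x) + ((j:ℝ) - 1) * (q * W)| := by ring_nf
        _ ≤ |Y - x| + |((j:ℝ) - 1) * (q * W)| := abs_add_le _ _
        _ ≤ C * W + k * W := by
          rw [abs_mul]
          exact add_le_add hY (mul_le_mul hj1 hqW (abs_nonneg _) hk'.le)
        _ = _ := by ring
    apply h1
    refine ⟨hq, ?_, ?_⟩
    · have := h3 0 (by simp [J])
      simpa [sub_eq_add_neg] using this
    · intro j hj
      apply h3
      have := Finset.mem_Icc.1 hj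
      simp [J]; omega
  have hB : ∀ j ∈ J, volume (B j) ≤ ENNReal.ofReal (1 / (2 * k)) := by
    intro j hj
    have hj1 : 1 ≤ |(j:ℝ) - 1| := by
      have : j ≠ 1 := Finset.ne_of_mem_erase hj
      have h2 : (1:ℤ) ≤ |(j:ℤ) - 1| := by
        apply Int.one_le_abs; omega
      exact_mod_cast h2
    have hne : ((j:ℝ) - 1) * W ≠ 0 := by
      apply mul_ne_zero _ hW.ne'
      intro h0; rw [h0] at hj1; norm_num at hj1
    have e : B j = (((j:ℝ) - 1) * W * ·) ⁻¹' ((Y + ·) ⁻¹' (Metric.closedBall x ((C + k) * W) \ U)) := rfl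
    rw [e, Real.volume_preimage_mul_left hne, measure_preimage_add]
    have hpos : 0 < (C + k) * W := by positivity
    refine (mul_le_mul_right (hx _ hpos hWδ) _).trans ?_
    rw [← ENNReal.ofReal_mul (abs_nonneg _)]
    apply ENNReal.ofReal_le_ofReal
    rw [abs_inv, abs_mul, abs_of_pos hW]
    have h5 : (|(j:ℝ) - 1| * W)⁻¹ ≤ W⁻¹ := by
      apply inv_anti₀ hW
      nlinarith
    calc _ ≤ W⁻¹ * (1 / (2 * k * (C + k)) * ((C + k) * W)) := by
          apply mul_le_mul_of_nonneg_right h5; positivity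
      _ = 1 / (2 * k) := by field_simp
  have h1 : (1 : ℝ≥0∞) ≤ volume (Ioc (0:ℝ) 1 ∩ G) + ENNReal.ofReal (1 / 2) := by
    calc (1 : ℝ≥0∞) = volume (Ioc (0:ℝ) 1) := by simp
      _ ≤ volume (Ioc (0:ℝ) 1 ∩ G) + volume (⋃ j ∈ J, B j) :=
        (measure_mono hsub).trans (measure_union_le _ _)
      _ ≤ volume (Ioc (0:ℝ) 1 ∩ G) + ∑ j ∈ J, volume (B j) := by
        gcongr; exact measure_biUnion_finset_le _ _
      _ ≤ volume (Ioc (0:ℝ) 1 ∩ G) + ∑ j ∈ J, ENNReal.ofReal (1 / (2 * k)) := by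
        gcongr with j hj; exact hB j hj
      _ = _ := by
        rw [Finset.sum_const, hJ, nsmul_eq_mul, ← ENNReal.ofReal_natCast,
          ← ENNReal.ofReal_mul hk'.le]
        congr 2; field_simp
  have h2 : (1 : ℝ≥0∞) = ENNReal.ofReal (1 / 2) + ENNReal.ofReal (1 / 2) := by
    rw [← ENNReal.ofReal_add (by norm_num) (by norm_num)]; norm_num
  rw [h2] at h1
  exact (ENNReal.add_le_add_iff_right ENNReal.ofReal_ne_top).1 h1

lemma B0_int (k : ℕ) (hk : 0 < k) : ∃ A : ℝ≥0∞, A < ⊤ ∧ ∀ (g : ℝ → ℂ) (_ : Measurable g)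
    (C δ W : ℝ) (_ : 0 ≤ C) (_ : 0 < W) (_ : (C + k) * W ≤ δ)
    (U : Set ℝ) (_ : MeasurableSet U) (K : Set ℝ)
    (_ : ∀ x ∈ K, ∀ ρ, 0 < ρ → ρ ≤ δ → volume (Metric.closedBall x ρ \ U) ≤
      ENNReal.ofReal (1 / (2 * k * (C + k)) * ρ)),
    ∫⁻ Y in Metric.thickening (C * W) K, ‖tauIter W k g Y‖ₑ ^ 2 ≤
      A * ∫⁻ q in Ioc (0:ℝ) 1, ((∑ i ∈ Finset.range (k + 1), ∫⁻ t in U, ‖tauIter ((q + i) * W) k g t‖ₑ ^ 2)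
        + ∑ j ∈ Finset.Icc 2 k, ∫⁻ t in U, ‖tauIter (j * W) k g t‖ₑ ^ 2) := by
  obtain ⟨A, hA, hpt⟩ := B0_pointwise k hk
  refine ⟨2 * A, by finiteness, fun g hg C δ W hC hW hWδ U hU K hK => ?_⟩
  set P : ℝ → ℝ → ℝ≥0∞ := fun Y q =>
    ∑ i ∈ Finset.range (k + 1), U.indicator (fun t => ‖tauIter ((q + i) * W) k g t‖ₑ ^ 2) (Y - q * W)
      + ∑ j ∈ Finset.Icc 2 k, U.indicator (fun t => ‖tauIter (j * W) k g t‖ₑ ^ 2) (Y + ((j:ℝ) - 1) * (q * W))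
    with hP
  have m1 : ∀ i : ℕ, Measurable (fun p : ℝ × ℝ =>
      U.indicator (fun t => ‖tauIter ((p.2 + i) * W) k g t‖ₑ ^ 2) (p.1 - p.2 * W)) := by
    intro i
    have : (fun p : ℝ × ℝ =>
        U.indicator (fun t => ‖tauIter ((p.2 + i) * W) k g t‖ₑ ^ 2) (p.1 - p.2 * W)) =
        ({p : ℝ × ℝ | p.1 - p.2 * W ∈ U}).indicator
          (fun p => ‖tauIter ((p.2 + i) * W) k g (p.1 - p.2 * W)‖ₑ ^ 2) := by
      funext p; rfl
    rw [this]
    apply Measurable.indicator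
    · exact ((measurable_tauIter k hg (by fun_prop) (by fun_prop)).enorm).pow_const 2
    · exact (show Measurable (fun p : ℝ × ℝ => p.1 - p.2 * W) by fun_prop) hU
  have m2 : ∀ j : ℕ, Measurable (fun p : ℝ × ℝ =>
      U.indicator (fun t => ‖tauIter (j * W) k g t‖ₑ ^ 2) (p.1 + ((j:ℝ) - 1) * (p.2 * W))) := by
    intro j
    have : Measurable (U.indicator (fun t => ‖tauIter (j * W) k g t‖ₑ ^ 2)) :=
      (((measurable_tauIter k hg (by fun_prop) (by fun_prop)).enorm).pow_const 2).indicator hU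
    exact this.comp (by fun_prop)
  have hPm : Measurable (Function.uncurry P) := by
    apply Measurable.add
    · exact Finset.measurable_fun_sum _ fun i _ => m1 i
    · exact Finset.measurable_fun_sum _ fun i _ => m2 i
  have step1 : ∀ Y ∈ Metric.thickening (C * W) K,
      ‖tauIter W k g Y‖ₑ ^ 2 ≤ 2 * A * ∫⁻ q in Ioc (0:ℝ) 1, P Y q := by
    intro Y hY
    obtain ⟨x, hxK, hxY⟩ := Metric.mem_thickening_iff.1 hY
    have hgm := good_meas k hk C δ W hC hW hWδ U hU x (hK x hxK) Y (by
      rw [← Real.dist_eq]; exact hxY.le)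
    set G := {q | Y - q * W ∈ U ∧ ∀ j ∈ Finset.Icc 2 k, Y + ((j:ℝ) - 1) * (q * W) ∈ U} with hG
    have h1 : ENNReal.ofReal (1 / 2) * ‖tauIter W k g Y‖ₑ ^ 2 ≤ A * ∫⁻ q in Ioc (0:ℝ) 1, P Y q := by
      calc _ ≤ volume (Ioc (0:ℝ) 1 ∩ G) * ‖tauIter W k g Y‖ₑ ^ 2 := by gcongr
        _ = ∫⁻ q in Ioc (0:ℝ) 1 ∩ G, ‖tauIter W k g Y‖ₑ ^ 2 := by
          rw [setLIntegral_const, mul_comm]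
        _ ≤ ∫⁻ q in Ioc (0:ℝ) 1 ∩ G, A * P Y q := by
          apply setLIntegral_mono
          · exact (hPm.of_uncurry_left (x := Y)).const_mul A
          · intro q hq
            refine (hpt g Y q W).trans (le_of_eq ?_)
            simp only [hP]
            congr 2
            · refine Finset.sum_congr rfl fun i _ => ?_
              rw [indicator_of_mem hq.2.1]
            · refine Finset.sum_congr rfl fun i hi => ?_
              rw [indicator_of_mem (hq.2.2 i hi)]
        _ ≤ ∫⁻ q in Ioc (0:ℝ) 1, A * P Y q := lintegral_mono_set inter_subset_left
        _ = _ := lintegral_const_mul' _ _ hA.ne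
    calc ‖tauIter W k g Y‖ₑ ^ 2 = 2 * (ENNReal.ofReal (1 / 2) * ‖tauIter W k g Y‖ₑ ^ 2) := by
          rw [← mul_assoc, show (2 : ℝ≥0∞) = ENNReal.ofReal 2 by simp,
            ← ENNReal.ofReal_mul (by norm_num)]
          norm_num
      _ ≤ 2 * (A * ∫⁻ q in Ioc (0:ℝ) 1, P Y q) := by gcongr
      _ = _ := by ring
  have hT : MeasurableSet (Metric.thickening (C * W) K) := Metric.isOpen_thickening.measurableSet
  calc _ ≤ ∫⁻ Y in Metric.thickening (C * W) K, 2 * A * ∫⁻ q in Ioc (0:ℝ) 1, P Y q := by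
        exact setLIntegral_mono' hT step1
    _ ≤ ∫⁻ Y, 2 * A * ∫⁻ q in Ioc (0:ℝ) 1, P Y q := setLIntegral_le_lintegral _ _
    _ = 2 * A * ∫⁻ Y, ∫⁻ q in Ioc (0:ℝ) 1, P Y q := lintegral_const_mul' _ _ (by finiteness)
    _ = 2 * A * ∫⁻ q in Ioc (0:ℝ) 1, ∫⁻ Y, P Y q := by
        rw [lintegral_lintegral_swap hPm.aemeasurable]
    _ = _ := by
        congr 1
        refine lintegral_congr fun q => ?_
        simp only [hP]
        rw [lintegral_add_left, lintegral_finsetSum, lintegral_finsetSum]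
        · congr 1
          · refine Finset.sum_congr rfl fun i _ => ?_
            rw [lintegral_sub_right_eq_self (fun Y => U.indicator _ Y), lintegral_indicator hU]
          · refine Finset.sum_congr rfl fun i _ => ?_
            rw [lintegral_add_right_eq_self (fun Y => U.indicator _ Y), lintegral_indicator hU]
        · intro j _; exact (m2 j).comp (measurable_id.prodMk measurable_const)
        · intro j _; exact (m1 j).comp (measurable_id.prodMk measurable_const)
        · exact Finset.measurable_fun_sum _ fun i _ =>
            (m1 i).comp (measurable_id.prodMk measurable_const)



/-- Local energy on a thickening at the scale of the step. -/
noncomputable def FF (g : ℝ → ℂ) (K : Set ℝ) (m : ℕ) (C W : ℝ) : ℝ≥0∞ :=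
  ∫⁻ Y in Metric.thickening (C * W) K, ‖tauIter W m g Y‖ₑ ^ 2

lemma measurable_FF (g : ℝ → ℂ) (hg : Measurable g) (K : Set ℝ) (m : ℕ) (C : ℝ) :
    Measurable (FF g K m C) := by
  have hset : MeasurableSet {p : ℝ × ℝ | p.2 ∈ Metric.thickening (C * p.1) K} := by
    have : {p : ℝ × ℝ | p.2 ∈ Metric.thickening (C * p.1) K} =
        {p : ℝ × ℝ | Metric.infEDist p.2 K < ENNReal.ofReal (C * p.1)} := by
      ext p; exact Metric.mem_thickening_iff_infEDist_lt
    rw [this]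
    exact measurableSet_lt (measurable_infEDist.comp measurable_snd)
      ((measurable_fst.const_mul C).ennreal_ofReal)
  have e : FF g K m C = fun W => ∫⁻ Y, ({p : ℝ × ℝ | p.2 ∈ Metric.thickening (C * p.1) K}).indicator
      (fun p => ‖tauIter p.1 m g p.2‖ₑ ^ 2) (W, Y) := by
    funext W
    rw [FF, ← lintegral_indicator Metric.isOpen_thickening.measurableSet]
    rfl
  rw [e]
  apply Measurable.lintegral_prod_right'
  exact (((measurable_tauIter m hg measurable_fst measurable_snd).enorm).pow_const 2).indicator hset

lemma measurable_psi (g : ℝ → ℂ) (hg : Measurable g) (k : ℕ) (U : Set ℝ) :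
    Measurable (fun u => ∫⁻ t in U, ‖tauIter u k g t‖ₑ ^ 2) := by
  apply Measurable.lintegral_prod_right' (f := fun p : ℝ × ℝ => ‖tauIter p.1 k g p.2‖ₑ ^ 2)
  exact ((measurable_tauIter k hg measurable_fst measurable_snd).enorm).pow_const 2

lemma B0_fin (k : ℕ) (hk : 0 < k) (g : ℝ → ℂ) (hg : Measurable g)
    (C δ η s : ℝ) (hC : 0 ≤ C) (hs : 0 < s) (hη1 : (k + 1) * η ≤ 1) (hηδ : (C + k) * η ≤ δ)
    (U : Set ℝ) (hU : MeasurableSet U) (K : Set ℝ)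
    (hK : ∀ x ∈ K, ∀ ρ, 0 < ρ → ρ ≤ δ → volume (Metric.closedBall x ρ \ U) ≤
      ENNReal.ofReal (1 / (2 * k * (C + k)) * ρ))
    (H : ∫⁻ u in Ioc (0:ℝ) 1, (∫⁻ t in U, ‖tauIter u k g t‖ₑ ^ 2) * ENNReal.ofReal (u ^ (-1 - s)) < ⊤) :
    ∫⁻ W in Ioo 0 η, FF g K k C W * ENNReal.ofReal (W ^ (-1 - s)) < ⊤ := by
  obtain ⟨A, hA, hB⟩ := B0_int k hk
  set ψ : ℝ → ℝ≥0∞ := fun u => ∫⁻ t in U, ‖tauIter u k g t‖ₑ ^ 2 with hψ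
  have hψm : Measurable ψ := measurable_psi g hg k U
  set H0 := ∫⁻ u in Ioc (0:ℝ) 1, ψ u * ENNReal.ofReal (u ^ (-1 - s)) with hH0
  have hk' : (0:ℝ) < k := by exact_mod_cast hk
  set wt : ℝ → ℝ≥0∞ := fun W => ENNReal.ofReal (W ^ (-1 - s)) with hwt
  have hwtm : Measurable wt := by fun_prop
  have sc : ∀ a : ℝ, 0 < a → a ≤ k + 1 → ∫⁻ W in Ioo 0 η, ψ (a * W) * wt W ≤
      ENNReal.ofReal ((k + 1 : ℝ) ^ s) * H0 := by
    intro a ha hak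
    refine (scale_le s a ha (Ioo 0 η) (Ioc 0 1) measurableSet_Ioo measurableSet_Ioc
      (fun x hx => hx.1) ?_ ψ).trans ?_
    · intro h hh
      refine ⟨mul_pos ha hh.1, ?_⟩
      nlinarith [hh.1, hh.2]
    · gcongr
  have hle : ∫⁻ W in Ioo 0 η, FF g K k C W * wt W ≤ A * ∫⁻ q in Ioc (0:ℝ) 1,
      ((∑ i ∈ Finset.range (k + 1), ∫⁻ W in Ioo 0 η, ψ ((q + i) * W) * wt W) +
        ∑ j ∈ Finset.Icc 2 k, ∫⁻ W in Ioo 0 η, ψ (j * W) * wt W) := by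
    calc _ ≤ ∫⁻ W in Ioo 0 η, A * ∫⁻ q in Ioc (0:ℝ) 1,
          ((∑ i ∈ Finset.range (k + 1), ψ ((q + i) * W) * wt W) +
            ∑ j ∈ Finset.Icc 2 k, ψ (j * W) * wt W) := by
          refine setLIntegral_mono' measurableSet_Ioo fun W hW => ?_
          have := hB g hg C δ W hC hW.1 (by nlinarith [hW.2]) U hU K hK
          refine (mul_le_mul_left this _).trans (le_of_eq ?_)
          rw [mul_assoc, ← lintegral_mul_const' _ _ ENNReal.ofReal_ne_top]
          simp only [add_mul, Finset.sum_mul, hψ, hwt]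
      _ = A * ∫⁻ W in Ioo 0 η, ∫⁻ q in Ioc (0:ℝ) 1,
          ((∑ i ∈ Finset.range (k + 1), ψ ((q + i) * W) * wt W) +
            ∑ j ∈ Finset.Icc 2 k, ψ (j * W) * wt W) := lintegral_const_mul' _ _ hA.ne
      _ = A * ∫⁻ q in Ioc (0:ℝ) 1, ∫⁻ W in Ioo 0 η,
          ((∑ i ∈ Finset.range (k + 1), ψ ((q + i) * W) * wt W) +
            ∑ j ∈ Finset.Icc 2 k, ψ (j * W) * wt W) := by
          rw [lintegral_lintegral_swap]
          apply Measurable.aemeasurable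
          simp only [Function.uncurry_def]
          fun_prop
      _ = _ := by
          congr 1
          refine lintegral_congr fun q => ?_
          rw [lintegral_add_left (by fun_prop), lintegral_finsetSum _ (by fun_prop),
            lintegral_finsetSum _ (by fun_prop)]
  refine hle.trans_lt (ENNReal.mul_lt_top hA ?_)
  calc _ ≤ ∫⁻ q in Ioc (0:ℝ) 1,
      ((∑ i ∈ Finset.range (k + 1), ENNReal.ofReal ((k + 1 : ℝ) ^ s) * H0) +
        ∑ j ∈ Finset.Icc 2 k, ENNReal.ofReal ((k + 1 : ℝ) ^ s) * H0) := by
        refine setLIntegral_mono' measurableSet_Ioc fun q hq => ?_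
        refine add_le_add (Finset.sum_le_sum fun i hi => ?_) (Finset.sum_le_sum fun i hi => ?_)
        · have : (i:ℝ) ≤ k := by exact_mod_cast Nat.lt_succ_iff.1 (Finset.mem_range.1 hi)
          apply sc
          · have := hq.1; positivity
          · linarith [hq.2]
        · have h1 := Finset.mem_Icc.1 hi
          have h2 : (i:ℝ) ≤ k := by exact_mod_cast h1.2
          apply sc
          · exact_mod_cast (by omega : 0 < i)
          · linarith
    _ < ⊤ := by
        have := H.ne
        simp only [Finset.sum_const, nsmul_eq_mul, setLIntegral_const, Real.volume_Ioc]
        finiteness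

lemma B1_pointwise (m : ℕ) (s : ℝ) (hs : s < 2 * m) : ∃ θ : ℝ, ∃ A : ℝ≥0∞, 0 ≤ θ ∧ θ * 2 ^ s < 1 ∧ A < ⊤ ∧
    ∀ (g : ℝ → ℂ) (W Y : ℝ), ‖tauIter W m g Y‖ₑ ^ 2 ≤ ENNReal.ofReal θ * ‖tauIter (2 * W) m g Y‖ₑ ^ 2 +
      A * ∑ l ∈ Finset.range m, ‖tauIter W (m + 1) g (Y + l * W)‖ₑ ^ 2 := by
  obtain ⟨C, hC, hM⟩ := marchaud m
  have hlt : (4:ℝ)⁻¹ ^ m * 2 ^ s < 1 := by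
    have : (4:ℝ)⁻¹ ^ m * 2 ^ s = 2 ^ (s - 2 * m) := by
      rw [Real.rpow_sub (by norm_num), Real.rpow_mul (by norm_num)]
      norm_num [inv_pow]
      field_simp
      rw [← mul_pow]
      norm_num
    rw [this]
    exact Real.rpow_lt_one_of_one_lt_of_neg (by norm_num) (by linarith)
  set x := (4:ℝ)⁻¹ ^ m * 2 ^ s with hx
  have hx0 : 0 < x := by positivity
  -- choose kappa
  obtain ⟨κ, hκ, hκx⟩ : ∃ κ : ℝ, 0 < κ ∧ (1 + κ) * x < 1 := by
    refine ⟨(1 - x) / (2 * x), by apply div_pos <;> linarith, ?_⟩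
    have : (1 + (1 - x) / (2 * x)) * x = (1 + x) / 2 := by field_simp; ring
    rw [this]; linarith
  refine ⟨(1 + κ) * (4:ℝ)⁻¹ ^ m, ENNReal.ofReal ((1 + κ⁻¹) * (C ^ 2 * m)), by positivity,
    by rw [mul_assoc]; exact hκx, by finiteness, fun g W Y => ?_⟩
  set d := tauIter W m g Y
  set e := tauIter (2 * W) m g Y
  set S := ∑ l ∈ Finset.range m, ‖tauIter W (m + 1) g (Y + l * W)‖ with hS
  have hS0 : 0 ≤ S := by positivity
  have h1 : 2 ^ m * ‖d‖ ≤ ‖e‖ + C * S := by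
    have h2 := hM W g Y
    have h3 : 2 ^ m * ‖d‖ = ‖(2:ℂ) ^ m * d‖ := by simp
    rw [h3]
    calc ‖(2:ℂ) ^ m * d‖ = ‖e - (e - 2 ^ m * d)‖ := by congr 1; ring
      _ ≤ ‖e‖ + ‖e - 2 ^ m * d‖ := norm_sub_le _ _
      _ ≤ _ := by gcongr
  have h4 : S ^ 2 ≤ m * ∑ l ∈ Finset.range m, ‖tauIter W (m + 1) g (Y + l * W)‖ ^ 2 := by
    have := sq_sum_le_card_mul_sum_sq (s := Finset.range m)
      (f := fun l => ‖tauIter W (m + 1) g (Y + l * W)‖)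
    simpa using this
  set Q := ∑ l ∈ Finset.range m, ‖tauIter W (m + 1) g (Y + l * W)‖ ^ 2 with hQ
  have hQ0 : 0 ≤ Q := by positivity
  have h5 : (‖e‖ + C * S) ^ 2 ≤ (1 + κ) * ‖e‖ ^ 2 + (1 + κ⁻¹) * (C * S) ^ 2 := by
    have h6 : 2 * ‖e‖ * (C * S) ≤ κ * ‖e‖ ^ 2 + κ⁻¹ * (C * S) ^ 2 := by
      have h7 : 0 ≤ κ⁻¹ * (κ * ‖e‖ - C * S) ^ 2 := by positivity
      have h8 : κ⁻¹ * (κ * ‖e‖ - C * S) ^ 2 = κ * ‖e‖ ^ 2 + κ⁻¹ * (C * S) ^ 2 - 2 * ‖e‖ * (C * S) := by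
        field_simp; ring
      linarith
    nlinarith
  have h9 : ‖d‖ ^ 2 ≤ (1 + κ) * (4:ℝ)⁻¹ ^ m * ‖e‖ ^ 2 + (1 + κ⁻¹) * (C ^ 2 * m) * Q := by
    have h10 : (4:ℝ) ^ m * ‖d‖ ^ 2 ≤ (‖e‖ + C * S) ^ 2 := by
      have : (4:ℝ) ^ m * ‖d‖ ^ 2 = (2 ^ m * ‖d‖) ^ 2 := by
        rw [mul_pow, ← pow_mul, mul_comm m 2, pow_mul]; norm_num
      rw [this]
      exact pow_le_pow_left₀ (by positivity) h1 2
    have h11 : (1 + κ⁻¹) * (C * S) ^ 2 ≤ (1 + κ⁻¹) * (C ^ 2 * m) * Q := by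
      rw [mul_pow, mul_assoc, mul_assoc]
      gcongr
    have h12 : (4:ℝ)⁻¹ ^ m * (4 ^ m * ‖d‖ ^ 2) = ‖d‖ ^ 2 := by
      rw [← mul_assoc, ← mul_pow]; norm_num
    have h13 : (4:ℝ)⁻¹ ^ m ≤ 1 := pow_le_one₀ (by norm_num) (by norm_num)
    have h14 : (0:ℝ) < (4:ℝ)⁻¹ ^ m := by positivity
    have h15 : 0 ≤ (1 + κ⁻¹) * (C ^ 2 * m) * Q := by positivity
    calc ‖d‖ ^ 2 = (4:ℝ)⁻¹ ^ m * (4 ^ m * ‖d‖ ^ 2) := h12.symm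
      _ ≤ (4:ℝ)⁻¹ ^ m * ((1 + κ) * ‖e‖ ^ 2 + (1 + κ⁻¹) * (C ^ 2 * m) * Q) := by
          gcongr; linarith
      _ ≤ _ := by nlinarith
  have conv : ∀ z : ℂ, ‖z‖ₑ ^ 2 = ENNReal.ofReal (‖z‖ ^ 2) := by
    intro z; rw [← ofReal_norm, ENNReal.ofReal_pow (norm_nonneg _)]
  simp only [conv]
  rw [← ENNReal.ofReal_mul (by positivity), ← ENNReal.ofReal_sum_of_nonneg (by intros; positivity),
    ← ENNReal.ofReal_mul (by positivity), ← ENNReal.ofReal_add (by positivity) (by positivity)]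
  exact ENNReal.ofReal_le_ofReal h9

lemma FF_bound (g : ℝ → ℂ) (hg : Measurable g)
    (hloc : ∀ a b : ℝ, (∫⁻ t in Set.Icc a b, (‖g t‖₊ : ℝ≥0∞) ^ 2) < ⊤) (K : Set ℝ) (R : ℝ)
    (hK : K ⊆ Icc (-R) R) (m : ℕ) (C : ℝ) (hC : 0 ≤ C) :
    ∃ M : ℝ≥0∞, M < ⊤ ∧ ∀ W, 0 < W → W ≤ 1 → FF g K m C W ≤ M := by
  obtain ⟨M, hM, h⟩ := loc_bound g hg hloc m (R + C)
  refine ⟨M, hM, fun W h0 h1 => ?_⟩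
  refine le_trans (lintegral_mono_set ?_) (h W (by rw [abs_of_pos h0]; exact h1))
  intro Y hY
  obtain ⟨x, hx, hd⟩ := Metric.mem_thickening_iff.1 hY
  rw [Real.dist_eq] at hd
  have h2 := abs_lt.1 hd
  have h3 := hK hx
  have h4 : C * W ≤ C := by nlinarith
  constructor <;> linarith [h3.1, h3.2, h2.1, h2.2]

lemma FF_step (m : ℕ) (s : ℝ) (hs : s < 2 * m) : ∃ θ : ℝ, ∃ A : ℝ≥0∞, 0 ≤ θ ∧ θ * 2 ^ s < 1 ∧ A < ⊤ ∧
    ∀ (g : ℝ → ℂ) (_ : Measurable g) (K : Set ℝ) (C : ℝ) (_ : 0 ≤ C) (W : ℝ) (_ : 0 < W),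
      FF g K m C W ≤ ENNReal.ofReal θ * FF g K m C (2 * W) + A * FF g K (m + 1) (C + m) W := by
  obtain ⟨θ, A, h1, h2, h3, h4⟩ := B1_pointwise m s hs
  refine ⟨θ, A * m, h1, h2, by finiteness, fun g hg K C hC W hW => ?_⟩
  have ms : ∀ l : ℕ, Measurable (fun Y => ‖tauIter W (m + 1) g (Y + l * W)‖ₑ ^ 2) := fun l =>
    ((measurable_tauIter (m + 1) hg measurable_const (by fun_prop)).enorm).pow_const 2
  calc FF g K m C W ≤ ∫⁻ Y in Metric.thickening (C * W) K,
        (ENNReal.ofReal θ * ‖tauIter (2 * W) m g Y‖ₑ ^ 2 +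
          A * ∑ l ∈ Finset.range m, ‖tauIter W (m + 1) g (Y + l * W)‖ₑ ^ 2) :=
        lintegral_mono fun Y => h4 g W Y
    _ = ENNReal.ofReal θ * (∫⁻ Y in Metric.thickening (C * W) K, ‖tauIter (2 * W) m g Y‖ₑ ^ 2) +
        A * ∑ l ∈ Finset.range m, ∫⁻ Y in Metric.thickening (C * W) K,
          ‖tauIter W (m + 1) g (Y + l * W)‖ₑ ^ 2 := by
        rw [lintegral_add_right _ ((Finset.measurable_fun_sum _ fun l _ => ms l).const_mul A),
          lintegral_const_mul' _ _ (by finiteness), lintegral_const_mul' _ _ h3.ne,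
          lintegral_finsetSum _ fun l _ => ms l]
    _ ≤ ENNReal.ofReal θ * FF g K m C (2 * W) +
        A * ∑ l ∈ Finset.range m, FF g K (m + 1) (C + m) W := by
        refine add_le_add (mul_le_mul_right (lintegral_mono_set ?_) _)
          (mul_le_mul_right (Finset.sum_le_sum fun l hl => ?_) _)
        · apply Metric.thickening_mono; nlinarith [mul_nonneg hC hW.le]
        · apply lint_shift (fun Y => ‖tauIter W (m + 1) g Y‖ₑ ^ 2) (l * W) _ _
            Metric.isOpen_thickening.measurableSet Metric.isOpen_thickening.measurableSet
          intro t ht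
          obtain ⟨x, hx, hd⟩ := Metric.mem_thickening_iff.1 ht
          refine Metric.mem_thickening_iff.2 ⟨x, hx, ?_⟩
          rw [Real.dist_eq] at hd ⊢
          have hl' : (l:ℝ) ≤ m := by exact_mod_cast (Finset.mem_range.1 hl).le
          have hl0 : (0:ℝ) ≤ l := Nat.cast_nonneg l
          calc |t + l * W - x| = |(t - x) + l * W| := by ring_nf
            _ ≤ |t - x| + |l * W| := abs_add_le _ _
            _ < C * W + m * W := by
              rw [abs_of_nonneg (mul_nonneg hl0 hW.le)]
              have := mul_le_mul_of_nonneg_right hl' hW.le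
              linarith
            _ = _ := by ring
    _ = _ := by
        rw [Finset.sum_const, Finset.card_range, nsmul_eq_mul]; ring

lemma wt_piece (F : ℝ → ℝ≥0∞) (M : ℝ≥0∞) (hM : M < ⊤) (hF : ∀ W, 0 < W → W ≤ 1 → F W ≤ M)
    (s x : ℝ) (hx : 0 < x) (hs : 0 < s) (S : Set ℝ) (hS : MeasurableSet S) (hSx : S ⊆ Icc x 1) :
    ∫⁻ W in S, F W * ENNReal.ofReal (W ^ (-1 - s)) < ⊤ := by
  calc _ ≤ ∫⁻ W in S, M * ENNReal.ofReal (x ^ (-1 - s)) := by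
        refine setLIntegral_mono' hS fun W hW => ?_
        have h := hSx hW
        refine mul_le_mul' (hF W (by linarith [h.1]) h.2) (ENNReal.ofReal_le_ofReal ?_)
        exact Real.rpow_le_rpow_of_nonpos hx h.1 (by linarith)
    _ ≤ ∫⁻ W in Icc x 1, M * ENNReal.ofReal (x ^ (-1 - s)) := lintegral_mono_set hSx
    _ < ⊤ := by
        rw [setLIntegral_const, Real.volume_Icc]; finiteness

lemma B1_fin (g : ℝ → ℂ) (hg : Measurable g)
    (hloc : ∀ a b : ℝ, (∫⁻ t in Set.Icc a b, (‖g t‖₊ : ℝ≥0∞) ^ 2) < ⊤) (K : Set ℝ) (R : ℝ)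
    (hK : K ⊆ Icc (-R) R) (m : ℕ) (C s η : ℝ) (hC : 0 ≤ C) (hs0 : 0 < s) (hs : s < 2 * m)
    (hη0 : 0 < η) (hη : 2 * η ≤ 1)
    (H : ∫⁻ W in Ioo 0 η, FF g K (m + 1) (C + m) W * ENNReal.ofReal (W ^ (-1 - s)) < ⊤) :
    ∫⁻ W in Ioo 0 η, FF g K m C W * ENNReal.ofReal (W ^ (-1 - s)) < ⊤ := by
  obtain ⟨θ, A, hθ0, hθ1, hA, hstep⟩ := FF_step m s hs
  obtain ⟨M, hM, hFM⟩ := FF_bound g hg hloc K R hK m C hC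
  set wt : ℝ → ℝ≥0∞ := fun W => ENNReal.ofReal (W ^ (-1 - s)) with hwt
  have hwtm : Measurable wt := by fun_prop
  have hFm := measurable_FF g hg K m C
  have hFm1 := measurable_FF g hg K (m + 1) (C + m)
  set P := ∫⁻ W in Ico η (2 * η), FF g K m C W * wt W with hP
  have hPfin : P < ⊤ := wt_piece _ M hM hFM s η hη0 hs0 _ measurableSet_Ico
    (fun W hW => ⟨hW.1, by linarith [hW.2]⟩)
  set Q := ∫⁻ W in Ioo 0 η, FF g K (m + 1) (C + m) W * wt W with hQ
  set B := ENNReal.ofReal (θ * 2 ^ s) * P + A * Q with hB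
  have hBfin : B < ⊤ := by
    have := hPfin.ne
    have := H.ne
    finiteness
  have key : ∀ ε, 0 < ε → ENNReal.ofReal (1 - θ * 2 ^ s) * ∫⁻ W in Ioo ε η, FF g K m C W * wt W ≤ B := by
    intro ε hε
    set X := ∫⁻ W in Ioo ε η, FF g K m C W * wt W with hX
    have hXfin : X < ⊤ := wt_piece _ M hM hFM s ε hε hs0 _ measurableSet_Ioo
      (fun W hW => ⟨hW.1.le, by linarith [hW.2]⟩)
    have h1 : X ≤ ENNReal.ofReal θ * (∫⁻ W in Ioo ε η, FF g K m C (2 * W) * wt W) + A * Q := by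
      calc X ≤ ∫⁻ W in Ioo ε η, (ENNReal.ofReal θ * (FF g K m C (2 * W) * wt W) +
            A * (FF g K (m + 1) (C + m) W * wt W)) := by
            refine setLIntegral_mono' measurableSet_Ioo fun W hW => ?_
            refine (mul_le_mul_left (hstep g hg K C hC W (hε.trans hW.1)) _).trans (le_of_eq ?_)
            ring
        _ = ENNReal.ofReal θ * (∫⁻ W in Ioo ε η, FF g K m C (2 * W) * wt W) +
            A * ∫⁻ W in Ioo ε η, (FF g K (m + 1) (C + m) W * wt W) := by
            rw [lintegral_add_right _ (by fun_prop), lintegral_const_mul' _ _ (by finiteness),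
              lintegral_const_mul' _ _ hA.ne]
        _ ≤ _ := by
            gcongr
            exact lintegral_mono_set (Ioo_subset_Ioo_left hε.le)
    have h2 : ∫⁻ W in Ioo ε η, FF g K m C (2 * W) * wt W ≤ ENNReal.ofReal (2 ^ s) * (X + P) := by
      refine (scale_le s 2 (by norm_num) (Ioo ε η) (Ioo ε η ∪ Ico η (2 * η)) measurableSet_Ioo
        (measurableSet_Ioo.union measurableSet_Ico) (fun x hx => hε.trans hx.1) ?_ _).trans ?_
      · intro h hh
        rcases lt_or_ge (2 * h) η with h3 | h3
        · left; exact ⟨by linarith [hh.1], h3⟩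
        · right; exact ⟨h3, by linarith [hh.2]⟩
      · exact mul_le_mul_right (lintegral_union_le _ _ _) _
    have h3 : X ≤ ENNReal.ofReal (θ * 2 ^ s) * X + B := by
      refine h1.trans ?_
      rw [hB, ← add_assoc, ← mul_add]
      refine add_le_add ?_ le_rfl
      rw [ENNReal.ofReal_mul hθ0, mul_assoc]
      exact mul_le_mul_right h2 _
    have h4 : X = ENNReal.ofReal (θ * 2 ^ s) * X + ENNReal.ofReal (1 - θ * 2 ^ s) * X := by
      rw [← add_mul, ← ENNReal.ofReal_add (by positivity) (by linarith)]
      simp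
    rw [h4] at h3
    have h5 : ENNReal.ofReal (θ * 2 ^ s) * X ≠ ⊤ := by have := hXfin.ne; finiteness
    rw [← h4] at h3
    nth_rewrite 1 [h4] at h3
    exact (ENNReal.add_le_add_iff_left h5).1 h3
  have hsup : ∫⁻ W in Ioo 0 η, FF g K m C W * wt W =
      ⨆ n : ℕ, ∫⁻ W in Ioo (1 / ((n:ℝ) + 1)) η, FF g K m C W * wt W := by
    rw [← setLIntegral_iUnion_of_directed]
    · congr 2
      ext x
      simp only [mem_iUnion, mem_Ioo]
      constructor
      · rintro ⟨h1, h2⟩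
        obtain ⟨n, hn⟩ := exists_nat_one_div_lt h1
        exact ⟨n, hn, h2⟩
      · rintro ⟨n, h1, h2⟩
        exact ⟨lt_trans (by positivity) h1, h2⟩
    · apply directed_of_isDirected_le
      intro a b hab
      apply Ioo_subset_Ioo_left
      exact Nat.one_div_le_one_div hab
  have hfin2 : ENNReal.ofReal (1 - θ * 2 ^ s) * ∫⁻ W in Ioo 0 η, FF g K m C W * wt W ≤ B := by
    rw [hsup, ENNReal.mul_iSup]
    exact iSup_le fun n => key _ (by positivity)
  by_contra hcon
  rw [not_lt, top_le_iff] at hcon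
  rw [hcon, ENNReal.mul_top (by simpa using hθ1)] at hfin2
  exact absurd hfin2 (not_le.2 hBfin)



lemma B1_iter (k : ℕ) (g : ℝ → ℂ) (hg : Measurable g)
    (hloc : ∀ a b : ℝ, (∫⁻ t in Set.Icc a b, (‖g t‖₊ : ℝ≥0∞) ^ 2) < ⊤) (K : Set ℝ) (R : ℝ)
    (hK : K ⊆ Icc (-R) R) (s η : ℝ) (hs0 : 0 < s) (hη0 : 0 < η) (hη : 2 * η ≤ 1) (n : ℕ) :
    ∀ (m : ℕ) (C : ℝ), m + n = k → 0 ≤ C → s < 2 * m →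
    ∫⁻ W in Ioo 0 η, FF g K k (C + n * k) W * ENNReal.ofReal (W ^ (-1 - s)) < ⊤ →
    ∫⁻ W in Ioo 0 η, FF g K m C W * ENNReal.ofReal (W ^ (-1 - s)) < ⊤ := by
  induction n with
  | zero =>
    intro m C h1 _ _ h
    rw [add_zero] at h1
    subst h1
    simpa using h
  | succ n ih =>
    intro m C h1 hC hs h
    have hm0 : (0:ℝ) ≤ m := Nat.cast_nonneg m
    have hmk : (m:ℝ) ≤ k := by exact_mod_cast (by omega : m ≤ k)
    apply B1_fin g hg hloc K R hK m C s η hC hs0 hs hη0 hη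
    apply ih (m + 1) (C + m) (by omega) (by positivity) (by push_cast; linarith)
    refine lt_of_le_of_lt ?_ h
    refine setLIntegral_mono' measurableSet_Ioo fun W hW => ?_
    refine mul_le_mul_left (lintegral_mono_set (Metric.thickening_mono ?_ _)) _
    apply mul_le_mul_of_nonneg_right _ hW.1.le
    push_cast
    linarith

lemma density (U : Set ℝ) (hU : MeasurableSet U) (c : ℝ) (hc : 0 < c) :
    ∀ᵐ t : ℝ, t ∈ U → ∃ N : ℕ, ∀ ρ, 0 < ρ → ρ ≤ 1 / ((N:ℝ) + 1) →
      volume (Metric.closedBall t ρ \ U) ≤ ENNReal.ofReal (c * ρ) := by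
  filter_upwards [Besicovitch.ae_tendsto_measure_inter_div_of_measurableSet volume hU.compl] with t ht htU
  rw [indicator_of_notMem (by simpa using htU)] at ht
  have h1 : ∀ᶠ ρ in nhdsWithin (0:ℝ) (Ioi 0), volume (Uᶜ ∩ Metric.closedBall t ρ) /
      volume (Metric.closedBall t ρ) < ENNReal.ofReal (c / 2) :=
    ht.eventually_lt_const (by simpa using hc)
  rw [eventually_nhdsWithin_iff, Metric.eventually_nhds_iff] at h1
  obtain ⟨ε, hε, h1⟩ := h1
  obtain ⟨N, hN⟩ := exists_nat_one_div_lt hε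
  refine ⟨N, fun ρ h0 hρ => ?_⟩
  have h2 := (h1 (y := ρ) (by rw [Real.dist_eq, sub_zero, abs_of_pos h0]; linarith) h0).le
  rw [Real.volume_closedBall, ENNReal.div_le_iff (by simpa using h0) ENNReal.ofReal_ne_top,
    ← ENNReal.ofReal_mul (by positivity)] at h2
  rw [sdiff_eq, inter_comm]
  refine h2.trans (le_of_eq ?_)
  congr 1; ring

lemma apriori (k m : ℕ) (hm : 0 < m) (hmk : m ≤ k) (g : ℝ → ℂ) (hg : Measurable g)
    (hloc : ∀ a b : ℝ, (∫⁻ t in Set.Icc a b, (‖g t‖₊ : ℝ≥0∞) ^ 2) < ⊤)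
    (U : Set ℝ) (hU : MeasurableSet U) (R : ℝ) (hUR : U ⊆ Icc (-R) R) (s : ℝ) (hs0 : 0 < s)
    (hs : s < 2 * m)
    (H : ∫⁻ u in Ioc (0:ℝ) 1, (∫⁻ t in U, ‖tauIter u k g t‖ₑ ^ 2) * ENNReal.ofReal (u ^ (-1 - s)) < ⊤) :
    ∀ᵐ t : ℝ, t ∈ U → ∃ η, 0 < η ∧
      ∫⁻ W in Ioo 0 η, ‖tauIter W m g t‖ₑ ^ 2 * ENNReal.ofReal (W ^ (-1 - s)) < ⊤ := by
  have hk : 0 < k := by omega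
  have hk' : (0:ℝ) < k := by exact_mod_cast hk
  set C : ℝ := 1 + (k - m : ℕ) * k with hC
  have hC0 : 0 < C := by positivity
  set c : ℝ := 1 / (2 * k * (C + k)) with hc
  have hc0 : 0 < c := by positivity
  set K : ℕ → Set ℝ := fun N => {t | t ∈ U ∧ ∀ ρ, 0 < ρ → ρ ≤ 1 / ((N:ℝ) + 1) →
      volume (Metric.closedBall t ρ \ U) ≤ ENNReal.ofReal (c * ρ)} with hK
  have main : ∀ N, ∀ᵐ t : ℝ, t ∈ K N → ∃ η, 0 < η ∧
      ∫⁻ W in Ioo 0 η, ‖tauIter W m g t‖ₑ ^ 2 * ENNReal.ofReal (W ^ (-1 - s)) < ⊤ := by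
    intro N
    set δ : ℝ := 1 / ((N:ℝ) + 1) with hδ
    have hδ0 : 0 < δ := by positivity
    set η : ℝ := min (1 / (k + 1)) (min (1 / 2) (δ / (C + k))) with hη
    have hη0 : 0 < η := by positivity
    have e1 : (k + 1) * η ≤ 1 := by
      have : η ≤ 1 / (k + 1) := min_le_left _ _
      rw [le_div_iff₀ (by positivity)] at this; linarith
    have e2 : 2 * η ≤ 1 := by
      have : η ≤ 1 / 2 := (min_le_right _ _).trans (min_le_left _ _)
      linarith
    have e3 : (C + k) * η ≤ δ := by
      have : η ≤ δ / (C + k) := (min_le_right _ _).trans (min_le_right _ _)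
      rw [le_div_iff₀ (by positivity)] at this; linarith
    have hKR : K N ⊆ Icc (-R) R := fun t ht => hUR ht.1
    have hΦk := B0_fin k hk g hg C δ η s hC0.le hs0 e1 e3 U hU (K N) (fun x hx => hx.2) H
    have hΦm := B1_iter k g hg hloc (K N) R hKR s η hs0 hη0 e2 (k - m) m 1 (by omega) zero_le_one hs hΦk
    have hsw : ∫⁻ t in K N, ∫⁻ W in Ioo 0 η, ‖tauIter W m g t‖ₑ ^ 2 * ENNReal.ofReal (W ^ (-1 - s)) < ⊤ := by
      rw [lintegral_lintegral_swap]
      · refine lt_of_le_of_lt ?_ hΦm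
        refine setLIntegral_mono' measurableSet_Ioo fun W hW => ?_
        rw [lintegral_mul_const' _ _ ENNReal.ofReal_ne_top]
        refine mul_le_mul_left (lintegral_mono_set ?_) _
        exact Metric.self_subset_thickening (by rw [one_mul]; exact hW.1) _
      · apply Measurable.aemeasurable
        simp only [Function.uncurry_def]
        have := ((measurable_tauIter m hg (measurable_snd (α := ℝ) (β := ℝ)) measurable_fst).enorm).pow_const 2
        fun_prop
    have hae := ae_lt_top' (by
      apply Measurable.aemeasurable
      apply Measurable.lintegral_prod_right' (f := fun p : ℝ × ℝ =>
        ‖tauIter p.2 m g p.1‖ₑ ^ 2 * ENNReal.ofReal (p.2 ^ (-1 - s)))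
      have := ((measurable_tauIter m hg (measurable_snd (α := ℝ) (β := ℝ)) measurable_fst).enorm).pow_const 2
      fun_prop) hsw.ne
    have := ae_imp_of_ae_restrict hae
    filter_upwards [this] with t ht htK
    exact ⟨η, hη0, ht htK⟩
  filter_upwards [ae_all_iff.2 main, density U hU c hc0] with t h1 h2 htU
  obtain ⟨N, hN⟩ := h2 htU
  exact h1 N ⟨htU, hN⟩

set_option maxHeartbeats 1000000 in
lemma pointwise_core (k m : ℕ) (hm : 0 < m) (hmk : m ≤ k) (β s : ℝ) (hβs : β < s) (hs0 : 0 < s) :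
    ∃ C : ℝ≥0∞, C < ⊤ ∧ ∀ (g : ℝ → ℂ) (_ : Measurable g) (t : ℝ)
      (_ : ∃ η, 0 < η ∧
        ∫⁻ W in Ioo 0 η, ‖tauIter W m g t‖ₑ ^ 2 * ENNReal.ofReal (W ^ (-1 - s)) < ⊤)
      (_ : ∫⁻ h in Ioc (0:ℝ) 1, ‖tauIter h m g t‖ₑ ^ 2 < ⊤),
      ∫⁻ h in Ioc (0:ℝ) 1, ‖tauIter h m g t‖ₑ ^ 2 * ENNReal.ofReal (h ^ (-1 - β)) ≤
        C * ((∫⁻ h in Ioc (0:ℝ) 1, ‖tauIter h k g t‖ₑ ^ 2 * ENNReal.ofReal (h ^ (-1 - s))) +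
          ∫⁻ h in Ioc (0:ℝ) 1, ‖tauIter h m g t‖ₑ ^ 2) := by
  have hk : 0 < k := by omega
  have hk' : (0:ℝ) < k := by exact_mod_cast hk
  have hk1 : (1:ℝ) ≤ k := by exact_mod_cast hk
  have hc1 : cf k 1 ≠ 0 := by
    rw [cf_one]
    exact mul_ne_zero (pow_ne_zero _ (by norm_num)) (by exact_mod_cast hk.ne')
  obtain ⟨C0, hC0, hA⟩ := lemA k hk (cf k) hc1 β s hβs
  set A1 : ℝ≥0∞ := ((Finset.Icc 1 m).card : ℝ≥0∞) * ∑ i ∈ Finset.Icc 1 m, ‖cf m i‖ₑ ^ 2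
  set A2 : ℝ≥0∞ := ((Finset.Icc 1 k).card : ℝ≥0∞) * ∑ i ∈ Finset.Icc 1 k, ‖cf k i‖ₑ ^ 2
  have hA1 : A1 < ⊤ :=
    ENNReal.mul_lt_top (by finiteness) (ENNReal.sum_lt_top.2 fun i _ => by finiteness)
  have hA2 : A2 < ⊤ :=
    ENNReal.mul_lt_top (by finiteness) (ENNReal.sum_lt_top.2 fun i _ => by finiteness)
  set S1 : ℝ≥0∞ := ∑ i ∈ Finset.Icc 1 m, ENNReal.ofReal ((i:ℝ) ^ s)
  set S2 : ℝ≥0∞ := ∑ i ∈ Finset.Icc 1 k, ENNReal.ofReal ((i:ℝ) ^ s)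
  have hS1 : S1 < ⊤ := ENNReal.sum_lt_top.2 fun i _ => by finiteness
  have hS2 : S2 < ⊤ := ENNReal.sum_lt_top.2 fun i _ => by finiteness
  set B := ENNReal.ofReal ((1 / (k:ℝ)) ^ (-1 - s))
  have hB : B < ⊤ := ENNReal.ofReal_lt_top
  refine ⟨C0 * (A1 * S1 + A2 * S2 * B), by finiteness, fun g hg t hap hL2 => ?_⟩
  obtain ⟨η, hη0, hap⟩ := hap
  have hdm : ∀ n, Measurable (fun h => tauIter h n g t) := fun n =>
    measurable_tauIter n hg measurable_id measurable_const
  set Ik := ∫⁻ h in Ioc (0:ℝ) 1, ‖tauIter h k g t‖ₑ ^ 2 * ENNReal.ofReal (h ^ (-1 - s)) with hIk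
  set O := ∫⁻ h in Ioc (0:ℝ) 1, ‖tauIter h m g t‖ₑ ^ 2 with hO
  set T : ℝ → ℝ≥0∞ := fun ε =>
    ∫⁻ h in Ioo 0 (k * ε), ‖tauIter h m g t‖ₑ ^ 2 * ENNReal.ofReal (h ^ (-1 - s)) with hT
  set L : ℝ → ℝ≥0∞ := fun ε =>
    ∫⁻ h in Icc ε 1, ‖tauIter h m g t‖ₑ ^ 2 * ENNReal.ofReal (h ^ (-1 - β)) with hL
  have key : ∀ ε : ℝ, 0 < ε → ε ≤ 1 / k →
      L ε ≤ C0 * (A1 * S1 * Ik + A2 * S2 * T ε + A2 * S2 * B * O) := by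
    intro ε hε hεk
    have h1k : 1 / (k:ℝ) ≤ 1 := by rw [div_le_one hk']; exact hk1
    have h1k0 : 0 < 1 / (k:ℝ) := by positivity
    set w : ℝ → ℂ := (Icc ε 1).indicator (fun h => tauIter h m g t) with hw
    have hwm : Measurable w := (hdm m).indicator measurableSet_Icc
    have hw2 : ∀ h, ‖w h‖ₑ ^ 2 = (Icc ε 1).indicator (fun h => ‖tauIter h m g t‖ₑ ^ 2) h := by
      intro h
      by_cases hh : h ∈ Icc ε 1
      · simp [hw, hh]
      · simp [hw, hh]
    have hwle : ∀ h, ‖w h‖ₑ ^ 2 ≤ ‖tauIter h m g t‖ₑ ^ 2 := by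
      intro h; rw [hw2]; exact indicator_le_self _ _ _
    have hsub : Icc ε 1 ⊆ Ioc (0:ℝ) 1 := fun x hx => ⟨hε.trans_le hx.1, hx.2⟩
    have hsubI : Icc ε 1 ⊆ Ioi (0:ℝ) := fun x hx => hε.trans_le hx.1
    have h2 : ∫⁻ x, ‖w x‖ₑ ^ 2 < ⊤ := by
      simp only [hw2]
      rw [lintegral_indicator measurableSet_Icc]
      exact (lintegral_mono_set hsub).trans_lt hL2
    have h3 := hA w hwm ε hε (fun x hx => by simp [hw, hx]) h2
    have h4 : L ε ≤ ∫⁻ h in Ioi (0:ℝ), ‖w h‖ₑ ^ 2 * ENNReal.ofReal (h ^ (-1 - β)) := by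
      refine le_trans ?_ (lintegral_mono_set hsubI)
      refine setLIntegral_mono' measurableSet_Icc fun h hh => ?_
      rw [hw2, indicator_of_mem hh]
    refine h4.trans (h3.trans (mul_le_mul_right ?_ _))
    set v : ℝ → ℂ := fun h => ∑ l ∈ Finset.Icc 1 k, cf k l * w (l * h) with hv
    have hvm : Measurable v := by fun_prop
    have hvle : ∀ h, ‖v h‖ₑ ^ 2 ≤ A2 * ∑ l ∈ Finset.Icc 1 k, ‖w (l * h)‖ₑ ^ 2 := fun h =>
      enorm_lin_sq (Finset.Icc 1 k) (cf k) (fun l => w (l * h))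
    have hsplit : Ioi (0:ℝ) ⊆ (Icc ε (1 / k) ∪ Ioo 0 ε) ∪ Ioi (1 / (k:ℝ)) := by
      intro x hx
      rcases lt_or_ge x ε with h5 | h5
      · exact Or.inl (Or.inr ⟨hx, h5⟩)
      · rcases le_or_gt x (1 / k) with h6 | h6
        · exact Or.inl (Or.inl ⟨h5, h6⟩)
        · exact Or.inr h6
    have gen : ∀ S S' : Set ℝ, MeasurableSet S → MeasurableSet S' → S ⊆ Ioi 0 →
        (∀ l ∈ Finset.Icc 1 k, ∀ h ∈ S, (l:ℝ) * h ∈ S') →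
        ∫⁻ h in S, ‖v h‖ₑ ^ 2 * ENNReal.ofReal (h ^ (-1 - s)) ≤
          A2 * S2 * ∫⁻ h in S', ‖w h‖ₑ ^ 2 * ENNReal.ofReal (h ^ (-1 - s)) := by
      intro S S' hS hS' hS0 hSS
      calc _ ≤ ∫⁻ h in S, A2 * ∑ l ∈ Finset.Icc 1 k, ‖w (l * h)‖ₑ ^ 2 * ENNReal.ofReal (h ^ (-1 - s)) := by
            refine lintegral_mono fun h => ?_
            refine (mul_le_mul_left (hvle h) _).trans (le_of_eq ?_)
            rw [mul_assoc, Finset.sum_mul]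
        _ = A2 * ∑ l ∈ Finset.Icc 1 k, ∫⁻ h in S, ‖w (l * h)‖ₑ ^ 2 * ENNReal.ofReal (h ^ (-1 - s)) := by
            rw [lintegral_const_mul' _ _ hA2.ne, lintegral_finsetSum _ (by fun_prop)]
        _ ≤ A2 * ∑ l ∈ Finset.Icc 1 k, ENNReal.ofReal ((l:ℝ) ^ s) *
            ∫⁻ h in S', ‖w h‖ₑ ^ 2 * ENNReal.ofReal (h ^ (-1 - s)) := by
            refine mul_le_mul_right (Finset.sum_le_sum fun l hl => ?_) _
            have hl0 : (0:ℝ) < l := by exact_mod_cast (Finset.mem_Icc.1 hl).1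
            exact scale_le s l hl0 S S' hS hS' hS0 (hSS l hl) (fun h => ‖w h‖ₑ ^ 2)
        _ = _ := by rw [← Finset.sum_mul]; exact (mul_assoc A2 S2 _).symm
    have p2 : ∫⁻ h in Ioo 0 ε, ‖v h‖ₑ ^ 2 * ENNReal.ofReal (h ^ (-1 - s)) ≤ A2 * S2 * T ε := by
      refine (gen (Ioo 0 ε) (Ioo 0 (k * ε)) measurableSet_Ioo measurableSet_Ioo (fun x hx => hx.1)
        ?_).trans (mul_le_mul_right (lintegral_mono fun h => mul_le_mul_left (hwle h) _) _)
      intro l hl h hh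
      have hl0 : (0:ℝ) < l := by exact_mod_cast (Finset.mem_Icc.1 hl).1
      have hl1 : (l:ℝ) ≤ k := by exact_mod_cast (Finset.mem_Icc.1 hl).2
      refine ⟨mul_pos hl0 hh.1, ?_⟩
      nlinarith [hh.1, hh.2]
    have p3 : ∫⁻ h in Ioi (1 / (k:ℝ)), ‖v h‖ₑ ^ 2 * ENNReal.ofReal (h ^ (-1 - s)) ≤ A2 * S2 * B * O := by
      refine (gen (Ioi (1 / (k:ℝ))) (Ioi (1 / (k:ℝ))) measurableSet_Ioi measurableSet_Ioi
        (fun x hx => h1k0.trans hx) ?_).trans ?_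
      · intro l hl h hh
        have hl0 : (1:ℝ) ≤ l := by exact_mod_cast (Finset.mem_Icc.1 hl).1
        have hh' : 1 / (k:ℝ) < h := hh
        show 1 / (k:ℝ) < l * h
        nlinarith
      · rw [mul_assoc (A2 * S2)]
        refine mul_le_mul_right ?_ _
        calc _ ≤ ∫⁻ h in Ioi (1 / (k:ℝ)), B * ‖w h‖ₑ ^ 2 := by
              refine setLIntegral_mono' measurableSet_Ioi fun h hh => ?_
              rw [mul_comm]
              refine mul_le_mul_left (ENNReal.ofReal_le_ofReal ?_) _
              exact Real.rpow_le_rpow_of_nonpos h1k0 (le_of_lt hh) (by linarith)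
          _ ≤ ∫⁻ h, B * ‖w h‖ₑ ^ 2 := setLIntegral_le_lintegral _ _
          _ = B * ∫⁻ h, ‖w h‖ₑ ^ 2 := lintegral_const_mul' _ _ hB.ne
          _ ≤ _ := by
              refine mul_le_mul_right ?_ _
              simp only [hw2]
              rw [lintegral_indicator measurableSet_Icc]
              exact lintegral_mono_set hsub
    have p1 : ∫⁻ h in Icc ε (1 / k), ‖v h‖ₑ ^ 2 * ENNReal.ofReal (h ^ (-1 - s)) ≤ A1 * S1 * Ik := by
      have hveq : ∀ h ∈ Icc ε (1 / (k:ℝ)), v h = ∑ i ∈ Finset.Icc 1 m, cf m i * tauIter (i * h) k g t := by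
        intro h hh
        have e := two_grid k m h t 0 g
        have r1 : Finset.range (k + 1) = insert 0 (Finset.Icc 1 k) := by ext x; simp; omega
        have r2 : Finset.range (m + 1) = insert 0 (Finset.Icc 1 m) := by ext x; simp; omega
        rw [r1, r2, Finset.sum_insert (by simp), Finset.sum_insert (by simp)] at e
        simp only [Nat.cast_zero, zero_mul, mul_zero, add_zero, zero_add, tauIter_step_zero m hm,
          tauIter_step_zero k hk] at e
        rw [← e, hv]
        refine Finset.sum_congr rfl fun l hl => ?_
        have hl0 : (1:ℝ) ≤ l := by exact_mod_cast (Finset.mem_Icc.1 hl).1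
        have hl1 : (l:ℝ) ≤ k := by exact_mod_cast (Finset.mem_Icc.1 hl).2
        have hh0 : 0 < h := hε.trans_le hh.1
        have hhk : k * h ≤ 1 := by
          have := hh.2
          rw [le_div_iff₀ hk'] at this; linarith
        rw [hw, indicator_of_mem]
        constructor
        · nlinarith [hh.1]
        · nlinarith
      calc _ ≤ ∫⁻ h in Icc ε (1 / k), A1 * ∑ i ∈ Finset.Icc 1 m, ‖tauIter (i * h) k g t‖ₑ ^ 2 *
              ENNReal.ofReal (h ^ (-1 - s)) := by
            refine setLIntegral_mono' measurableSet_Icc fun h hh => ?_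
            rw [hveq h hh]
            refine (mul_le_mul_left (enorm_lin_sq (Finset.Icc 1 m) (cf m)
              (fun i => tauIter (i * h) k g t)) _).trans (le_of_eq ?_)
            rw [mul_assoc, Finset.sum_mul]
        _ = A1 * ∑ i ∈ Finset.Icc 1 m, ∫⁻ h in Icc ε (1 / k), ‖tauIter (i * h) k g t‖ₑ ^ 2 *
              ENNReal.ofReal (h ^ (-1 - s)) := by
            rw [lintegral_const_mul' _ _ hA1.ne, lintegral_finsetSum]
            intro i _
            have := (hdm k).comp (measurable_id.const_mul (i:ℝ))
            exact ((this.enorm).pow_const 2).mul (by fun_prop)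
        _ ≤ A1 * ∑ i ∈ Finset.Icc 1 m, ENNReal.ofReal ((i:ℝ) ^ s) * Ik := by
            refine mul_le_mul_right (Finset.sum_le_sum fun i hi => ?_) _
            have hi0 : (0:ℝ) < i := by exact_mod_cast (Finset.mem_Icc.1 hi).1
            have hi1 : (i:ℝ) ≤ k := by exact_mod_cast (Finset.mem_Icc.1 hi).2.trans hmk
            refine scale_le s i hi0 _ _ measurableSet_Icc measurableSet_Ioc
              (fun x hx => hε.trans_le hx.1) ?_ (fun h => ‖tauIter h k g t‖ₑ ^ 2)
            intro h hh
            have hh0 : 0 < h := hε.trans_le hh.1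
            have hhk : k * h ≤ 1 := by
              have := hh.2
              rw [le_div_iff₀ hk'] at this; linarith
            refine ⟨mul_pos hi0 hh0, ?_⟩
            nlinarith
        _ = _ := by rw [← Finset.sum_mul]; exact (mul_assoc A1 S1 _).symm
    calc _ ≤ ∫⁻ h in (Icc ε (1 / k) ∪ Ioo 0 ε) ∪ Ioi (1 / (k:ℝ)), ‖v h‖ₑ ^ 2 * ENNReal.ofReal (h ^ (-1 - s)) :=
          lintegral_mono_set hsplit
      _ ≤ _ := (lintegral_union_le _ _ _).trans (add_le_add ((lintegral_union_le _ _ _).trans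
          (add_le_add p1 p2)) p3)
  -- pass to the limit
  have hTlim : Filter.Tendsto (fun n : ℕ => T (1 / ((n:ℝ) + 1))) Filter.atTop (nhds 0) := by
    have hlim0 : Filter.Tendsto (fun n : ℕ => (k:ℝ) * (1 / ((n:ℝ) + 1))) Filter.atTop (nhds 0) := by
      simpa using (tendsto_one_div_add_atTop_nhds_zero_nat (𝕜 := ℝ)).const_mul (k:ℝ)
    have h1 := tendsto_setLIntegral_zero (μ := volume.restrict (Ioo 0 η))
      (f := fun h => ‖tauIter h m g t‖ₑ ^ 2 * ENNReal.ofReal (h ^ (-1 - s))) hap.ne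
      (l := Filter.atTop) (s := fun n : ℕ => Ioo 0 ((k:ℝ) * (1 / ((n:ℝ) + 1)))) (by
        refine tendsto_of_tendsto_of_tendsto_of_le_of_le tendsto_const_nhds
          (h := fun n : ℕ => ENNReal.ofReal ((k:ℝ) * (1 / ((n:ℝ) + 1)))) ?_ (fun _ => zero_le) ?_
        · have := ENNReal.tendsto_ofReal hlim0
          simpa using this
        · intro n
          refine (Measure.restrict_apply_le _ _).trans ?_
          simp [Real.volume_Ioo])
    refine h1.congr' ?_
    filter_upwards [hlim0.eventually_lt_const hη0] with n hn
    rw [Measure.restrict_restrict measurableSet_Ioo, inter_eq_left.2 (Ioo_subset_Ioo_right hn.le)]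
  have hLsup : ∫⁻ h in Ioc (0:ℝ) 1, ‖tauIter h m g t‖ₑ ^ 2 * ENNReal.ofReal (h ^ (-1 - β)) =
      ⨆ n : ℕ, L (1 / ((n:ℝ) + 1)) := by
    rw [hL, ← setLIntegral_iUnion_of_directed]
    · congr 2
      ext x
      simp only [mem_iUnion, mem_Icc, mem_Ioc]
      constructor
      · rintro ⟨h1, h2⟩
        obtain ⟨n, hn⟩ := exists_nat_one_div_lt h1
        exact ⟨n, hn.le, h2⟩
      · rintro ⟨n, h1, h2⟩
        exact ⟨lt_of_lt_of_le (by positivity) h1, h2⟩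
    · apply directed_of_isDirected_le
      intro a b hab
      apply Icc_subset_Icc_left
      exact Nat.one_div_le_one_div hab
  have hLlim : Filter.Tendsto (fun n : ℕ => L (1 / ((n:ℝ) + 1))) Filter.atTop
      (nhds (⨆ n : ℕ, L (1 / ((n:ℝ) + 1)))) := by
    apply tendsto_atTop_iSup
    intro a b hab
    exact lintegral_mono_set (Icc_subset_Icc_left (Nat.one_div_le_one_div hab))
  rw [hLsup]
  have hR : Filter.Tendsto (fun n : ℕ => C0 * (A1 * S1 * Ik + A2 * S2 * T (1 / ((n:ℝ) + 1)) + A2 * S2 * B * O))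
      Filter.atTop (nhds (C0 * (A1 * S1 * Ik + A2 * S2 * 0 + A2 * S2 * B * O))) := by
    apply ENNReal.Tendsto.const_mul _ (Or.inr hC0.ne)
    apply Filter.Tendsto.add _ tendsto_const_nhds
    apply Filter.Tendsto.add tendsto_const_nhds
    exact ENNReal.Tendsto.const_mul hTlim (Or.inr (by finiteness))
  have hfinal := le_of_tendsto_of_tendsto hLlim hR (by
    have : ∀ᶠ n : ℕ in Filter.atTop, 1 / ((n:ℝ) + 1) < 1 / k :=
      (tendsto_one_div_add_atTop_nhds_zero_nat (𝕜 := ℝ)).eventually_lt_const (by positivity)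
    filter_upwards [this] with n hn
    exact key _ (by positivity) hn.le)
  refine hfinal.trans ?_
  rw [mul_zero, add_zero, mul_assoc C0]
  refine mul_le_mul_right ?_ _
  rw [mul_add]
  exact add_le_add (mul_le_mul_left (self_le_add_right _ _) _)
    (mul_le_mul_left (self_le_add_left _ _) _)

lemma core_m (k m : ℕ) (hm : 0 < m) (hmk : m ≤ k) (g : ℝ → ℂ) (hg : Measurable g)
    (hloc : ∀ a b : ℝ, (∫⁻ t in Set.Icc a b, (‖g t‖₊ : ℝ≥0∞) ^ 2) < ⊤)
    (U : Set ℝ) (hU : MeasurableSet U) (R : ℝ) (hUR : U ⊆ Icc (-R) R) (β s : ℝ) (hs0 : 0 < s)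
    (hβs : β < s) (hs : s < 2 * m)
    (H : ∫⁻ u in Ioc (0:ℝ) 1, (∫⁻ t in U, ‖tauIter u k g t‖ₑ ^ 2) * ENNReal.ofReal (u ^ (-1 - s)) < ⊤) :
    ∫⁻ u in Ioc (0:ℝ) 1, (∫⁻ t in U, ‖tauIter u m g t‖ₑ ^ 2) * ENNReal.ofReal (u ^ (-1 - β)) < ⊤ := by
  obtain ⟨C, hC, hpc⟩ := pointwise_core k m hm hmk β s hβs hs0
  obtain ⟨M, hM, hloc'⟩ := loc_bound g hg hloc m R
  have hjm : ∀ n, Measurable (fun p : ℝ × ℝ => ‖tauIter p.2 n g p.1‖ₑ ^ 2) := fun n =>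
    ((measurable_tauIter n hg measurable_snd measurable_fst).enorm).pow_const 2
  have hjm' : ∀ n (γ : ℝ), Measurable (fun p : ℝ × ℝ => ‖tauIter p.2 n g p.1‖ₑ ^ 2 *
      ENNReal.ofReal (p.2 ^ (-1 - γ))) := fun n γ => by
    have := hjm n; fun_prop
  have swap : ∀ n (γ : ℝ), ∫⁻ u in Ioc (0:ℝ) 1, (∫⁻ t in U, ‖tauIter u n g t‖ₑ ^ 2) * ENNReal.ofReal (u ^ (-1 - γ)) =
      ∫⁻ t in U, ∫⁻ u in Ioc (0:ℝ) 1, ‖tauIter u n g t‖ₑ ^ 2 * ENNReal.ofReal (u ^ (-1 - γ)) := by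
    intro n γ
    rw [lintegral_lintegral_swap (hjm' n γ).aemeasurable]
    refine lintegral_congr fun u => ?_
    rw [lintegral_mul_const' _ _ ENNReal.ofReal_ne_top]
  have hO : ∫⁻ t in U, ∫⁻ u in Ioc (0:ℝ) 1, ‖tauIter u m g t‖ₑ ^ 2 < ⊤ := by
    rw [lintegral_lintegral_swap (hjm m).aemeasurable]
    calc _ ≤ ∫⁻ u in Ioc (0:ℝ) 1, M := by
          refine setLIntegral_mono' measurableSet_Ioc fun u hu => ?_
          exact (lintegral_mono_set hUR).trans (hloc' u (by rw [abs_of_pos hu.1]; exact hu.2))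
      _ < ⊤ := by rw [setLIntegral_const, Real.volume_Ioc]; finiteness
  have hOae := ae_imp_of_ae_restrict (ae_lt_top (Measurable.lintegral_prod_right' (hjm m)) hO.ne)
  have hap := apriori k m hm hmk g hg hloc U hU R hUR s hs0 hs H
  rw [swap]
  calc _ ≤ ∫⁻ t in U, C * ((∫⁻ h in Ioc (0:ℝ) 1, ‖tauIter h k g t‖ₑ ^ 2 * ENNReal.ofReal (h ^ (-1 - s))) +
          ∫⁻ h in Ioc (0:ℝ) 1, ‖tauIter h m g t‖ₑ ^ 2) := by
        apply lintegral_mono_ae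
        rw [ae_restrict_iff' hU]
        filter_upwards [hOae, hap] with t h1 h2 htU
        exact hpc g hg t (h2 htU) (h1 htU)
    _ = C * ((∫⁻ t in U, ∫⁻ h in Ioc (0:ℝ) 1, ‖tauIter h k g t‖ₑ ^ 2 * ENNReal.ofReal (h ^ (-1 - s))) +
          ∫⁻ t in U, ∫⁻ h in Ioc (0:ℝ) 1, ‖tauIter h m g t‖ₑ ^ 2) := by
        rw [lintegral_const_mul' _ _ hC.ne,
          lintegral_add_left (Measurable.lintegral_prod_right' (hjm' k s))]
    _ < ⊤ := by
        rw [← swap]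
        have := H.ne
        have := hO.ne
        finiteness



lemma level_fin (k m : ℕ) (hmk : m ≤ k) (g : ℝ → ℂ) (hg : Measurable g)
    (hloc : ∀ a b : ℝ, (∫⁻ t in Set.Icc a b, (‖g t‖₊ : ℝ≥0∞) ^ 2) < ⊤) (U : Set ℝ)
    (hU : MeasurableSet U) (R : ℝ) (hUR : U ⊆ Icc (-R) R) (r : ℝ) (hr : 0 < r) (hr2 : r < 2 * k)
    (H : ∫⁻ u in Ioc (0:ℝ) 1, (∫⁻ t in U, ‖tauIter u k g t‖ₑ ^ 2) *
      ENNReal.ofReal (u ^ (-1 - r)) < ⊤) :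
    ∫⁻ u in Ioc (0:ℝ) 1, (∫⁻ t in U, ‖tauIter u m g t‖ₑ ^ 2) *
      ENNReal.ofReal (u ^ (-1 - (r - 2 * (k - m : ℝ)))) < ⊤ := by
  rcases eq_or_lt_of_le hmk with rfl | hlt
  · simpa using H
  have hlt' : (m:ℝ) < k := by exact_mod_cast hlt
  rcases Nat.eq_zero_or_pos m with rfl | hm
  · obtain ⟨M, hM, hMb⟩ := loc_bound g hg hloc 0 R
    have hIntg : IntegrableOn (fun u : ℝ => u ^ (-1 - (r - 2 * (k - (0:ℕ) : ℝ)))) (Ioc 0 1) := by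
      have := (intervalIntegral.intervalIntegrable_rpow' (a := 0) (b := 1)
        (r := -1 - (r - 2 * (k - (0:ℕ) : ℝ))) (by push_cast; linarith))
      rwa [intervalIntegrable_iff_integrableOn_Ioc_of_le zero_le_one] at this
    have hIntg2 : ∫⁻ u in Ioc (0:ℝ) 1, ENNReal.ofReal (u ^ (-1 - (r - 2 * (k - (0:ℕ) : ℝ)))) < ⊤ :=
      hIntg.lintegral_lt_top
    refine lt_of_le_of_lt (b := ∫⁻ u in Ioc (0:ℝ) 1, M *
      ENNReal.ofReal (u ^ (-1 - (r - 2 * (k - (0:ℕ) : ℝ))))) ?_ ?_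
    · refine setLIntegral_mono' measurableSet_Ioc fun u hu => ?_
      refine mul_le_mul_left ((lintegral_mono_set hUR).trans (hMb u ?_)) _
      rw [abs_of_pos hu.1]; exact hu.2
    · rw [lintegral_const_mul' _ _ hM.ne]
      exact ENNReal.mul_lt_top hM hIntg2
  · have hm' : (0:ℝ) < m := by exact_mod_cast hm
    obtain ⟨s, hs1, hs2⟩ := exists_between (a₁ := max (r - 2 * (k - m : ℝ)) 0) (a₂ := min r (2 * m))
      (max_lt (lt_min (by linarith) (by linarith)) (lt_min hr (by linarith)))
    have a1 := (le_max_left _ _).trans_lt hs1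
    have a2 := (le_max_right _ _).trans_lt hs1
    have a3 := hs2.trans_le (min_le_left _ _)
    have a4 := hs2.trans_le (min_le_right _ _)
    refine core_m k m hm hmk g hg hloc U hU R hUR _ s a2 a1 a4 (lt_of_le_of_lt ?_ H)
    refine setLIntegral_mono' measurableSet_Ioc fun u hu => ?_
    refine mul_le_mul_right (ENNReal.ofReal_le_ofReal ?_) _
    exact Real.rpow_le_rpow_of_exponent_ge hu.1 hu.2 (by linarith)

lemma leib_sq (k : ℕ) (φ : ℝ → ℂ) (hφ : ContDiff ℝ k φ) (R : ℝ) : ∃ A : ℝ≥0∞, A < ⊤ ∧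
    ∀ g : ℝ → ℂ, ∀ h ∈ Ioc (0:ℝ) 1, ∀ t ∈ Icc (-R) R,
    ‖tauIter h k (fun x => φ x * g x) t‖ₑ ^ 2 ≤ A * ∑ i ∈ Finset.range (k + 1),
      ENNReal.ofReal (h ^ (2 * (k - i : ℝ))) * ‖tauIter h i g t‖ₑ ^ 2 := by
  have hb : ∀ i : ℕ, ∃ C : ℝ, 0 ≤ C ∧ ∀ t h : ℝ, |t| ≤ R + k → |h| ≤ 1 →
      ‖tauIter h (k - i) φ t‖ ≤ C * |h| ^ (k - i) := fun i =>
    phi_bound (k - i) φ (hφ.of_le (by exact_mod_cast Nat.sub_le k i)) (R + k)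
  choose C hC0 hC using hb
  set D : ℝ := ∑ i ∈ Finset.range (k + 1), C i with hD
  have hD0 : 0 ≤ D := Finset.sum_nonneg fun i _ => hC0 i
  refine ⟨((k + 1 : ℕ) : ℝ≥0∞) * ENNReal.ofReal ((2 ^ k * D) ^ 2), 
    ENNReal.mul_lt_top (ENNReal.natCast_lt_top _) ENNReal.ofReal_lt_top, fun g h hh t ht => ?_⟩
  set f : ℕ → ℂ := fun i => ((2 ^ k * D * (h ^ (k - i) * ‖tauIter h i g t‖) : ℝ) : ℂ) with hf
  have hh0 : 0 < h := hh.1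
  have hnn : ∀ i, 0 ≤ 2 ^ k * D * (h ^ (k - i) * ‖tauIter h i g t‖) := fun i => by positivity
  have hle : ‖tauIter h k (fun x => φ x * g x) t‖ ≤ ‖∑ i ∈ Finset.range (k + 1), f i‖ := by
    have : ‖∑ i ∈ Finset.range (k + 1), f i‖ =
        ∑ i ∈ Finset.range (k + 1), 2 ^ k * D * (h ^ (k - i) * ‖tauIter h i g t‖) := by
      rw [hf, ← Complex.ofReal_sum, Complex.norm_real, Real.norm_of_nonneg
        (Finset.sum_nonneg fun i _ => hnn i)]
    rw [this]
    refine (leibniz_bound h k φ g t).trans ?_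
    rw [Finset.mul_sum]
    refine Finset.sum_le_sum fun i hi => ?_
    have hik : (i:ℝ) ≤ k := by exact_mod_cast Nat.lt_succ_iff.1 (Finset.mem_range.1 hi)
    have h1 : ‖tauIter h (k - i) φ (t + i * h)‖ ≤ D * h ^ (k - i) := by
      refine (hC i (t + i * h) h ?_ ?_).trans ?_
      · have h3 : 0 ≤ (i:ℝ) * h := by positivity
        have h4 : (i:ℝ) * h ≤ k := by nlinarith [hh.2, (Nat.cast_nonneg i : (0:ℝ) ≤ i)]
        rw [abs_le]; constructor <;> linarith [ht.1, ht.2]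
      · rw [abs_of_pos hh0]; exact hh.2
      · rw [abs_of_pos hh0]
        exact mul_le_mul_of_nonneg_right
          (hD ▸ Finset.single_le_sum (f := C) (fun i _ => hC0 i) hi) (by positivity)
    calc _ ≤ 2 ^ k * (D * h ^ (k - i) * ‖tauIter h i g t‖) := by gcongr
      _ = _ := by ring
  have hle2 : ‖tauIter h k (fun x => φ x * g x) t‖ₑ ≤ ‖∑ i ∈ Finset.range (k + 1), f i‖ₑ :=
    enorm_le_iff_norm_le.2 hle
  refine (pow_le_pow_left' hle2 2).trans ((enorm_sum_sq _ _).trans (le_of_eq ?_))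
  rw [Finset.card_range, mul_assoc]
  congr 1
  rw [Finset.mul_sum]
  refine Finset.sum_congr rfl fun i hi => ?_
  have hik : i ≤ k := Nat.lt_succ_iff.1 (Finset.mem_range.1 hi)
  have e1 : ‖f i‖ₑ = ENNReal.ofReal (2 ^ k * D * (h ^ (k - i) * ‖tauIter h i g t‖)) := by
    rw [← ofReal_norm, hf, Complex.norm_real, Real.norm_of_nonneg (hnn i)]
  have e2 : h ^ (2 * (k - i : ℝ)) = (h ^ (k - i)) ^ 2 := by
    rw [← pow_mul, ← Real.rpow_natCast]
    push_cast [Nat.cast_sub hik]; ring_nf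
  rw [e1, e2, ENNReal.ofReal_mul (p := 2 ^ k * D) (by positivity), ENNReal.ofReal_mul (p := h ^ (k - i)) (by positivity),
    ofReal_norm, mul_pow, mul_pow, ← ENNReal.ofReal_pow (by positivity),
    ← ENNReal.ofReal_pow (by positivity)]

lemma one_sided (k : ℕ) (g : ℝ → ℂ) (hg : Measurable g)
    (hloc : ∀ a b : ℝ, (∫⁻ t in Set.Icc a b, (‖g t‖₊ : ℝ≥0∞) ^ 2) < ⊤) (U : Set ℝ)
    (hU : MeasurableSet U) (R : ℝ) (hUR : U ⊆ Icc (-R) R) (r : ℝ) (hr : 0 < r) (hr2 : r < 2 * k)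
    (φ : ℝ → ℂ) (hφ : ContDiff ℝ k φ)
    (H : ∫⁻ u in Ioc (0:ℝ) 1, (∫⁻ t in U, ‖tauIter u k g t‖ₑ ^ 2) *
      ENNReal.ofReal (u ^ (-1 - r)) < ⊤) :
    ∫⁻ u in Ioc (0:ℝ) 1, (∫⁻ t in U, ‖tauIter u k (fun x => φ x * g x) t‖ₑ ^ 2) *
      ENNReal.ofReal (u ^ (-1 - r)) < ⊤ := by
  obtain ⟨A, hA, hAb⟩ := leib_sq k φ hφ R
  have hmeas : ∀ i h, Measurable fun t => ‖tauIter h i g t‖ₑ ^ 2 := fun i h =>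
    ((measurable_tauIter i hg measurable_const measurable_id).enorm).pow_const 2
  refine lt_of_le_of_lt (b := ∫⁻ u in Ioc (0:ℝ) 1, A * ∑ i ∈ Finset.range (k + 1),
    (∫⁻ t in U, ‖tauIter u i g t‖ₑ ^ 2) *
      ENNReal.ofReal (u ^ (-1 - (r - 2 * (k - i : ℝ))))) ?_ ?_
  · refine setLIntegral_mono' measurableSet_Ioc fun u hu => ?_
    have h1 : ∫⁻ t in U, ‖tauIter u k (fun x => φ x * g x) t‖ₑ ^ 2 ≤
        A * ∑ i ∈ Finset.range (k + 1), ENNReal.ofReal (u ^ (2 * (k - i : ℝ))) *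
          ∫⁻ t in U, ‖tauIter u i g t‖ₑ ^ 2 := by
      refine (setLIntegral_mono' hU fun t ht => hAb g u hu t (hUR ht)).trans (le_of_eq ?_)
      rw [lintegral_const_mul' _ _ hA.ne, lintegral_finsetSum _
        (fun i _ => (hmeas i u).const_mul _)]
      congr 1
      exact Finset.sum_congr rfl fun i _ => lintegral_const_mul' _ _ ENNReal.ofReal_ne_top
    refine (mul_le_mul_left h1 _).trans (le_of_eq ?_)
    rw [mul_assoc, Finset.sum_mul]
    congr 1
    refine Finset.sum_congr rfl fun i _ => ?_
    rw [mul_comm (ENNReal.ofReal _), mul_assoc, ← ENNReal.ofReal_mul (Real.rpow_nonneg hu.1.le _),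
      ← Real.rpow_add hu.1]
    congr 3; ring
  · rw [lintegral_const_mul' _ _ hA.ne]
    refine ENNReal.mul_lt_top hA ?_
    rw [lintegral_finsetSum]
    · refine ENNReal.sum_lt_top.2 fun i hi => ?_
      exact level_fin k i (Nat.lt_succ_iff.1 (Finset.mem_range.1 hi)) g hg hloc U hU R hUR r hr hr2 H
    · intro i _
      exact (measurable_psi g hg i U).mul (by fun_prop)

lemma wt_eq (r : ℝ) (F : ℝ → ℝ → ℝ≥0∞) (U : Set ℝ) :
    ∫⁻ h in Ioc (0:ℝ) 1, ∫⁻ t in U, F h t / ENNReal.ofReal |h| ^ (1 + r) =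
    ∫⁻ h in Ioc (0:ℝ) 1, (∫⁻ t in U, F h t) * ENNReal.ofReal (h ^ (-1 - r)) := by
  refine setLIntegral_congr_fun measurableSet_Ioc fun h hh => ?_
  have e : (ENNReal.ofReal |h| ^ (1 + r))⁻¹ = ENNReal.ofReal (h ^ (-1 - r)) := by
    rw [abs_of_pos hh.1, ENNReal.ofReal_rpow_of_pos hh.1,
      ← ENNReal.ofReal_inv_of_pos (Real.rpow_pos_of_pos hh.1 _), ← Real.rpow_neg hh.1.le]
    congr 2; ring
  simp only [div_eq_mul_inv, e]
  exact lintegral_mul_const' _ _ ENNReal.ofReal_ne_top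

lemma lint_neg (F : ℝ → ℝ≥0∞) (S : Set ℝ) (hS : MeasurableSet S) :
    ∫⁻ x in (Neg.neg ⁻¹' S), F (-x) = ∫⁻ x in S, F x := by
  rw [← lintegral_indicator hS, ← lintegral_indicator (measurable_neg hS),
    ← lintegral_neg_eq_self (fun x => S.indicator F x)]
  rfl

lemma neg_side (r : ℝ) (k : ℕ) (g : ℝ → ℂ) (U : Set ℝ) (hU : MeasurableSet U) :
    ∫⁻ h in Ico (-1:ℝ) 0, ∫⁻ t in U, (‖tauIter h k g t‖ₑ) ^ 2 / ENNReal.ofReal |h| ^ (1 + r) =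
    ∫⁻ h in Ioc (0:ℝ) 1, ∫⁻ t in Neg.neg ⁻¹' U, (‖tauIter h k (fun x => g (-x)) t‖ₑ) ^ 2 /
      ENNReal.ofReal |h| ^ (1 + r) := by
  rw [← lint_neg _ _ measurableSet_Ico]
  have : (Neg.neg ⁻¹' (Ico (-1:ℝ) 0)) = Ioc 0 1 := by
    ext x; simp only [mem_preimage, mem_Ico, mem_Ioc]; constructor <;> rintro ⟨a, b⟩ <;>
      constructor <;> linarith
  rw [this]
  refine lintegral_congr fun h => ?_
  rw [← lint_neg _ _ hU]
  simp only [abs_neg, tauIter_neg]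

theorem final (k : ℕ) (r : ℝ) (hr : 0 < r) (hr2 : r < 2 * k)
    (U : Set ℝ) (hU : MeasurableSet U) (hUb : Bornology.IsBounded U)
    (g : ℝ → ℂ) (hg : Measurable g)
    (hloc : ∀ a b : ℝ, (∫⁻ t in Set.Icc a b, (‖g t‖₊ : ℝ≥0∞) ^ 2) < ⊤)
    (φ : ℝ → ℂ) (hφ : ContDiff ℝ k φ)
    (hfin : (∫⁻ h in Set.Icc (-1 : ℝ) 1, ∫⁻ t in U,
        ‖tauIter h k g t‖ₑ ^ 2 / ENNReal.ofReal |h| ^ (1 + r)) < ⊤) :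
    (∫⁻ h in Set.Icc (-1 : ℝ) 1, ∫⁻ t in U,
        ‖tauIter h k (fun s => φ s * g s) t‖ₑ ^ 2 /
          ENNReal.ofReal |h| ^ (1 + r)) < ⊤ := by
  obtain ⟨R, hR⟩ := hUb.subset_closedBall 0
  rw [Real.closedBall_eq_Icc, zero_sub, zero_add] at hR
  have hR2 : Neg.neg ⁻¹' U ⊆ Icc (-R) R := fun x hx => by
    have := hR hx
    simp only [mem_Icc] at this ⊢
    constructor <;> linarith
  have hU2 : MeasurableSet (Neg.neg ⁻¹' U) := measurable_neg hU
  have hsub : Icc (-1:ℝ) 1 ⊆ (Ioc 0 1 ∪ Ico (-1) 0) ∪ {0} := fun x hx => by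
    rcases lt_trichotomy x 0 with h | h | h
    · exact Or.inl (Or.inr ⟨hx.1, h⟩)
    · exact Or.inr h
    · exact Or.inl (Or.inl ⟨h, hx.2⟩)
  refine (lintegral_mono_set hsub).trans_lt ?_
  refine (lintegral_union_le _ _ _).trans_lt (ENNReal.add_lt_top.2 ⟨?_, by simp⟩)
  refine (lintegral_union_le _ _ _).trans_lt (ENNReal.add_lt_top.2 ⟨?_, ?_⟩)
  · rw [wt_eq]
    refine one_sided k g hg hloc U hU R hR r hr hr2 φ hφ ?_
    rw [← wt_eq]
    exact (lintegral_mono_set (show Ioc (0:ℝ) 1 ⊆ Icc (-1) 1 from fun x hx => ⟨by linarith [hx.1], hx.2⟩)).trans_lt hfin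
  · rw [neg_side _ _ _ _ hU, wt_eq]
    refine one_sided k (fun x => g (-x)) (hg.comp measurable_neg) (fun a b => ?_) _ hU2 R hR2 r hr hr2
      (fun x => φ (-x)) (hφ.comp contDiff_neg) ?_
    · have := lint_neg (fun x => (‖g x‖₊ : ℝ≥0∞) ^ 2) (Icc (-b) (-a)) measurableSet_Icc
      have e : (Neg.neg ⁻¹' (Icc (-b) (-a))) = Icc a b := by
        ext x; simp only [mem_preimage, mem_Icc]; constructor <;> rintro ⟨a, b⟩ <;>
          constructor <;> linarith
      rw [e] at this
      rw [this]; exact hloc _ _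
    · rw [← wt_eq, ← neg_side _ _ _ _ hU]
      exact (lintegral_mono_set (show Ico (-1:ℝ) 0 ⊆ Icc (-1) 1 from fun x hx => ⟨hx.1, by linarith [hx.2]⟩)).trans_lt hfin

end Aux

theorem stmt6 (k : ℕ) (hk : 0 < k) (r : ℝ) (hr : 0 < r) (hr2 : r < 2 * k)
    (U : Set ℝ) (hU : MeasurableSet U) (hUb : Bornology.IsBounded U)
    (g : ℝ → ℂ) (hg : Measurable g)
    (hloc : ∀ a b : ℝ, (∫⁻ t in Set.Icc a b, (‖g t‖₊ : ℝ≥0∞) ^ 2) < ⊤)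
    (φ : ℝ → ℂ) (hφ : ContDiff ℝ k φ)
    (hfin : (∫⁻ h in Set.Icc (-1 : ℝ) 1, ∫⁻ t in U,
        (‖tauIter h k g t‖₊ : ℝ≥0∞) ^ 2 / ENNReal.ofReal |h| ^ (1 + r)) < ⊤) :
    (∫⁻ h in Set.Icc (-1 : ℝ) 1, ∫⁻ t in U,
        (‖tauIter h k (fun s => φ s * g s) t‖₊ : ℝ≥0∞) ^ 2 /
          ENNReal.ofReal |h| ^ (1 + r)) < ⊤ := by
  exact final k r hr hr2 U hU hUb g hg hloc φ hφ hfin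
end

section
/- Let Q = [0,1]², q > 2, and let w ∈ L¹(Q) with w > 0 a.e. If 1/w ∈ L^{q/(q−2)}(Q), then the exponential system E = {e^{2πi(mx+ny)} : (m,n) ∈ ℤ²} is an exact (C_q)-system in the weighted space L²_w(Q). -/
open MeasureTheory Real Finset
open scoped ENNReal

/-- The unit square `Q = [0,1]²` in `ℝ²`. -/
def unitSq : Set (ℝ × ℝ) := Set.Icc (0, 0) (1, 1)

/-- The exponential `e^{2πi(mx+ny)}`. -/
noncomputable def expMN (m n : ℤ) : ℝ × ℝ → ℂ :=
  fun p => Complex.exp (2 * Real.pi * Complex.I * (m * p.1 + n * p.2))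

/-- The squared norm `∬_Q |g|² w` in the weighted space `L²_w(Q)`. -/
noncomputable def wIntSq (w : ℝ × ℝ → ℝ) (g : ℝ × ℝ → ℂ) : ℝ≥0∞ :=
  ∫⁻ p in unitSq, (‖g p‖₊ : ℝ≥0∞) ^ 2 * ENNReal.ofReal (w p)

/-- Membership in the weighted space `L²_w(Q)`. -/
def MemL2w (w : ℝ × ℝ → ℝ) (g : ℝ × ℝ → ℂ) : Prop :=
  AEStronglyMeasurable g (volume.restrict unitSq) ∧ wIntSq w g < ⊤


local notation "muQ" => (volume.restrict unitSq : Measure (ℝ × ℝ))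

lemma muQ_eq : (muQ) = (volume.restrict (Set.Icc (0:ℝ) 1)).prod (volume.restrict (Set.Icc (0:ℝ) 1)) := by
  rw [Measure.prod_restrict, ← Measure.volume_eq_prod]
  congr 1
  exact (Set.Icc_prod_Icc (0:ℝ) 1 0 1).symm

lemma muQ_univ : (muQ) Set.univ = 1 := by
  rw [muQ_eq]
  simp [← Set.univ_prod_univ, Measure.prod_prod]

instance muQ_prob : IsProbabilityMeasure (muQ) := ⟨muQ_univ⟩

lemma int_exp_one (m : ℤ) :
    ∫ x in Set.Icc (0:ℝ) 1, Complex.exp (2 * Real.pi * Complex.I * (m * x)) = if m = 0 then 1 else 0 := by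
  rw [integral_Icc_eq_integral_Ioc, ← intervalIntegral.integral_of_le zero_le_one]
  split_ifs with h
  · simp [h]
  · have hc : (2 * Real.pi * Complex.I * m : ℂ) ≠ 0 := by
      simp [Real.pi_ne_zero, h]
    have := integral_exp_mul_complex (a := 0) (b := 1) hc
    simp only [← mul_assoc]
    rw [this]
    have h1 : Complex.exp (2 * Real.pi * Complex.I * m * (1:ℝ)) = 1 := by
      rw [Complex.exp_eq_one_iff]
      exact ⟨m, by push_cast; ring⟩
    rw [h1]; simp

lemma int_exp_two (m n : ℤ) :
    ∫ p, expMN m n p ∂muQ = if m = 0 ∧ n = 0 then 1 else 0 := by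
  have : ∀ p : ℝ × ℝ, expMN m n p = Complex.exp (2 * Real.pi * Complex.I * (m * p.1)) *
      Complex.exp (2 * Real.pi * Complex.I * (n * p.2)) := by
    intro p
    rw [expMN, ← Complex.exp_add]; ring_nf
  simp_rw [this]
  rw [muQ_eq, integral_prod_mul (fun x : ℝ => Complex.exp (2 * Real.pi * Complex.I * (m * x)))
    (fun x : ℝ => Complex.exp (2 * Real.pi * Complex.I * (n * x))), int_exp_one, int_exp_one]
  by_cases h1 : m = 0 <;> by_cases h2 : n = 0 <;> simp [h1, h2]

lemma expMN_cont (m n : ℤ) : Continuous (expMN m n) := by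
  unfold expMN; fun_prop

lemma expMN_norm (m n : ℤ) (p : ℝ × ℝ) : ‖expMN m n p‖ = 1 := by
  have : (2 * Real.pi * Complex.I * (m * p.1 + n * p.2) : ℂ)
    = ((2 * Real.pi * (m * p.1 + n * p.2) : ℝ) : ℂ) * Complex.I := by push_cast; ring
  rw [expMN, this, Complex.norm_exp_ofReal_mul_I]

lemma expMN_conj_mul (m n k l : ℤ) (p : ℝ × ℝ) :
    (starRingEnd ℂ) (expMN m n p) * expMN k l p = expMN (k - m) (l - n) p := by
  simp only [expMN]
  rw [← Complex.exp_conj, ← Complex.exp_add]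
  have h2 : (starRingEnd ℂ) 2 = 2 := map_ofNat _ 2
  simp [h2]
  ring_nf

lemma expMN_memLp (m n : ℤ) (r : ℝ≥0∞) : MemLp (expMN m n) r muQ :=
  MemLp.of_bound (expMN_cont m n).aestronglyMeasurable 1 (by simp [expMN_norm])

/-- Fourier coefficient. -/
noncomputable def fc (f : ℝ × ℝ → ℂ) (k : ℤ × ℤ) : ℂ :=
  ∫ p, (starRingEnd ℂ) (expMN k.1 k.2 p) * f p ∂muQ

lemma fc_exp (k l : ℤ × ℤ) : fc (expMN l.1 l.2) k = if l = k then 1 else 0 := by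
  simp only [fc, expMN_conj_mul, int_exp_two]
  congr 1
  rw [Prod.ext_iff]; simp [sub_eq_zero]

lemma fc_integrable {f : ℝ × ℝ → ℂ} (hf : Integrable f muQ) (k : ℤ × ℤ) :
    Integrable (fun p => (starRingEnd ℂ) (expMN k.1 k.2 p) * f p) muQ := by
  refine hf.bdd_mul (c := 1) ?_ ?_
  · exact (Complex.continuous_conj.comp (expMN_cont _ _)).aestronglyMeasurable
  · simp [expMN_norm]

lemma fc_add {f g : ℝ × ℝ → ℂ} (hf : Integrable f muQ) (hg : Integrable g muQ) (k : ℤ × ℤ) :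
    fc (fun p => f p + g p) k = fc f k + fc g k := by
  simp only [fc, mul_add]
  exact integral_add (fc_integrable hf k) (fc_integrable hg k)

lemma fc_sum (s : Finset (ℤ × ℤ)) (a : ℤ × ℤ → ℂ) (k : ℤ × ℤ) :
    fc (fun p => ∑ mn ∈ s, a mn * expMN mn.1 mn.2 p) k = if k ∈ s then a k else 0 := by
  have h1 : fc (fun p => ∑ mn ∈ s, a mn * expMN mn.1 mn.2 p) k
      = ∑ mn ∈ s, a mn * fc (expMN mn.1 mn.2) k := by
    simp only [fc, Finset.mul_sum]
    rw [integral_finsetSum]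
    · refine Finset.sum_congr rfl fun l _ => ?_
      rw [← integral_const_mul]
      congr 1; ext p; ring
    · intro l _
      exact fc_integrable (((expMN_memLp l.1 l.2 1).integrable le_rfl).const_mul _) k
  rw [h1]
  simp [fc_exp]

lemma fc_le (f : ℝ × ℝ → ℂ) (k : ℤ × ℤ) : ‖fc f k‖ₑ ≤ ∫⁻ p, ‖f p‖ₑ ∂muQ := by
  refine (enorm_integral_le_lintegral_enorm _).trans ?_
  refine lintegral_mono fun p => ?_
  have : ‖expMN k.1 k.2 p‖ₑ = 1 := by
    rw [← ofReal_norm, expMN_norm]; simp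
  simp [enorm_mul, this]

lemma exp_orthonormal : Orthonormal ℂ
    (fun k : ℤ × ℤ => (expMN_memLp k.1 k.2 2).toLp (expMN k.1 k.2)) := by
  rw [orthonormal_iff_ite]
  intro k l
  rw [L2.inner_def]
  have : ∫ p, inner ℂ ((expMN_memLp k.1 k.2 2).toLp (expMN k.1 k.2) p)
      ((expMN_memLp l.1 l.2 2).toLp (expMN l.1 l.2) p) ∂muQ = fc (expMN l.1 l.2) k := by
    refine integral_congr_ae ?_
    filter_upwards [(expMN_memLp k.1 k.2 2).coeFn_toLp, (expMN_memLp l.1 l.2 2).coeFn_toLp]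
      with p h1 h2
    rw [h1, h2]; simp [mul_comm]
  rw [this, fc_exp]; simp [eq_comm]

lemma bessel {f : ℝ × ℝ → ℂ} (hf : MemLp f 2 muQ) (s : Finset (ℤ × ℤ)) :
    ∑ k ∈ s, ‖fc f k‖ₑ ^ 2 ≤ ∫⁻ p, ‖f p‖ₑ ^ 2 ∂muQ := by
  have h := exp_orthonormal.sum_inner_products_le (hf.toLp f) (s := s)
  have h2 : ∀ k : ℤ × ℤ, inner ℂ ((expMN_memLp k.1 k.2 2).toLp (expMN k.1 k.2)) (hf.toLp f)
      = fc f k := by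
    intro k
    rw [L2.inner_def]
    refine integral_congr_ae ?_
    filter_upwards [(expMN_memLp k.1 k.2 2).coeFn_toLp, hf.coeFn_toLp]
      with p h1 h2
    rw [h1, h2]; simp [mul_comm]
  simp only [h2] at h
  have h3 : ∫⁻ p, ‖f p‖ₑ ^ 2 ∂muQ = ENNReal.ofReal (‖hf.toLp f‖ ^ 2) := by
    rw [ENNReal.ofReal_pow (norm_nonneg _), ofReal_norm, Lp.enorm_toLp,
      eLpNorm_eq_lintegral_rpow_enorm_toReal (by simp) (by simp)]
    rw [← ENNReal.rpow_natCast, ← ENNReal.rpow_mul]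
    simp
  rw [h3]
  refine le_trans (le_of_eq ?_) (ENNReal.ofReal_le_ofReal h)
  rw [ENNReal.ofReal_sum_of_nonneg (by intros; positivity)]
  refine Finset.sum_congr rfl fun k _ => ?_
  rw [ENNReal.ofReal_pow (norm_nonneg _), ofReal_norm]

lemma inner_t (q : ℝ) (hq : 2 < q) (A : ℝ) (hA : 0 ≤ A) :
    ∫⁻ t in Set.Ioc 0 A, ENNReal.ofReal (t ^ (q - 3)) = ENNReal.ofReal (A ^ (q - 2) / (q - 2)) := by
  have hi : IntervalIntegrable (fun t : ℝ => t ^ (q - 3)) volume 0 A :=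
    intervalIntegral.intervalIntegrable_rpow' (by linarith)
  rw [← ofReal_integral_eq_lintegral_ofReal, ← intervalIntegral.integral_of_le hA, integral_rpow]
  · congr 1
    have h1 : q - 3 + 1 = q - 2 := by ring
    rw [h1, Real.zero_rpow (by linarith)]; simp
  · left; linarith
  · exact (intervalIntegrable_iff_integrableOn_Ioc_of_le hA).1 hi
  · refine (ae_restrict_iff' measurableSet_Ioc).2 (Filter.Eventually.of_forall fun t ht => ?_)
    exact Real.rpow_nonneg ht.1.le _

lemma l1_small (q : ℝ) (hq : 2 < q) (w : ℝ × ℝ → ℝ) (hwm : Measurable w) (hw : ∀ p, 0 < w p)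
    (V : ℝ) (hV : 0 < V)
    (hinv : (∫⁻ p in unitSq, ENNReal.ofReal ((w p)⁻¹ ^ (q / (q - 2)))) ≤ ENNReal.ofReal (V ^ 2))
    (f : ℝ × ℝ → ℂ) (hfm : Measurable f) (A : ℝ) (hA : 0 < A)
    (hfA : wIntSq w f ≤ ENNReal.ofReal (A ^ 2)) (E : Set (ℝ × ℝ)) (τ : ℝ) (hτ : 0 < τ)
    (hE : ∀ p ∈ E, w p ^ (1 / (q - 2)) ≤ τ) :
    ∫⁻ p, ‖E.indicator f p‖ₑ ∂muQ ≤ ENNReal.ofReal (A * V * τ) := by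
  have hq2 : 0 < q - 2 := by linarith
  have hpt : ∀ p, ‖E.indicator f p‖ₑ ≤
      (‖f p‖ₑ * ENNReal.ofReal (√(w p))) * ENNReal.ofReal (√((w p)⁻¹ ^ (q / (q - 2))) * τ) := by
    intro p
    by_cases hp : p ∈ E
    · rw [Set.indicator_of_mem hp, mul_assoc, ← ENNReal.ofReal_mul (Real.sqrt_nonneg _)]
      have : 1 ≤ √(w p) * (√((w p)⁻¹ ^ (q / (q - 2))) * τ) := by
        have h1 : √(w p) * √((w p)⁻¹ ^ (q / (q - 2))) = (w p ^ (1 / (q - 2)))⁻¹ := by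
          rw [Real.sqrt_eq_rpow, Real.sqrt_eq_rpow, Real.inv_rpow (hw p).le,
            ← Real.rpow_neg (hw p).le, ← Real.rpow_neg (hw p).le, ← Real.rpow_mul (hw p).le,
            ← Real.rpow_add (hw p)]
          congr 1
          field_simp
          ring
        rw [← mul_assoc, h1]
        have h2 : 0 < w p ^ (1 / (q - 2)) := Real.rpow_pos_of_pos (hw p) _
        rw [inv_mul_eq_div, one_le_div h2]
        exact hE p hp
      calc ‖f p‖ₑ = ‖f p‖ₑ * ENNReal.ofReal 1 := by simp
        _ ≤ _ := by gcongr
    · simp [hp]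
  have hm1 : Measurable fun p => ‖f p‖ₑ * ENNReal.ofReal (√(w p)) := by fun_prop
  have hm2 : Measurable fun p => ENNReal.ofReal (√((w p)⁻¹ ^ (q / (q - 2))) * τ) := by fun_prop
  refine (lintegral_mono hpt).trans ?_
  refine (ENNReal.lintegral_mul_le_Lp_mul_Lq muQ Real.HolderConjugate.two_two
    hm1.aemeasurable hm2.aemeasurable).trans ?_
  have e1 : ∫⁻ p, (‖f p‖ₑ * ENNReal.ofReal (√(w p))) ^ (2:ℝ) ∂muQ ≤ ENNReal.ofReal (A ^ 2) := by
    refine le_trans (le_of_eq ?_) hfA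
    unfold wIntSq
    refine lintegral_congr fun p => ?_
    rw [ENNReal.rpow_two, mul_pow, ← ENNReal.ofReal_pow (Real.sqrt_nonneg _),
      Real.sq_sqrt (hw p).le]
    rfl
  have e2 : ∫⁻ p, (ENNReal.ofReal (√((w p)⁻¹ ^ (q / (q - 2))) * τ)) ^ (2:ℝ) ∂muQ
      ≤ ENNReal.ofReal ((V * τ) ^ 2) := by
    have : ∀ p, (ENNReal.ofReal (√((w p)⁻¹ ^ (q / (q - 2))) * τ)) ^ (2:ℝ)
        = ENNReal.ofReal ((w p)⁻¹ ^ (q / (q - 2))) * ENNReal.ofReal (τ ^ 2) := by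
      intro p
      have h0 : 0 ≤ (w p)⁻¹ ^ (q / (q - 2)) := Real.rpow_nonneg (inv_nonneg.2 (hw p).le) _
      rw [ENNReal.rpow_two, ← ENNReal.ofReal_pow (by positivity), mul_pow,
        Real.sq_sqrt h0, ENNReal.ofReal_mul h0]
    simp_rw [this]
    rw [lintegral_mul_const _ (by fun_prop), mul_pow, ENNReal.ofReal_mul (by positivity)]
    gcongr
  have e3 : ∀ x : ℝ, 0 ≤ x → (ENNReal.ofReal (x ^ 2)) ^ (1 / 2 : ℝ) = ENNReal.ofReal x := by
    intro x hx
    rw [ENNReal.ofReal_rpow_of_nonneg (by positivity) (by norm_num), ← Real.sqrt_eq_rpow,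
      Real.sqrt_sq hx]
  calc _ ≤ (ENNReal.ofReal (A ^ 2)) ^ (1 / 2 : ℝ) * (ENNReal.ofReal ((V * τ) ^ 2)) ^ (1 / 2 : ℝ) := by
        gcongr
    _ = _ := by
        rw [e3 _ hA.le, e3 _ (by positivity), ← ENNReal.ofReal_mul hA.le, mul_assoc]

lemma weak_t (q : ℝ) (hq : 2 < q) (w : ℝ × ℝ → ℝ) (hwm : Measurable w) (hw : ∀ p, 0 < w p)
    (V : ℝ) (hV : 0 < V)
    (hinv : (∫⁻ p in unitSq, ENNReal.ofReal ((w p)⁻¹ ^ (q / (q - 2)))) ≤ ENNReal.ofReal (V ^ 2))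
    (f : ℝ × ℝ → ℂ) (hfm : Measurable f) (hf2 : MemLp f 2 muQ) (A : ℝ) (hA : 0 < A)
    (hfA : wIntSq w f ≤ ENNReal.ofReal (A ^ 2)) (S : Finset (ℤ × ℤ)) (t : ℝ) (ht : 0 < t) :
    ∑ k ∈ S, (if t < ‖fc f k‖ then ‖fc f k‖ₑ ^ 2 else 0) ≤
      4 * ∫⁻ p, (if t ≤ 2 * A * V * w p ^ (1 / (q - 2)) then ‖f p‖ₑ ^ 2 else 0) ∂muQ := by
  set E : Set (ℝ × ℝ) := {p | t ≤ 2 * A * V * w p ^ (1 / (q - 2))} with hEdef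
  have hEm : MeasurableSet E := measurableSet_le measurable_const (by fun_prop)
  have hf1 : Integrable f muQ := hf2.integrable (by norm_num)
  have hsmall := l1_small q hq w hwm hw V hV hinv f hfm A hA hfA Eᶜ (t / (2 * A * V))
    (by positivity) (by
      intro p hp
      simp only [hEdef, Set.mem_compl_iff, Set.mem_ofPred_eq, not_le] at hp
      rw [le_div_iff₀ (by positivity)]
      linarith)
  have hb := bessel (hf2.indicator hEm) S
  have hI : ∫⁻ p, (if t ≤ 2 * A * V * w p ^ (1 / (q - 2)) then ‖f p‖ₑ ^ 2 else 0) ∂muQ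
      = ∫⁻ p, ‖E.indicator f p‖ₑ ^ 2 ∂muQ := by
    refine lintegral_congr fun p => ?_
    by_cases hp : t ≤ 2 * A * V * w p ^ (1 / (q - 2))
    · rw [Set.indicator_of_mem (show p ∈ E from hp), if_pos hp]
    · rw [Set.indicator_of_notMem (show p ∉ E from hp), if_neg hp]; simp
  rw [hI]
  refine le_trans ?_ (mul_le_mul_right hb 4)
  rw [Finset.mul_sum]
  refine Finset.sum_le_sum fun k _ => ?_
  split_ifs with h
  · have hdec : fc f k = fc (E.indicator f) k + fc (Eᶜ.indicator f) k := by
      rw [← fc_add (hf1.indicator hEm) (hf1.indicator hEm.compl)]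
      congr 1
      ext p
      exact (congrFun (Set.indicator_self_add_compl E f) p).symm
    have h1 : ‖fc (Eᶜ.indicator f) k‖ ≤ t / 2 := by
      have := (fc_le (Eᶜ.indicator f) k).trans hsmall
      rw [← ofReal_norm, ENNReal.ofReal_le_ofReal_iff (by positivity)] at this
      refine this.trans (le_of_eq ?_)
      field_simp
    have h2 : ‖fc f k‖ ≤ 2 * ‖fc (E.indicator f) k‖ := by
      have := norm_add_le (fc (E.indicator f) k) (fc (Eᶜ.indicator f) k)
      rw [← hdec] at this
      linarith
    rw [← ofReal_norm, ← ofReal_norm, ← ENNReal.ofReal_pow (norm_nonneg _),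
      ← ENNReal.ofReal_pow (norm_nonneg _),
      show (4:ℝ≥0∞) = ENNReal.ofReal 4 by simp, ← ENNReal.ofReal_mul (by norm_num)]
    refine ENNReal.ofReal_le_ofReal ?_
    nlinarith [norm_nonneg (fc f k)]
  · exact bot_le

lemma hy (q : ℝ) (hq : 2 < q) (w : ℝ × ℝ → ℝ) (hwm : Measurable w) (hw : ∀ p, 0 < w p)
    (V : ℝ) (hV : 0 < V)
    (hinv : (∫⁻ p in unitSq, ENNReal.ofReal ((w p)⁻¹ ^ (q / (q - 2)))) ≤ ENNReal.ofReal (V ^ 2))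
    (f : ℝ × ℝ → ℂ) (hfm : Measurable f) (hf2 : MemLp f 2 muQ) (A : ℝ) (hA : 0 < A)
    (hfA : wIntSq w f ≤ ENNReal.ofReal (A ^ 2)) (S : Finset (ℤ × ℤ)) :
    ∑ k ∈ S, ‖fc f k‖ ^ q ≤ 4 * (2 * V) ^ (q - 2) * A ^ q := by
  have hq2 : 0 < q - 2 := by linarith
  set K := 2 * A * V with hK
  have hKpos : 0 < K := by positivity
  have key : ∫⁻ t in Set.Ioi (0:ℝ), ENNReal.ofReal (t ^ (q - 3)) *
        ∑ k ∈ S, (if t < ‖fc f k‖ then ‖fc f k‖ₑ ^ 2 else 0) ≤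
      ∫⁻ t in Set.Ioi (0:ℝ), ENNReal.ofReal (t ^ (q - 3)) *
        (4 * ∫⁻ p, (if t ≤ K * w p ^ (1 / (q - 2)) then ‖f p‖ₑ ^ 2 else 0) ∂muQ) := by
    refine setLIntegral_mono' measurableSet_Ioi fun t ht => ?_
    gcongr
    exact weak_t q hq w hwm hw V hV hinv f hfm hf2 A hA hfA S t ht
  have hL : ∫⁻ t in Set.Ioi (0:ℝ), ENNReal.ofReal (t ^ (q - 3)) *
        ∑ k ∈ S, (if t < ‖fc f k‖ then ‖fc f k‖ₑ ^ 2 else 0)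
      = ENNReal.ofReal ((∑ k ∈ S, ‖fc f k‖ ^ q) / (q - 2)) := by
    simp_rw [Finset.mul_sum]
    rw [lintegral_finsetSum', Finset.sum_div, ENNReal.ofReal_sum_of_nonneg]
    · refine Finset.sum_congr rfl fun k _ => ?_
      have : ∀ t : ℝ, ENNReal.ofReal (t ^ (q - 3)) * (if t < ‖fc f k‖ then ‖fc f k‖ₑ ^ 2 else 0)
          = (Set.Iio ‖fc f k‖).indicator (fun t => ENNReal.ofReal (t ^ (q - 3)) * ‖fc f k‖ₑ ^ 2) t := by
        intro t
        by_cases h : t < ‖fc f k‖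
        · simp [h]
        · simp [h]
      simp_rw [this]
      rw [lintegral_indicator measurableSet_Iio, Measure.restrict_restrict measurableSet_Iio,
        Set.inter_comm, Set.Ioi_inter_Iio, setLIntegral_congr Ioo_ae_eq_Ioc,
        lintegral_mul_const _ (by fun_prop), inner_t q hq _ (norm_nonneg _),
        ← ofReal_norm, ← ENNReal.ofReal_pow (norm_nonneg _), ← ENNReal.ofReal_mul (by positivity)]
      congr 1
      rw [div_mul_eq_mul_div]
      congr 1
      rw [← Real.rpow_natCast, ← Real.rpow_add_of_nonneg (norm_nonneg _) hq2.le (by norm_num)]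
      norm_num
    · intros; positivity
    · intro k _
      refine (Measurable.mul (by fun_prop) ?_).aemeasurable
      exact Measurable.ite (measurableSet_lt measurable_id measurable_const)
        measurable_const measurable_const
  have hmeas : Measurable (fun z : ℝ × (ℝ × ℝ) => ENNReal.ofReal (z.1 ^ (q - 3)) *
      (if z.1 ≤ K * w z.2 ^ (1 / (q - 2)) then ‖f z.2‖ₑ ^ 2 else 0)) := by
    refine Measurable.mul (by fun_prop) ?_
    refine Measurable.ite (measurableSet_le measurable_fst (by fun_prop)) (by fun_prop)
      measurable_const
  have hR : ∫⁻ t in Set.Ioi (0:ℝ), ENNReal.ofReal (t ^ (q - 3)) *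
        (4 * ∫⁻ p, (if t ≤ K * w p ^ (1 / (q - 2)) then ‖f p‖ₑ ^ 2 else 0) ∂muQ)
      = 4 * (ENNReal.ofReal (K ^ (q - 2) / (q - 2)) * wIntSq w f) := by
    have h1 : ∀ t : ℝ, ENNReal.ofReal (t ^ (q - 3)) *
        (4 * ∫⁻ p, (if t ≤ K * w p ^ (1 / (q - 2)) then ‖f p‖ₑ ^ 2 else 0) ∂muQ)
        = 4 * ∫⁻ p, ENNReal.ofReal (t ^ (q - 3)) *
          (if t ≤ K * w p ^ (1 / (q - 2)) then ‖f p‖ₑ ^ 2 else 0) ∂muQ := by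
      intro t
      rw [lintegral_const_mul' _ _ ENNReal.ofReal_ne_top]; ring
    simp_rw [h1]
    rw [lintegral_const_mul' _ _ (by simp), lintegral_lintegral_swap hmeas.aemeasurable]
    congr 1
    unfold wIntSq
    rw [← lintegral_const_mul' _ _ ENNReal.ofReal_ne_top]
    refine lintegral_congr fun p => ?_
    have hB : 0 ≤ K * w p ^ (1 / (q - 2)) :=
      mul_nonneg hKpos.le (Real.rpow_nonneg (hw p).le _)
    have : ∀ t : ℝ, ENNReal.ofReal (t ^ (q - 3)) *
        (if t ≤ K * w p ^ (1 / (q - 2)) then ‖f p‖ₑ ^ 2 else 0)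
        = (Set.Iic (K * w p ^ (1 / (q - 2)))).indicator
          (fun t => ENNReal.ofReal (t ^ (q - 3)) * ‖f p‖ₑ ^ 2) t := by
      intro t
      by_cases h : t ≤ K * w p ^ (1 / (q - 2))
      · rw [if_pos h, Set.indicator_of_mem (Set.mem_Iic.2 h)]
      · rw [if_neg h, Set.indicator_of_notMem (by simpa using h)]; simp
    simp_rw [this]
    rw [lintegral_indicator measurableSet_Iic, Measure.restrict_restrict measurableSet_Iic,
        Set.inter_comm, Set.Ioi_inter_Iic,
        lintegral_mul_const _ (by fun_prop), inner_t q hq _ hB]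
    have h3 : (K * w p ^ (1 / (q - 2))) ^ (q - 2) / (q - 2) = K ^ (q - 2) / (q - 2) * w p := by
      rw [Real.mul_rpow hKpos.le (Real.rpow_nonneg (hw p).le _), ← Real.rpow_mul (hw p).le]
      rw [one_div_mul_cancel hq2.ne', Real.rpow_one]; ring
    rw [h3, ENNReal.ofReal_mul (by positivity), mul_assoc, mul_comm (ENNReal.ofReal (w p))]
    rfl
  rw [hL, hR] at key
  have key2 : ENNReal.ofReal ((∑ k ∈ S, ‖fc f k‖ ^ q) / (q - 2)) ≤
      ENNReal.ofReal (4 * (K ^ (q - 2) / (q - 2) * A ^ 2)) := by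
    refine key.trans ?_
    rw [ENNReal.ofReal_mul (by norm_num), ENNReal.ofReal_mul (by positivity)]
    simp only [ENNReal.ofReal_ofNat]
    gcongr
  rw [ENNReal.ofReal_le_ofReal_iff (by positivity), div_le_iff₀ hq2] at key2
  refine key2.trans (le_of_eq ?_)
  have h4 : A ^ q = A ^ (q - 2) * A ^ 2 := by
    rw [← Real.rpow_natCast A 2, ← Real.rpow_add hA]; norm_num
  have h5 : K = (2 * V) * A := by rw [hK]; ring
  rw [h4, h5, Real.mul_rpow (by positivity) hA.le]
  field_simp

/-- The weighted measure. -/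
noncomputable def muW (w : ℝ × ℝ → ℝ) : Measure (ℝ × ℝ) :=
  (muQ).withDensity (fun p => ENNReal.ofReal (w p))

lemma wIntSq_eq (w : ℝ × ℝ → ℝ) (hwm : Measurable w) (h : ℝ × ℝ → ℂ) :
    wIntSq w h = (eLpNorm h 2 (muW w)) ^ 2 := by
  rw [eLpNorm_eq_lintegral_rpow_enorm_toReal (by simp) (by simp),
    ← ENNReal.rpow_natCast, ← ENNReal.rpow_mul, muW,
    lintegral_withDensity_eq_lintegral_mul_non_measurable _ (by fun_prop) (by simp)]
  simp only [wIntSq, Pi.mul_apply, mul_comm (ENNReal.ofReal _)]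
  simp
  rfl

/-- projection to the torus -/
noncomputable def prT (p : ℝ × ℝ) : UnitAddTorus (Fin 2) := ![(p.1 : UnitAddCircle), (p.2 : UnitAddCircle)]

/-- section of the projection -/
noncomputable def scT (z : UnitAddTorus (Fin 2)) : ℝ × ℝ :=
  ((AddCircle.measurableEquivIoc 1 0 (z 0) : ℝ), (AddCircle.measurableEquivIoc 1 0 (z 1) : ℝ))

lemma prT_meas : Measurable prT := by
  refine measurable_pi_lambda _ fun i => ?_
  fin_cases i
  · exact (AddCircle.measurable_mk').comp measurable_fst
  · exact (AddCircle.measurable_mk').comp measurable_snd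

lemma scT_meas : Measurable scT := by
  unfold scT
  refine Measurable.prodMk ?_ ?_
  · exact measurable_subtype_coe.comp
      ((AddCircle.measurableEquivIoc 1 0).measurable.comp (measurable_pi_apply 0))
  · exact measurable_subtype_coe.comp
      ((AddCircle.measurableEquivIoc 1 0).measurable.comp (measurable_pi_apply 1))

lemma scT_prT (p : ℝ × ℝ) (h1 : p.1 ∈ Set.Ioc (0:ℝ) 1) (h2 : p.2 ∈ Set.Ioc (0:ℝ) 1) :
    scT (prT p) = p := by
  have e : ∀ x : ℝ, x ∈ Set.Ioc (0:ℝ) 1 →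
      ((AddCircle.measurableEquivIoc 1 0 (x : UnitAddCircle)) : ℝ) = x := by
    intro x hx
    exact AddCircle.equivIoc_coe_of_mem (p := (1:ℝ)) (a := 0) (by simpa using hx)
  ext
  · exact e _ h1
  · exact e _ h2

lemma muQ_Ioc : ∀ᵐ p ∂muQ, p.1 ∈ Set.Ioc (0:ℝ) 1 ∧ p.2 ∈ Set.Ioc (0:ℝ) 1 := by
  have h : ∀ᵐ x ∂(volume.restrict (Set.Icc (0:ℝ) 1)), x ∈ Set.Ioc (0:ℝ) 1 := by
    rw [← restrict_Ioc_eq_restrict_Icc]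
    exact ae_restrict_mem measurableSet_Ioc
  rw [muQ_eq]
  exact (Measure.quasiMeasurePreserving_fst.ae h).and (Measure.quasiMeasurePreserving_snd.ae h)

lemma mF_prT (k : ℤ × ℤ) (p : ℝ × ℝ) :
    UnitAddTorus.mFourier ![k.1, k.2] (prT p) = expMN k.1 k.2 p := by
  simp only [UnitAddTorus.mFourier, ContinuousMap.coe_mk, Fin.prod_univ_two, prT]
  simp only [Matrix.cons_val_zero, Matrix.cons_val_one, fourier_coe_apply]
  rw [← Complex.exp_add, expMN]
  congr 1
  push_cast
  ring

lemma poly_dense (P : C(UnitAddTorus (Fin 2), ℂ)) (ε : ℝ) (hε : 0 < ε) :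
    ∃ (s : Finset (ℤ × ℤ)) (a : ℤ × ℤ → ℂ),
      ∀ p, ‖P (prT p) - ∑ mn ∈ s, a mn * expMN mn.1 mn.2 p‖ ≤ ε := by
  have hr : Set.range (UnitAddTorus.mFourier (d := Fin 2)) =
      Set.range (fun k : ℤ × ℤ => UnitAddTorus.mFourier ![k.1, k.2]) := by
    ext F
    constructor
    · rintro ⟨n, rfl⟩
      have hn : ![n 0, n 1] = n := by
        ext i; fin_cases i <;> rfl
      exact ⟨(n 0, n 1), congrArg UnitAddTorus.mFourier hn⟩
    · rintro ⟨k, rfl⟩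
      exact ⟨_, rfl⟩
  have hP : P ∈ (Submodule.span ℂ (Set.range (UnitAddTorus.mFourier (d := Fin 2)))).topologicalClosure := by
    rw [UnitAddTorus.span_mFourier_closure_eq_top]; trivial
  rw [← SetLike.mem_coe, Submodule.topologicalClosure_coe, Metric.mem_closure_iff] at hP
  obtain ⟨F, hF, hd⟩ := hP ε hε
  rw [SetLike.mem_coe, hr, Finsupp.mem_span_range_iff_exists_finsupp] at hF
  obtain ⟨c, rfl⟩ := hF
  refine ⟨c.support, c, fun p => ?_⟩
  rw [dist_eq_norm] at hd
  have := (ContinuousMap.norm_coe_le_norm _ (prT p)).trans hd.le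
  refine le_trans (le_of_eq ?_) this
  congr 1
  rw [ContinuousMap.sub_apply, Finsupp.sum, ContinuousMap.sum_apply]
  congr 1
  refine Finset.sum_congr rfl fun k _ => ?_
  rw [ContinuousMap.smul_apply, mF_prT, smul_eq_mul]

lemma density_s10 (w : ℝ × ℝ → ℝ) (hwm : Measurable w) (hwi : IntegrableOn w unitSq)
    (g : ℝ × ℝ → ℂ) (hg : MemL2w w g) (ε : ℝ≥0∞) (hε : 0 < ε) :
    ∃ (s : Finset (ℤ × ℤ)) (a : ℤ × ℤ → ℂ),
      eLpNorm (fun p => g p - ∑ mn ∈ s, a mn * expMN mn.1 mn.2 p) 2 (muW w) ≤ ε := by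
  have hac : muW w ≪ muQ := withDensity_absolutelyContinuous _ _
  have : IsFiniteMeasure (muW w) := isFiniteMeasure_withDensity_ofReal hwi.2
  have hgm : AEStronglyMeasurable g (muW w) := hg.1.mono_ac hac
  set g' := hgm.mk g with hg'
  have hg'm : StronglyMeasurable g' := hgm.stronglyMeasurable_mk
  have hgn : eLpNorm g 2 (muW w) < ⊤ := by
    have h := hg.2
    rw [wIntSq_eq w hwm] at h
    by_contra h2
    rw [not_lt, top_le_iff] at h2
    simp [h2] at h
  have hae : (g' ∘ scT) ∘ prT =ᵐ[muW w] g := by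
    filter_upwards [hac.ae_le muQ_Ioc, hgm.ae_eq_mk] with p hp h2
    rw [h2, Function.comp_apply, Function.comp_apply, scT_prT p hp.1 hp.2]
  set ν := Measure.map prT (muW w) with hν
  have : IsFiniteMeasure ν := inferInstance
  have hcm : StronglyMeasurable (g' ∘ scT) := hg'm.comp_measurable scT_meas
  have hmem : MemLp (g' ∘ scT) 2 ν := by
    refine ⟨hcm.aestronglyMeasurable, ?_⟩
    rw [eLpNorm_map_measure hcm.aestronglyMeasurable prT_meas.aemeasurable, eLpNorm_congr_ae hae]
    exact hgn
  obtain ⟨P, hP, hP2⟩ := hmem.exists_boundedContinuous_eLpNorm_sub_le (by simp)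
    (ε := ε / 2) (ENNReal.half_pos hε.ne').ne'
  obtain ⟨η, hη, hη2⟩ : ∃ η : ℝ, 0 < η ∧
      (muW w) Set.univ ^ (2:ℝ≥0∞).toReal⁻¹ * ENNReal.ofReal η ≤ ε / 2 := by
    by_cases htop : ε = ⊤
    · exact ⟨1, one_pos, by simp [htop, ENNReal.top_div_of_ne_top]⟩
    · have hM : (muW w) Set.univ ^ (2:ℝ≥0∞).toReal⁻¹ ≠ ⊤ :=
        ENNReal.rpow_ne_top_of_nonneg (by simp) (measure_ne_top _ _)
      obtain ⟨δ, hδ, hδ2⟩ := ENNReal.exists_nnreal_pos_mul_lt hM (ENNReal.half_pos hε.ne').ne'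
      refine ⟨δ, by exact_mod_cast hδ, ?_⟩
      rw [ENNReal.ofReal_coe_nnreal, mul_comm]
      exact hδ2.le
  obtain ⟨s, a, hsa⟩ := poly_dense P.toContinuousMap η hη
  refine ⟨s, a, ?_⟩
  have hdec : (fun p => g p - ∑ mn ∈ s, a mn * expMN mn.1 mn.2 p) =ᵐ[muW w]
      ((g' ∘ scT - (P : UnitAddTorus (Fin 2) → ℂ)) ∘ prT) + (fun p => P.toContinuousMap (prT p) - ∑ mn ∈ s, a mn * expMN mn.1 mn.2 p) := by
    filter_upwards [hae] with p hp
    simp only [Pi.add_apply, Function.comp_apply, Pi.sub_apply] at hp ⊢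
    rw [hp]
    simp
  have hPm : AEStronglyMeasurable (g' ∘ scT - (P : UnitAddTorus (Fin 2) → ℂ)) ν :=
    hcm.aestronglyMeasurable.sub hP2.1
  rw [eLpNorm_congr_ae hdec]
  refine (eLpNorm_add_le ?_ ?_ (by norm_num)).trans ?_
  · exact hPm.comp_measurable prT_meas
  · refine (Measurable.sub ?_ ?_).aestronglyMeasurable
    · exact P.toContinuousMap.continuous.measurable.comp prT_meas
    · exact Finset.measurable_sum _ fun k _ => ((expMN_cont _ _).measurable.const_mul _)
  · rw [← ENNReal.add_halves ε]
    gcongr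
    · rw [← eLpNorm_map_measure hPm prT_meas.aemeasurable]; exact hP
    · exact (eLpNorm_le_of_ae_bound (Filter.Eventually.of_forall hsa)).trans hη2

lemma trig_cont (s : Finset (ℤ × ℤ)) (a : ℤ × ℤ → ℂ) :
    Continuous (fun p => ∑ mn ∈ s, a mn * expMN mn.1 mn.2 p) :=
  continuous_finsetSum _ fun k _ => (expMN_cont k.1 k.2).const_mul _

lemma trig_memLp (s : Finset (ℤ × ℤ)) (a : ℤ × ℤ → ℂ) :
    MemLp (fun p => ∑ mn ∈ s, a mn * expMN mn.1 mn.2 p) 2 muQ :=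
  memLp_finsetSum _ fun k _ => (expMN_memLp k.1 k.2 2).const_mul _

lemma core (q : ℝ) (hq : 2 < q) (w : ℝ × ℝ → ℝ) (hwm : Measurable w) (hw : ∀ p, 0 < w p)
    (hwi : IntegrableOn w unitSq)
    (hinv : (∫⁻ p in unitSq, ENNReal.ofReal ((w p)⁻¹ ^ (q / (q - 2)))) < ⊤) :
    (∃ C > (0 : ℝ), ∀ g : ℝ × ℝ → ℂ, MemL2w w g → ∀ ε : ℝ≥0∞, 0 < ε →
      ∃ (s : Finset (ℤ × ℤ)) (a : ℤ × ℤ → ℂ),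
        wIntSq w (fun p => g p - ∑ mn ∈ s, a mn * expMN mn.1 mn.2 p) < ε ∧
        (∑ mn ∈ s, ‖a mn‖ ^ q) ^ (1 / q) ≤ C * ((wIntSq w g).toReal) ^ (1 / 2 : ℝ)) ∧
    (∀ mn₀ : ℤ × ℤ, ∃ g : ℝ × ℝ → ℂ, MemL2w w g ∧ ∃ δ : ℝ≥0∞, 0 < δ ∧
      ∀ (s : Finset (ℤ × ℤ)) (a : ℤ × ℤ → ℂ), mn₀ ∉ s →
        δ ≤ wIntSq w (fun p => g p - ∑ mn ∈ s, a mn * expMN mn.1 mn.2 p)) := by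
  set U := ∫⁻ p in unitSq, ENNReal.ofReal ((w p)⁻¹ ^ (q / (q - 2))) with hU
  have hq0 : 0 < q := by linarith
  obtain ⟨V, hV, hUV⟩ : ∃ V : ℝ, 0 < V ∧ U ≤ ENNReal.ofReal (V ^ 2) := by
    have hn : 0 ≤ U.toReal := ENNReal.toReal_nonneg
    refine ⟨√(U.toReal + 1), by positivity, ?_⟩
    rw [Real.sq_sqrt (by positivity)]
    exact (ENNReal.le_ofReal_iff_toReal_le hinv.ne (by positivity)).2 (by linarith)
  set C0 := 4 * (2 * V) ^ (q - 2) with hC0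
  have hC0pos : 0 < C0 := by positivity
  refine ⟨⟨C0 ^ (1 / q) * 2, by positivity, ?_⟩, ?_⟩
  · intro g hg ε hε
    by_cases hI : wIntSq w g = 0
    · refine ⟨∅, 0, ?_, ?_⟩
      · simp [hI, hε]
      · rw [Finset.sum_empty, Real.zero_rpow (by positivity)]; positivity
    set N := eLpNorm g 2 (muW w) with hN
    have hIN : wIntSq w g = N ^ 2 := wIntSq_eq w hwm g
    have hN0 : 0 < N := by
      rw [pos_iff_ne_zero]; intro h; apply hI; rw [hIN, h]; simp
    have hNtop : N ≠ ⊤ := by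
      intro h
      have := hg.2
      rw [hIN, h] at this
      simp at this
    set e := min ε 1 with he
    have he0 : 0 < e := lt_min hε one_pos
    have he1 : e ≤ 1 := min_le_right _ _
    have hetop : e ≠ ⊤ := (he1.trans_lt ENNReal.one_lt_top).ne
    obtain ⟨s, a, hsa⟩ := density_s10 w hwm hwi g hg (min N (e / 2))
      (lt_min hN0 (ENNReal.half_pos he0.ne'))
    refine ⟨s, a, ?_, ?_⟩
    · rw [wIntSq_eq w hwm]
      have h1 := hsa.trans (min_le_right _ _)
      have h2 : e / 2 < e := ENNReal.half_lt_self he0.ne' hetop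
      calc _ ≤ (e / 2) ^ 2 := by gcongr
        _ = (e / 2) * (e / 2) := sq _
        _ ≤ (e / 2) * 1 := by
            gcongr
            exact h2.le.trans he1
        _ = e / 2 := mul_one _
        _ < e := h2
        _ ≤ ε := min_le_left _ _
    · have hgm : AEStronglyMeasurable g (muW w) :=
        hg.1.mono_ac (withDensity_absolutelyContinuous _ _)
      have hT : eLpNorm (fun p => ∑ mn ∈ s, a mn * expMN mn.1 mn.2 p) 2 (muW w) ≤ 2 * N := by
        have hd : (fun p => ∑ mn ∈ s, a mn * expMN mn.1 mn.2 p) =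
            g - (fun p => g p - ∑ mn ∈ s, a mn * expMN mn.1 mn.2 p) := by
          ext p; simp
        rw [hd]
        refine (eLpNorm_sub_le hgm (hgm.sub (trig_cont s a).aestronglyMeasurable)
          (by norm_num)).trans ?_
        rw [two_mul]
        gcongr
        exact hsa.trans (min_le_left _ _)
      have hA : 0 < 2 * N.toReal := by
        have := ENNReal.toReal_pos hN0.ne' hNtop
        positivity
      have h := hy q hq w hwm hw V hV hUV _ (trig_cont s a).measurable (trig_memLp s a)
        (2 * N.toReal) hA (by
          rw [wIntSq_eq w hwm, ENNReal.ofReal_pow hA.le, ENNReal.ofReal_mul (by norm_num),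
            ENNReal.ofReal_toReal hNtop]
          simp only [ENNReal.ofReal_ofNat]
          gcongr) s
      have h1 : ∑ k ∈ s, ‖fc (fun p => ∑ mn ∈ s, a mn * expMN mn.1 mn.2 p) k‖ ^ q
          = ∑ mn ∈ s, ‖a mn‖ ^ q := by
        refine Finset.sum_congr rfl fun k hk => ?_
        rw [fc_sum, if_pos hk]
      rw [h1] at h
      have h2 : ((wIntSq w g).toReal) ^ (1 / 2 : ℝ) = N.toReal := by
        rw [hIN, ENNReal.toReal_pow, ← Real.sqrt_eq_rpow, Real.sqrt_sq ENNReal.toReal_nonneg]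
      rw [h2]
      calc _ ≤ (C0 * (2 * N.toReal) ^ q) ^ (1 / q) :=
            Real.rpow_le_rpow (Finset.sum_nonneg fun _ _ => by positivity) h (by positivity)
        _ = C0 ^ (1 / q) * 2 * N.toReal := by
            rw [Real.mul_rpow hC0pos.le (by positivity), ← Real.rpow_mul hA.le,
              mul_one_div_cancel hq0.ne', Real.rpow_one, mul_assoc]
  · intro k0
    refine ⟨expMN k0.1 k0.2, ⟨(expMN_cont _ _).aestronglyMeasurable, ?_⟩, ?_⟩
    · have : ∀ p, (‖expMN k0.1 k0.2 p‖₊ : ℝ≥0∞) ^ 2 * ENNReal.ofReal (w p)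
          = ENNReal.ofReal (w p) := by
        intro p
        have : ‖expMN k0.1 k0.2 p‖₊ = 1 := NNReal.eq (expMN_norm _ _ _)
        simp [this]
      simp only [wIntSq, this]
      exact hwi.lintegral_lt_top
    · set A := (1 / (2 * C0)) ^ (1 / q) with hAdef
      have hA : 0 < A := by positivity
      have hAq : A ^ q = 1 / (2 * C0) := by
        rw [hAdef, ← Real.rpow_mul (by positivity), one_div_mul_cancel hq0.ne', Real.rpow_one]
      refine ⟨ENNReal.ofReal (A ^ 2), by simp [hA], fun s a hk => ?_⟩
      by_contra hlt
      rw [not_le] at hlt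
      have hf : (fun p => expMN k0.1 k0.2 p - ∑ mn ∈ s, a mn * expMN mn.1 mn.2 p)
          = fun p => expMN k0.1 k0.2 p + ∑ mn ∈ s, (-a mn) * expMN mn.1 mn.2 p := by
        ext p; simp [sub_eq_add_neg]
      rw [hf] at hlt
      have h := hy q hq w hwm hw V hV hUV
        (fun p => expMN k0.1 k0.2 p + ∑ mn ∈ s, (-a mn) * expMN mn.1 mn.2 p)
        ((expMN_cont k0.1 k0.2).add (trig_cont s (fun k => -a k))).measurable
        ((expMN_memLp k0.1 k0.2 2).add (trig_memLp s (fun k => -a k))) A hA hlt.le {k0}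
      rw [Finset.sum_singleton, fc_add ((expMN_memLp k0.1 k0.2 2).integrable (by norm_num))
        ((trig_memLp s (fun k => -a k)).integrable (by norm_num)), fc_exp,
        fc_sum s (fun k => -a k), if_pos rfl, if_neg hk, ← hC0, hAq] at h
      have h3 : C0 * (1 / (2 * C0)) = 1 / 2 := by field_simp
      rw [h3] at h
      norm_num at h

theorem stmt10 (q : ℝ) (hq : 2 < q) (w : ℝ × ℝ → ℝ)
    (hw : IntegrableOn w unitSq) (hwpos : ∀ᵐ p ∂(volume.restrict unitSq), 0 < w p)
    (hinv : (∫⁻ p in unitSq, ENNReal.ofReal ((w p)⁻¹ ^ (q / (q - 2)))) < ⊤) :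
    -- the exponential system is a `(C_q)`-system in `L²_w(Q)` ...
    (∃ C > (0 : ℝ), ∀ g : ℝ × ℝ → ℂ, MemL2w w g → ∀ ε : ℝ≥0∞, 0 < ε →
      ∃ (s : Finset (ℤ × ℤ)) (a : ℤ × ℤ → ℂ),
        wIntSq w (fun p => g p - ∑ mn ∈ s, a mn * expMN mn.1 mn.2 p) < ε ∧
        (∑ mn ∈ s, ‖a mn‖ ^ q) ^ (1 / q) ≤ C * ((wIntSq w g).toReal) ^ (1 / 2 : ℝ)) ∧
    -- ... and it is exact: removing any element destroys completeness
    (∀ mn₀ : ℤ × ℤ, ∃ g : ℝ × ℝ → ℂ, MemL2w w g ∧ ∃ δ : ℝ≥0∞, 0 < δ ∧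
      ∀ (s : Finset (ℤ × ℤ)) (a : ℤ × ℤ → ℂ), mn₀ ∉ s →
        δ ≤ wIntSq w (fun p => g p - ∑ mn ∈ s, a mn * expMN mn.1 mn.2 p)) := by
  have hwae := hw.aestronglyMeasurable.ae_eq_mk
  set w1 := hw.aestronglyMeasurable.mk w with hw1
  have hw1m : Measurable w1 := hw.aestronglyMeasurable.stronglyMeasurable_mk.measurable
  set w2 : ℝ × ℝ → ℝ := fun p => if 0 < w1 p then w1 p else 1 with hw2
  have hw2m : Measurable w2 :=
    Measurable.ite (measurableSet_lt measurable_const hw1m) hw1m measurable_const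
  have hw2pos : ∀ p, 0 < w2 p := by
    intro p
    simp only [hw2]
    split_ifs with h
    · exact h
    · exact one_pos
  have hae : ∀ᵐ p ∂(volume.restrict unitSq), w p = w2 p := by
    filter_upwards [hwae, hwpos] with p h1 h2
    rw [h1] at h2 ⊢
    simp only [hw2, if_pos h2]
  have hwI : ∀ g, wIntSq w g = wIntSq w2 g := by
    intro g
    refine lintegral_congr_ae ?_
    filter_upwards [hae] with p hp
    rw [hp]
  have hM : ∀ g, MemL2w w g ↔ MemL2w w2 g := by
    intro g
    simp only [MemL2w, hwI]
  simp only [hwI, hM]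
  refine core q hq w2 hw2m hw2pos (hw.congr hae) ?_
  refine lt_of_eq_of_lt (lintegral_congr_ae ?_) hinv
  filter_upwards [hae] with p hp
  rw [hp]
end
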